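/- arXiv:2305.12615 — 9 statements merged into one kernel-verified Lean document; each statement's English description precedes it below -/
import Mathlib

section
/- Under the hypotheses (H1)–(H3) on the pressure P, the internal energy e(ρ) = ∫₀^ρ P(s)/s² ds is well defined for ρ > 0 (the integral converges), e'(ρ) = P(ρ)/ρ², and there exist thresholds ρ̄₁ ∈ (0, ρ_*], ρ̄₂ ≥ ρ^* and a constant C > 0 such that: C⁻¹ ρ^{γ₁-1} ≤ e(ρ) ≤ C ρ^{γ₁-1} and C⁻¹ ρ^{γ₁-2} ≤ e'(ρ) ≤ C ρ^{γ₁-2} for all ρ ∈ (0, ρ̄₁]; and C⁻¹ ρ^{γ₂-1} ≤ e(ρ) ≤ C ρ^{γ₂-1} and C⁻¹ ρ^{γ₂-2} ≤ e'(ρ) ≤ C ρ^{γ₂-2} for all ρ ≥ ρ̄₂. -/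
open Set MeasureTheory Filter

lemma aux_int_bounds (f : ℝ → ℝ) (a r b l u : ℝ) (ha : 0 ≤ a) (har : a ≤ r) (hb : -1 < b)
    (hf : IntervalIntegrable f volume a r)
    (h : ∀ s ∈ Ioo a r, l * s ^ b ≤ f s ∧ f s ≤ u * s ^ b) :
    l / (b + 1) * (r ^ (b + 1) - a ^ (b + 1)) ≤ (∫ s in a..r, f s) ∧
    (∫ s in a..r, f s) ≤ u / (b + 1) * (r ^ (b + 1) - a ^ (b + 1)) := by
  have hi : IntervalIntegrable (fun s : ℝ => s ^ b) volume a r :=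
    intervalIntegral.intervalIntegrable_rpow' hb
  have key : ∀ c : ℝ, (∫ s in a..r, c * s ^ b) = c / (b + 1) * (r ^ (b + 1) - a ^ (b + 1)) := by
    intro c
    rw [intervalIntegral.integral_const_mul, integral_rpow (Or.inl hb)]
    ring
  constructor
  · rw [← key l]
    exact intervalIntegral.integral_mono_on_of_le_Ioo har (hi.const_mul l) hf (fun s hs => (h s hs).1)
  · rw [← key u]
    exact intervalIntegral.integral_mono_on_of_le_Ioo har hf (hi.const_mul u) (fun s hs => (h s hs).2)

lemma aux_pt (κ γ s q p : ℝ) (hκ : 0 < κ) (hs : 0 < s) (hp : p = κ * s ^ γ * (1 + q))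
    (hq : |q| ≤ 1 / 2) :
    κ / 2 * s ^ (γ - 2) ≤ p / s ^ 2 ∧ p / s ^ 2 ≤ 2 * κ * s ^ (γ - 2) := by
  have h1 : s ^ (γ - 2) = s ^ γ / s ^ 2 := by
    rw [Real.rpow_sub hs, Real.rpow_two]
  have h2 : p / s ^ 2 = κ * s ^ (γ - 2) * (1 + q) := by
    rw [h1, hp]; ring
  have h3 : 0 < κ * s ^ (γ - 2) := mul_pos hκ (Real.rpow_pos_of_pos hs _)
  rw [h2]
  obtain ⟨h4, h5⟩ := abs_le.mp hq
  constructor <;> nlinarith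

lemma aux_C (c D C x y : ℝ) (hc : 0 < c) (hx : 0 ≤ x) (h1 : c⁻¹ ≤ C) (h2 : D ≤ C)
    (h : c * x ≤ y ∧ y ≤ D * x) : C⁻¹ * x ≤ y ∧ y ≤ C * x := by
  have h3 : C⁻¹ ≤ c := by
    have := inv_anti₀ (inv_pos.mpr hc) h1
    simpa using this
  exact ⟨(mul_le_mul_of_nonneg_right h3 hx).trans h.1,
    h.2.trans (mul_le_mul_of_nonneg_right h2 hx)⟩

theorem internal_energy_bounds
    (P Q₁ Q₂ : ℝ → ℝ) (ρstar ρss γ₁ γ₂ κ₁ κ₂ Cs Css εe : ℝ)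
    (hPC1 : ContDiffOn ℝ 1 P (Ici 0))
    (hPC4 : ContDiffOn ℝ 4 P (Ioi 0))
    (hH1 : ∀ ρ : ℝ, 0 < ρ → 0 < deriv P ρ ∧ 0 < 2 * deriv P ρ + ρ * deriv (deriv P) ρ)
    (hρstar : 0 < ρstar) (hγ₁ : 1 < γ₁) (hγ₁3 : γ₁ < 3) (hκ₁ : 0 < κ₁) (hCs : 0 < Cs)
    (hQ₁C4 : ContDiffOn ℝ 4 Q₁ (Ioi 0))
    (hPsmall : ∀ ρ ∈ Ico (0:ℝ) ρstar, P ρ = κ₁ * ρ ^ γ₁ * (1 + Q₁ ρ))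
    (hQ₁bd : ∀ ρ ∈ Ioo (0:ℝ) ρstar, ∀ j : ℕ, j ≤ 4 →
      |iteratedDeriv j Q₁ ρ| ≤ Cs * ρ ^ (γ₁ - 1 - (j : ℝ)))
    (hρss : ρstar < ρss) (hγ₂ : 6/5 < γ₂) (hγ₂1 : γ₂ ≤ γ₁) (hκ₂ : 0 < κ₂)
    (hεe : 0 < εe) (hCss : 0 < Css)
    (hQ₂C4 : ContDiffOn ℝ 4 Q₂ (Ioi 0))
    (hPlarge : ∀ ρ : ℝ, ρss ≤ ρ → P ρ = κ₂ * ρ ^ γ₂ * (1 + Q₂ ρ))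
    (hQ₂bd : ∀ ρ : ℝ, ρss ≤ ρ → ∀ j : ℕ, j ≤ 4 →
      |iteratedDeriv j Q₂ ρ| ≤ Css * ρ ^ (-εe - (j : ℝ))) :
    ∀ e : ℝ → ℝ, (∀ ρ : ℝ, e ρ = ∫ s in (0:ℝ)..ρ, P s / s ^ 2) →
      (∀ ρ : ℝ, 0 < ρ → IntervalIntegrable (fun s => P s / s ^ 2) volume 0 ρ) ∧
      (∀ ρ : ℝ, 0 < ρ → HasDerivAt e (P ρ / ρ ^ 2) ρ) ∧
      (∃ ρb₁ ∈ Ioc (0:ℝ) ρstar, ∃ ρb₂ : ℝ, ρss ≤ ρb₂ ∧ ∃ C : ℝ, 0 < C ∧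
        (∀ ρ ∈ Ioc (0:ℝ) ρb₁,
          C⁻¹ * ρ ^ (γ₁ - 1) ≤ e ρ ∧ e ρ ≤ C * ρ ^ (γ₁ - 1) ∧
          C⁻¹ * ρ ^ (γ₁ - 2) ≤ deriv e ρ ∧ deriv e ρ ≤ C * ρ ^ (γ₁ - 2)) ∧
        (∀ ρ : ℝ, ρb₂ ≤ ρ →
          C⁻¹ * ρ ^ (γ₂ - 1) ≤ e ρ ∧ e ρ ≤ C * ρ ^ (γ₂ - 1) ∧
          C⁻¹ * ρ ^ (γ₂ - 2) ≤ deriv e ρ ∧ deriv e ρ ≤ C * ρ ^ (γ₂ - 2))) := by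
  intro e he
  have hPcont : ContinuousOn P (Ici 0) := hPC1.continuousOn
  have hP0 : P 0 = 0 := by
    rw [hPsmall 0 ⟨le_refl _, hρstar⟩, Real.zero_rpow (by linarith)]; ring
  have hmono : StrictMonoOn P (Ici 0) := by
    apply strictMonoOn_of_deriv_pos (convex_Ici 0) hPcont
    intro x hx
    rw [interior_Ici] at hx
    exact (hH1 x hx).1
  have hPpos : ∀ s : ℝ, 0 < s → 0 < P s := by
    intro s hs
    have := hmono (mem_Ici.mpr le_rfl) (mem_Ici.mpr hs.le) hs
    rwa [hP0] at this
  have hfcont : ContinuousOn (fun s => P s / s ^ 2) (Ioi 0) := by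
    apply ContinuousOn.div (hPcont.mono Ioi_subset_Ici_self) (by fun_prop)
    intro x hx
    exact pow_ne_zero 2 (ne_of_gt hx)
  -- small threshold
  obtain ⟨r, hr0, hrs, hrb⟩ : ∃ r : ℝ, 0 < r ∧ r < ρstar ∧
      ∀ s ∈ Ioc 0 r, κ₁ / 2 * s ^ (γ₁ - 2) ≤ P s / s ^ 2 ∧ P s / s ^ 2 ≤ 2 * κ₁ * s ^ (γ₁ - 2) := by
    have hT : Tendsto (fun s : ℝ => Cs * s ^ (γ₁ - 1)) (nhds 0) (nhds 0) := by
      have h := (Real.continuousAt_rpow_const 0 (γ₁ - 1) (Or.inr (by linarith))).tendsto.const_mul Cs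
      rwa [Real.zero_rpow (by linarith), mul_zero] at h
    have hev := hT.eventually (gt_mem_nhds (show (0:ℝ) < 1 / 2 by norm_num))
    obtain ⟨d, hd, hdb⟩ := Metric.eventually_nhds_iff.mp hev
    refine ⟨min (d / 2) (ρstar / 2), by positivity, ?_, ?_⟩
    · exact (min_le_right _ _).trans_lt (by linarith)
    · intro s hs
      have hs1 : s ≤ d / 2 := hs.2.trans (min_le_left _ _)
      have hs2 : s ≤ ρstar / 2 := hs.2.trans (min_le_right _ _)
      have hs0 : 0 < s := hs.1
      have hlt := hdb (y := s) (by rw [Real.dist_eq, sub_zero, abs_of_pos hs0]; linarith)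
      have hq := hQ₁bd s ⟨hs0, by linarith⟩ 0 (by norm_num)
      simp only [iteratedDeriv_zero, Nat.cast_zero, sub_zero] at hq
      exact aux_pt κ₁ γ₁ s (Q₁ s) (P s) hκ₁ hs0 (hPsmall s ⟨hs0.le, by linarith⟩) (by linarith)
  -- large threshold
  obtain ⟨R, hR, hRb⟩ : ∃ R : ℝ, ρss ≤ R ∧
      ∀ s, R ≤ s → κ₂ / 2 * s ^ (γ₂ - 2) ≤ P s / s ^ 2 ∧ P s / s ^ 2 ≤ 2 * κ₂ * s ^ (γ₂ - 2) := by
    have hT : Tendsto (fun s : ℝ => Css * s ^ (-εe)) atTop (nhds 0) := by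
      have h := (tendsto_rpow_neg_atTop hεe).const_mul Css
      rwa [mul_zero] at h
    have hev := hT.eventually (gt_mem_nhds (show (0:ℝ) < 1 / 2 by norm_num))
    obtain ⟨d, hdb⟩ := eventually_atTop.mp hev
    refine ⟨max d ρss, le_max_right _ _, ?_⟩
    intro s hs
    have hs1 : d ≤ s := (le_max_left _ _).trans hs
    have hs2 : ρss ≤ s := (le_max_right _ _).trans hs
    have hlt := hdb s hs1
    have hq := hQ₂bd s hs2 0 (by norm_num)
    simp only [iteratedDeriv_zero, Nat.cast_zero, sub_zero] at hq
    exact aux_pt κ₂ γ₂ s (Q₂ s) (P s) hκ₂ (by linarith) (hPlarge s hs2) (by linarith)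
  have hR0 : 0 < R := by linarith
  have hcI : ∀ a b : ℝ, 0 < a → 0 < b →
      IntervalIntegrable (fun s => P s / s ^ 2) volume a b := by
    intro a b ha hb
    apply (hfcont.mono ?_).intervalIntegrable
    intro x hx
    exact lt_of_lt_of_le (lt_min ha hb) hx.1
  have hI0 : IntervalIntegrable (fun s => P s / s ^ 2) volume 0 r := by
    have hi : IntervalIntegrable (fun s : ℝ => 2 * κ₁ * s ^ (γ₁ - 2)) volume 0 r :=
      (intervalIntegral.intervalIntegrable_rpow' (by linarith)).const_mul _
    apply hi.mono_fun'
    · rw [uIoc_of_le hr0.le]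
      exact (hfcont.mono (fun x hx => hx.1)).aestronglyMeasurable measurableSet_Ioc
    · rw [uIoc_of_le hr0.le]
      refine (ae_restrict_iff' measurableSet_Ioc).mpr (Eventually.of_forall ?_)
      intro s hs
      have : 0 < P s / s ^ 2 := div_pos (hPpos s hs.1) (pow_pos hs.1 2)
      simp only [Real.norm_eq_abs]
      rw [abs_of_pos this]
      exact (hrb s hs).2
  have hI : ∀ ρ : ℝ, 0 < ρ → IntervalIntegrable (fun s => P s / s ^ 2) volume 0 ρ :=
    fun ρ hρ => hI0.trans (hcI r ρ hr0 hρ)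
  have hD : ∀ ρ : ℝ, 0 < ρ → HasDerivAt e (P ρ / ρ ^ 2) ρ := by
    intro ρ hρ
    have hee : e = fun ρ => ∫ s in (0:ℝ)..ρ, P s / s ^ 2 := funext he
    rw [hee]
    apply intervalIntegral.integral_hasDerivAt_right (hI ρ hρ)
    · exact hfcont.stronglyMeasurableAtFilter isOpen_Ioi ρ hρ
    · exact hfcont.continuousAt (Ioi_mem_nhds hρ)
  refine ⟨hI, hD, r, ⟨hr0, hrs.le⟩, R, hR, ?_⟩
  have heR : 0 < e R := by
    rw [he]
    apply intervalIntegral.intervalIntegral_pos_of_pos_on (hI R hR0) _ hR0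
    intro s hs
    exact div_pos (hPpos s hs.1) (pow_pos hs.1 2)
  have hA1 : 0 < γ₁ - 1 := by linarith
  have hA2 : 0 < γ₂ - 1 := by linarith
  have hsm : ∀ ρ ∈ Ioc (0:ℝ) r, κ₁ / 2 / (γ₁ - 1) * ρ ^ (γ₁ - 1) ≤ e ρ ∧
      e ρ ≤ 2 * κ₁ / (γ₁ - 1) * ρ ^ (γ₁ - 1) := by
    intro ρ hρ
    have h := aux_int_bounds _ 0 ρ (γ₁ - 2) (κ₁ / 2) (2 * κ₁) le_rfl hρ.1.le (by linarith)
      (hI ρ hρ.1) (fun s hs => hrb s ⟨hs.1, hs.2.le.trans hρ.2⟩)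
    rw [show γ₁ - 2 + 1 = γ₁ - 1 by ring, Real.zero_rpow hA1.ne', sub_zero, ← he] at h
    exact h
  have hRa : 0 < R ^ (γ₂ - 1) := Real.rpow_pos_of_pos hR0 _
  set m := min (κ₂ / 2 / (γ₂ - 1)) (e R / R ^ (γ₂ - 1)) with hm
  have hmpos : 0 < m := lt_min (by positivity) (by positivity)
  have hlg : ∀ ρ : ℝ, R ≤ ρ → m * ρ ^ (γ₂ - 1) ≤ e ρ ∧
      e ρ ≤ (2 * κ₂ / (γ₂ - 1) + e R / R ^ (γ₂ - 1)) * ρ ^ (γ₂ - 1) := by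
    intro ρ hρ
    have h := aux_int_bounds _ R ρ (γ₂ - 2) (κ₂ / 2) (2 * κ₂) hR0.le hρ (by linarith)
      (hcI R ρ hR0 (by linarith)) (fun s hs => hRb s hs.1.le)
    have hsum : e R + (∫ s in R..ρ, P s / s ^ 2) = e ρ := by
      rw [he, he]
      exact intervalIntegral.integral_add_adjacent_intervals (hI R hR0)
        (hcI R ρ hR0 (by linarith))
    rw [show γ₂ - 2 + 1 = γ₂ - 1 by ring] at h
    have hle : R ^ (γ₂ - 1) ≤ ρ ^ (γ₂ - 1) := Real.rpow_le_rpow hR0.le hρ hA2.le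
    have heq : e R = e R / R ^ (γ₂ - 1) * R ^ (γ₂ - 1) := by field_simp
    have hm1 : m ≤ κ₂ / 2 / (γ₂ - 1) := min_le_left _ _
    have hm2 : m ≤ e R / R ^ (γ₂ - 1) := min_le_right _ _
    have hq : 0 < e R / R ^ (γ₂ - 1) := by positivity
    have hk : 0 < 2 * κ₂ / (γ₂ - 1) := by positivity
    constructor
    · have h1 := mul_le_mul_of_nonneg_right hm1 (sub_nonneg.mpr hle)
      have h2 := mul_le_mul_of_nonneg_right hm2 hRa.le
      linarith [h.1]
    · have h1 := mul_le_mul_of_nonneg_left hle hq.le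
      have h2 := mul_pos hk hRa
      linarith [h.2]
  have p1 : 0 < κ₁ / 2 / (γ₁ - 1) := by positivity
  have p2 : 0 < 2 * κ₁ / (γ₁ - 1) := by positivity
  have p3 : 0 < 2 * κ₂ / (γ₂ - 1) + e R / R ^ (γ₂ - 1) := by positivity
  have q1 := inv_pos.mpr p1
  have q2 := inv_pos.mpr hmpos
  have q3 : 0 < (κ₁ / 2)⁻¹ := by positivity
  have q4 : 0 < (κ₂ / 2)⁻¹ := by positivity
  obtain ⟨C, hC⟩ : ∃ C : ℝ, C = (κ₁ / 2 / (γ₁ - 1))⁻¹ + m⁻¹ + (κ₁ / 2)⁻¹ + (κ₂ / 2)⁻¹ +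
    2 * κ₁ / (γ₁ - 1) + (2 * κ₂ / (γ₂ - 1) + e R / R ^ (γ₂ - 1)) + 2 * κ₁ + 2 * κ₂ := ⟨_, rfl⟩
  refine ⟨C, by linarith, ?_, ?_⟩
  · intro ρ hρ
    rw [(hD ρ hρ.1).deriv]
    have a1 := aux_C _ _ C _ _ p1 (Real.rpow_nonneg hρ.1.le _) (by linarith) (by linarith)
      (hsm ρ hρ)
    have a2 := aux_C _ _ C _ _ (by positivity) (Real.rpow_nonneg hρ.1.le _) (by linarith)
      (by linarith) (hrb ρ hρ)
    exact ⟨a1.1, a1.2, a2.1, a2.2⟩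
  · intro ρ hρ
    have hρ0 : 0 < ρ := by linarith
    rw [(hD ρ hρ0).deriv]
    have a1 := aux_C _ _ C _ _ hmpos (Real.rpow_nonneg hρ0.le _) (by linarith) (by linarith)
      (hlg ρ hρ)
    have a2 := aux_C _ _ C _ _ (by positivity) (Real.rpow_nonneg hρ0.le _) (by linarith)
      (by linarith) (hRb ρ hρ)
    exact ⟨a1.1, a1.2, a2.1, a2.2⟩
end

section
/- Under the hypotheses (H1)–(H3) on the pressure P, the function k(ρ) = ∫₀^ρ √(P'(y))/y dy is well defined for ρ > 0 (the integral converges), and there exist thresholds ρ̄₁ ∈ (0, ρ_*], ρ̄₂ ≥ ρ^* and a constant C > 0 such that, with θ₁ = (γ₁-1)/2 and θ₂ = (γ₂-1)/2: for all ρ ∈ (0, ρ̄₁], C⁻¹ ρ^{θ₁} ≤ k(ρ) ≤ C ρ^{θ₁}, C⁻¹ ρ^{θ₁-1} ≤ k'(ρ) ≤ C ρ^{θ₁-1}, and C⁻¹ ρ^{θ₁-2} ≤ |k''(ρ)| ≤ C ρ^{θ₁-2}; and for all ρ ≥ ρ̄₂, C⁻¹ ρ^{θ₂} ≤ k(ρ)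 ≤ C ρ^{θ₂}, C⁻¹ ρ^{θ₂-1} ≤ k'(ρ) ≤ C ρ^{θ₂-1}, and C⁻¹ ρ^{θ₂-2} ≤ |k''(ρ)| ≤ C ρ^{θ₂-2}. -/
open Set MeasureTheory Filter

lemma aux_derivs {P Q : ℝ → ℝ} {γ κ : ℝ} {U : Set ℝ} (hU : IsOpen U) (hU0 : U ⊆ Ioi 0)
    (hQ : ContDiffOn ℝ 4 Q (Ioi 0)) (hP : ∀ x ∈ U, P x = κ * x ^ γ * (1 + Q x)) :
    ∀ x ∈ U, deriv P x = κ * x ^ (γ - 1) * (γ * (1 + Q x) + x * deriv Q x) ∧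
      deriv (deriv P) x = κ * x ^ (γ - 2) *
        (γ * (γ - 1) * (1 + Q x) + 2 * γ * (x * deriv Q x) + x ^ 2 * deriv (deriv Q) x) := by
  have hQ1 : ∀ x ∈ U, HasDerivAt Q (deriv Q x) x := fun x hx =>
    ((hQ.contDiffAt (Ioi_mem_nhds (hU0 hx))).differentiableAt (by norm_num)).hasDerivAt
  have hQd : ContDiffOn ℝ 3 (deriv Q) (Ioi 0) :=
    hQ.deriv_of_isOpen isOpen_Ioi (by norm_num)
  have hQ2 : ∀ x ∈ U, HasDerivAt (deriv Q) (deriv (deriv Q) x) x := fun x hx =>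
    ((hQd.contDiffAt (Ioi_mem_nhds (hU0 hx))).differentiableAt (by norm_num)).hasDerivAt
  have h1 : ∀ x ∈ U, deriv P x = κ * x ^ (γ - 1) * (γ * (1 + Q x) + x * deriv Q x) := by
    intro x hx
    have hx0 : 0 < x := hU0 hx
    have he : P =ᶠ[nhds x] fun x => κ * x ^ γ * (1 + Q x) :=
      Filter.eventually_of_mem (hU.mem_nhds hx) hP
    rw [he.deriv_eq]
    have := (((Real.hasDerivAt_rpow_const (p := γ) (Or.inl hx0.ne')).const_mul κ).mul
      ((hQ1 x hx).const_add 1))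
    refine (this.congr_deriv ?_).deriv
    have : x ^ γ = x ^ (γ - 1) * x := by
      rw [← Real.rpow_add_one hx0.ne']; congr 1; ring
    rw [this]; ring
  intro x hx
  refine ⟨h1 x hx, ?_⟩
  have hx0 : 0 < x := hU0 hx
  have he : deriv P =ᶠ[nhds x] fun x => κ * x ^ (γ - 1) * (γ * (1 + Q x) + x * deriv Q x) :=
    Filter.eventually_of_mem (hU.mem_nhds hx) h1
  rw [he.deriv_eq]
  have := (((Real.hasDerivAt_rpow_const (p := γ - 1) (Or.inl hx0.ne')).const_mul κ).mul
      ((((hQ1 x hx).const_add 1).const_mul γ).add ((hasDerivAt_id x).mul (hQ2 x hx))))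
  refine (this.congr_deriv ?_).deriv
  have e1 : x ^ (γ - 1) = x ^ (γ - 2) * x := by
    rw [← Real.rpow_add_one hx0.ne']; congr 1; ring
  have e2 : γ - 1 - 1 = γ - 2 := by ring
  simp only [id, e2, e1, Pi.add_apply, Pi.mul_apply]; ring

lemma aux_asymp {P Q : ℝ → ℝ} {γ κ : ℝ} {U : Set ℝ} {l : Filter ℝ} (hκ : 0 < κ) (hγ : 1 < γ)
    (hU : IsOpen U) (hU0 : U ⊆ Ioi 0) (hUl : U ∈ l)
    (hQ : ContDiffOn ℝ 4 Q (Ioi 0)) (hP : ∀ x ∈ U, P x = κ * x ^ γ * (1 + Q x))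
    (t0 : Tendsto Q l (nhds 0)) (t1 : Tendsto (fun x => x * deriv Q x) l (nhds 0))
    (t2 : Tendsto (fun x => x ^ 2 * deriv (deriv Q) x) l (nhds 0)) :
    Tendsto (fun x => Real.sqrt (deriv P x) / x / x ^ ((γ - 1) / 2 - 1)) l
      (nhds (Real.sqrt (κ * γ))) ∧
    Tendsto (fun x => (x * deriv (deriv P) x - 2 * deriv P x) / (2 * Real.sqrt (deriv P x) * x ^ 2)
      / x ^ ((γ - 1) / 2 - 2)) l
      (nhds (κ * (γ * (γ - 3)) / (2 * Real.sqrt (κ * γ)))) := by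
  have hd := aux_derivs hU hU0 hQ hP
  have ta : Tendsto (fun x => κ * (γ * (1 + Q x) + x * deriv Q x)) l (nhds (κ * γ)) := by
    have := (((t0.const_add 1).const_mul γ).add t1).const_mul κ
    simpa using this
  have tb : Tendsto (fun x => κ * (γ * (γ - 1) * (1 + Q x) + 2 * γ * (x * deriv Q x)
      + x ^ 2 * deriv (deriv Q) x)) l (nhds (κ * (γ * (γ - 1)))) := by
    have := ((((t0.const_add 1).const_mul (γ * (γ - 1))).add (t1.const_mul (2 * γ))).add
      t2).const_mul κ
    simpa using this
  have hs : 0 < Real.sqrt (κ * γ) := Real.sqrt_pos.2 (by positivity)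
  have key : ∀ x ∈ U, 0 < x ∧ Real.sqrt (deriv P x) = x ^ ((γ - 1) / 2) *
      Real.sqrt (κ * (γ * (1 + Q x) + x * deriv Q x)) := by
    intro x hx
    have hx0 : 0 < x := hU0 hx
    refine ⟨hx0, ?_⟩
    rw [(hd x hx).1, mul_right_comm, mul_comm, Real.sqrt_mul (by positivity)]
    congr 1
    rw [Real.sqrt_eq_rpow, ← Real.rpow_mul hx0.le]; congr 1; ring
  constructor
  · refine ta.sqrt.congr' ?_
    filter_upwards [hUl] with x hx
    obtain ⟨hx0, h⟩ := key x hx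
    rw [h, Real.rpow_sub_one hx0.ne']
    have : 0 < x ^ ((γ - 1) / 2) := by positivity
    field_simp
  · have t3 := (tb.sub (ta.const_mul 2)).div (ta.sqrt.const_mul 2) (by positivity)
    have : κ * (γ * (γ - 1)) - 2 * (κ * γ) = κ * (γ * (γ - 3)) := by ring
    rw [this] at t3
    refine t3.congr' ?_
    filter_upwards [hUl, ta.sqrt.eventually (lt_mem_nhds hs)] with x hx hp
    obtain ⟨hx0, h⟩ := key x hx
    have e1 : x ^ (γ - 1) = x ^ (γ - 2) * x := by
      rw [← Real.rpow_add_one hx0.ne']; congr 1; ring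
    have e2 : x ^ ((γ - 1) / 2 - 2) = x ^ ((γ - 1) / 2) / x ^ 2 := by
      rw [Real.rpow_sub hx0]; norm_num
    have e3 : x ^ (γ - 2) * x = x ^ ((γ - 1) / 2) * x ^ ((γ - 1) / 2) := by
      rw [← e1, ← Real.rpow_add hx0]; congr 1; ring
    have hpos : 0 < x ^ ((γ - 1) / 2) := by positivity
    rw [h, (hd x hx).1, (hd x hx).2, e2, e1]
    simp only [Pi.div_apply]
    set A := x ^ ((γ - 1) / 2)
    set B := x ^ (γ - 2)
    set S := Real.sqrt (κ * (γ * (1 + Q x) + x * deriv Q x))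
    have hS : S ≠ 0 := hp.ne'
    have e4 : B = A * A / x := by field_simp; linarith
    rw [e4]
    field_simp

lemma aux_bd {f g : ℝ → ℝ} {L : ℝ} {l : Filter ℝ} (hL : 0 < L)
    (h : Tendsto (fun x => f x / g x) l (nhds L)) (hg : ∀ᶠ x in l, 0 < g x) :
    ∀ᶠ x in l, L / 2 * g x ≤ f x ∧ f x ≤ 2 * L * g x := by
  filter_upwards [h.eventually (lt_mem_nhds (half_lt_self hL)),
    h.eventually (gt_mem_nhds (show L < 2 * L by linarith)), hg] with x h1 h2 h3
  exact ⟨((lt_div_iff₀ h3).1 h1).le, ((div_lt_iff₀ h3).1 h2).le⟩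

lemma aux_mono {f g f' g' : ℝ → ℝ} {a b : ℝ} (hab : a ≤ b) (hf : ContinuousOn f (Icc a b))
    (hg : ContinuousOn g (Icc a b)) (hf' : ∀ x ∈ Ioo a b, HasDerivAt f (f' x) x)
    (hg' : ∀ x ∈ Ioo a b, HasDerivAt g (g' x) x) (h : ∀ x ∈ Ioo a b, f' x ≤ g' x)
    (h0 : f a ≤ g a) : f b ≤ g b := by
  have := monotoneOn_of_hasDerivWithinAt_nonneg (f := fun x => g x - f x)
    (f' := fun x => g' x - f' x) (convex_Icc a b) (hg.sub hf)
    (fun x hx => by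
      rw [interior_Icc] at hx
      exact ((hg' x hx).sub (hf' x hx)).hasDerivWithinAt)
    (fun x hx => by
      rw [interior_Icc] at hx
      exact sub_nonneg.2 (h x hx))
  have := this (left_mem_Icc.2 hab) (right_mem_Icc.2 hab) hab
  simp only at this
  linarith

lemma aux_rpow_deriv {θ m x : ℝ} (hx : 0 < x) :
    HasDerivAt (fun x : ℝ => m * x ^ θ) (m * θ * x ^ (θ - 1)) x :=
  ((Real.hasDerivAt_rpow_const (Or.inl hx.ne')).const_mul m).congr_deriv (by ring)

lemma aux_combine {l : Filter ℝ} {k k1 k2 : ℝ → ℝ} {θ L M a b : ℝ} (hL : 0 < L) (hM : M < 0)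
    (ha : 0 < a) (hpos : ∀ᶠ x in l, 0 < x)
    (h0 : ∀ᶠ x in l, a * x ^ θ ≤ k x ∧ k x ≤ b * x ^ θ)
    (h1 : Tendsto (fun x => k1 x / x ^ (θ - 1)) l (nhds L))
    (h2 : Tendsto (fun x => k2 x / x ^ (θ - 2)) l (nhds M)) :
    ∃ C₀ : ℝ, 0 < C₀ ∧ ∀ C, C₀ ≤ C → ∀ᶠ ρ in l, C⁻¹ * ρ ^ θ ≤ k ρ ∧ k ρ ≤ C * ρ ^ θ ∧
          C⁻¹ * ρ ^ (θ - 1) ≤ k1 ρ ∧ k1 ρ ≤ C * ρ ^ (θ - 1) ∧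
          C⁻¹ * ρ ^ (θ - 2) ≤ |k2 ρ| ∧ |k2 ρ| ≤ C * ρ ^ (θ - 2) := by
  have hM' : 0 < |M| := abs_pos.2 hM.ne
  have h2' : Tendsto (fun x => |k2 x| / x ^ (θ - 2)) l (nhds |M|) := by
    refine h2.abs.congr' ?_
    filter_upwards [hpos] with x hx
    rw [abs_div, abs_of_pos (Real.rpow_pos_of_pos hx _)]
  have b1 := aux_bd hL h1 (hpos.mono fun x hx => Real.rpow_pos_of_pos hx _)
  have b2 := aux_bd hM' h2' (hpos.mono fun x hx => Real.rpow_pos_of_pos hx _)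
  refine ⟨a⁻¹ + |b| + (L / 2)⁻¹ + 2 * L + (|M| / 2)⁻¹ + 2 * |M|, by positivity, ?_⟩
  intro C hC
  have p1 : 0 < a⁻¹ := by positivity
  have p2 : 0 ≤ |b| := by positivity
  have p3 : 0 < (L / 2)⁻¹ := by positivity
  have p4 : 0 < (|M| / 2)⁻¹ := by positivity
  have hb := le_abs_self b
  have hC0 : 0 < C := by linarith
  have q1 : C⁻¹ ≤ a := inv_le_of_inv_le₀ ha (by linarith)
  have q2 : C⁻¹ ≤ L / 2 := inv_le_of_inv_le₀ (by positivity) (by linarith)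
  have q3 : C⁻¹ ≤ |M| / 2 := inv_le_of_inv_le₀ (by positivity) (by linarith)
  filter_upwards [h0, b1, b2, hpos] with x h0 h1 h2 hx
  have r0 := Real.rpow_pos_of_pos hx θ
  have r1 := Real.rpow_pos_of_pos hx (θ - 1)
  have r2 := Real.rpow_pos_of_pos hx (θ - 2)
  exact ⟨(mul_le_mul_of_nonneg_right q1 r0.le).trans h0.1,
    h0.2.trans (mul_le_mul_of_nonneg_right (by linarith) r0.le),
    (mul_le_mul_of_nonneg_right q2 r1.le).trans h1.1,
    h1.2.trans (mul_le_mul_of_nonneg_right (by linarith) r1.le),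
    (mul_le_mul_of_nonneg_right q3 r2.le).trans h2.1,
    h2.2.trans (mul_le_mul_of_nonneg_right (by linarith) r2.le)⟩

lemma aux_small {Q : ℝ → ℝ} {l : Filter ℝ} {e C : ℝ} (hpos : ∀ᶠ x in l, 0 < x)
    (hb : ∀ᶠ x in l, ∀ j : ℕ, j ≤ 4 → |iteratedDeriv j Q x| ≤ C * x ^ (e - (j : ℝ)))
    (he : Tendsto (fun x : ℝ => x ^ e) l (nhds 0)) :
    Tendsto Q l (nhds 0) ∧ Tendsto (fun x => x * deriv Q x) l (nhds 0) ∧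
    Tendsto (fun x => x ^ 2 * deriv (deriv Q) x) l (nhds 0) := by
  have hC : Tendsto (fun x : ℝ => C * x ^ e) l (nhds 0) := by simpa using he.const_mul C
  have main : ∀ j : ℕ, j ≤ 4 → Tendsto (fun x => x ^ j * iteratedDeriv j Q x) l (nhds 0) := by
    intro j hj
    refine squeeze_zero_norm' ?_ hC
    filter_upwards [hpos, hb] with x hx h
    have h := h j hj
    rw [Real.rpow_sub hx, Real.rpow_natCast] at h
    rw [Real.norm_eq_abs, abs_mul, abs_of_pos (pow_pos hx j)]
    calc x ^ j * |iteratedDeriv j Q x| ≤ x ^ j * (C * (x ^ e / x ^ j)) := by gcongr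
      _ = C * x ^ e := by field_simp
  refine ⟨by simpa using main 0 (by norm_num), by simpa using main 1 (by norm_num), ?_⟩
  have := main 2 (by norm_num)
  simpa [iteratedDeriv_succ, iteratedDeriv_zero] using this

theorem k_function_bounds
    (P Q₁ Q₂ : ℝ → ℝ) (ρstar ρss γ₁ γ₂ κ₁ κ₂ Cs Css εe : ℝ)
    (hPC1 : ContDiffOn ℝ 1 P (Ici 0))
    (hPC4 : ContDiffOn ℝ 4 P (Ioi 0))
    (hH1 : ∀ ρ : ℝ, 0 < ρ → 0 < deriv P ρ ∧ 0 < 2 * deriv P ρ + ρ * deriv (deriv P) ρ)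
    (hρstar : 0 < ρstar) (hγ₁ : 1 < γ₁) (hγ₁3 : γ₁ < 3) (hκ₁ : 0 < κ₁) (hCs : 0 < Cs)
    (hQ₁C4 : ContDiffOn ℝ 4 Q₁ (Ioi 0))
    (hPsmall : ∀ ρ ∈ Ico (0:ℝ) ρstar, P ρ = κ₁ * ρ ^ γ₁ * (1 + Q₁ ρ))
    (hQ₁bd : ∀ ρ ∈ Ioo (0:ℝ) ρstar, ∀ j : ℕ, j ≤ 4 →
      |iteratedDeriv j Q₁ ρ| ≤ Cs * ρ ^ (γ₁ - 1 - (j : ℝ)))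
    (hρss : ρstar < ρss) (hγ₂ : 6/5 < γ₂) (hγ₂1 : γ₂ ≤ γ₁) (hκ₂ : 0 < κ₂)
    (hεe : 0 < εe) (hCss : 0 < Css)
    (hQ₂C4 : ContDiffOn ℝ 4 Q₂ (Ioi 0))
    (hPlarge : ∀ ρ : ℝ, ρss ≤ ρ → P ρ = κ₂ * ρ ^ γ₂ * (1 + Q₂ ρ))
    (hQ₂bd : ∀ ρ : ℝ, ρss ≤ ρ → ∀ j : ℕ, j ≤ 4 →
      |iteratedDeriv j Q₂ ρ| ≤ Css * ρ ^ (-εe - (j : ℝ))) :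
    ∀ k : ℝ → ℝ, (∀ ρ : ℝ, k ρ = ∫ y in (0:ℝ)..ρ, Real.sqrt (deriv P y) / y) →
      (∀ ρ : ℝ, 0 < ρ → IntervalIntegrable (fun y => Real.sqrt (deriv P y) / y) volume 0 ρ) ∧
      (∃ ρb₁ ∈ Ioc (0:ℝ) ρstar, ∃ ρb₂ : ℝ, ρss ≤ ρb₂ ∧ ∃ C : ℝ, 0 < C ∧
        (∀ ρ ∈ Ioc (0:ℝ) ρb₁,
          C⁻¹ * ρ ^ ((γ₁ - 1) / 2) ≤ k ρ ∧ k ρ ≤ C * ρ ^ ((γ₁ - 1) / 2) ∧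
          C⁻¹ * ρ ^ ((γ₁ - 1) / 2 - 1) ≤ deriv k ρ ∧ deriv k ρ ≤ C * ρ ^ ((γ₁ - 1) / 2 - 1) ∧
          C⁻¹ * ρ ^ ((γ₁ - 1) / 2 - 2) ≤ |deriv (deriv k) ρ| ∧
            |deriv (deriv k) ρ| ≤ C * ρ ^ ((γ₁ - 1) / 2 - 2)) ∧
        (∀ ρ : ℝ, ρb₂ ≤ ρ →
          C⁻¹ * ρ ^ ((γ₂ - 1) / 2) ≤ k ρ ∧ k ρ ≤ C * ρ ^ ((γ₂ - 1) / 2) ∧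
          C⁻¹ * ρ ^ ((γ₂ - 1) / 2 - 1) ≤ deriv k ρ ∧ deriv k ρ ≤ C * ρ ^ ((γ₂ - 1) / 2 - 1) ∧
          C⁻¹ * ρ ^ ((γ₂ - 1) / 2 - 2) ≤ |deriv (deriv k) ρ| ∧
            |deriv (deriv k) ρ| ≤ C * ρ ^ ((γ₂ - 1) / 2 - 2))) := by
  intro k hk
  set f : ℝ → ℝ := fun y => Real.sqrt (deriv P y) / y with hf
  have hθ₁ : 0 < (γ₁ - 1) / 2 := by linarith
  have hθ₂ : 0 < (γ₂ - 1) / 2 := by linarith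
  -- asymptotics near zero
  have pos1 : ∀ᶠ x : ℝ in nhdsWithin 0 (Ioi 0), 0 < x := self_mem_nhdsWithin
  have mem1 : Ioo 0 ρstar ∈ nhdsWithin (0:ℝ) (Ioi 0) := Ioo_mem_nhdsGT hρstar
  obtain ⟨a0, a1, a2⟩ := aux_small (Q := Q₁) (e := γ₁ - 1) pos1
    (Filter.eventually_of_mem mem1 hQ₁bd)
    (by
      have : ContinuousAt (fun x : ℝ => x ^ (γ₁ - 1)) 0 :=
        Real.continuousAt_rpow_const _ _ (Or.inr (by linarith))
      have h := this.tendsto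
      rw [Real.zero_rpow (by linarith)] at h
      exact h.mono_left nhdsWithin_le_nhds)
  obtain ⟨A1, A2⟩ := aux_asymp hκ₁ hγ₁ isOpen_Ioo (fun x hx => hx.1) mem1 hQ₁C4
    (fun x hx => hPsmall x ⟨hx.1.le, hx.2⟩) a0 a1 a2
  -- asymptotics near infinity
  have pos2 : ∀ᶠ x : ℝ in atTop, 0 < x := eventually_gt_atTop 0
  have mem2 : Ioi ρss ∈ (atTop : Filter ℝ) := Ioi_mem_atTop ρss
  obtain ⟨b0, b1, b2⟩ := aux_small (Q := Q₂) (e := -εe) pos2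
    (Filter.eventually_of_mem mem2 (fun x hx => hQ₂bd x (le_of_lt hx)))
    (tendsto_rpow_neg_atTop hεe)
  obtain ⟨B1, B2⟩ := aux_asymp (P := P) hκ₂ (by linarith) isOpen_Ioi
    (fun x hx => (hρstar.trans hρss).trans hx) mem2 hQ₂C4
    (fun x hx => hPlarge x (le_of_lt hx)) b0 b1 b2
  -- regularity
  have hdP : ContDiffOn ℝ 3 (deriv P) (Ioi 0) := hPC4.deriv_of_isOpen isOpen_Ioi (by norm_num)
  have hfd : ∀ x : ℝ, 0 < x → HasDerivAt f
      ((x * deriv (deriv P) x - 2 * deriv P x) / (2 * Real.sqrt (deriv P x) * x ^ 2)) x := by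
    intro x hx
    have hp := (hH1 x hx).1
    have h1 := ((hdP.contDiffAt (Ioi_mem_nhds hx)).differentiableAt (by norm_num)).hasDerivAt
    refine ((h1.sqrt hp.ne').div (hasDerivAt_id x) hx.ne').congr_deriv ?_
    have hs := Real.sqrt_pos.2 hp
    have hss := Real.sq_sqrt hp.le
    simp only [id]
    field_simp
    rw [hss]
  have hfc : ContinuousOn f (Ioi 0) := fun x hx => (hfd x hx).continuousAt.continuousWithinAt
  have hfpos : ∀ x : ℝ, 0 < x → 0 < f x := fun x hx =>
    div_pos (Real.sqrt_pos.2 (hH1 x hx).1) hx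
  have L1 : 0 < Real.sqrt (κ₁ * γ₁) := Real.sqrt_pos.2 (by positivity)
  have L2 : 0 < Real.sqrt (κ₂ * γ₂) := Real.sqrt_pos.2 (mul_pos hκ₂ (by linarith))
  have F1 := aux_bd (f := f) L1 A1 (pos1.mono fun x hx => Real.rpow_pos_of_pos hx _)
  have F2 := aux_bd (f := f) L2 B1 (pos2.mono fun x hx => Real.rpow_pos_of_pos hx _)
  obtain ⟨δ, hδ, hF1⟩ := (mem_nhdsGT_iff_exists_Ioc_subset).1 F1
  have hδ0 : 0 < δ := hδ
  obtain ⟨R', hF2'⟩ := eventually_atTop.1 F2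
  obtain ⟨R, hR0, hF2⟩ : ∃ R : ℝ, 0 < R ∧ ∀ x, R ≤ x →
      Real.sqrt (κ₂ * γ₂) / 2 * x ^ ((γ₂ - 1) / 2 - 1) ≤ f x ∧
      f x ≤ 2 * Real.sqrt (κ₂ * γ₂) * x ^ ((γ₂ - 1) / 2 - 1) :=
    ⟨max R' 1, by positivity, fun x hx => hF2' x ((le_max_left _ _).trans hx)⟩
  have hInt0 : IntervalIntegrable f volume 0 δ := by
    have hr : IntervalIntegrable (fun x : ℝ => 2 * Real.sqrt (κ₁ * γ₁) *
        x ^ ((γ₁ - 1) / 2 - 1)) volume 0 δ :=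
      (intervalIntegral.intervalIntegrable_rpow' (by linarith)).const_mul _
    rw [intervalIntegrable_iff_integrableOn_Ioc_of_le hδ0.le] at hr ⊢
    refine Integrable.mono' hr ((hfc.mono fun x hx => hx.1).aestronglyMeasurable
      measurableSet_Ioc) ?_
    refine (ae_restrict_iff' measurableSet_Ioc).2 (Eventually.of_forall fun x hx => ?_)
    rw [Real.norm_eq_abs, abs_of_pos (hfpos x hx.1)]
    exact (hF1 hx).2
  have hInt : ∀ ρ : ℝ, 0 < ρ → IntervalIntegrable f volume 0 ρ := by
    intro ρ hρ
    refine hInt0.trans (ContinuousOn.intervalIntegrable (hfc.mono fun x hx => ?_))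
    exact (lt_min hδ0 hρ).trans_le hx.1
  refine ⟨hInt, ?_⟩
  have hkeq : k = fun ρ => ∫ y in (0:ℝ)..ρ, f y := funext hk
  have hk1 : ∀ x : ℝ, 0 < x → HasDerivAt k (f x) x := by
    intro x hx
    rw [hkeq]
    exact intervalIntegral.integral_hasDerivAt_right (hInt x hx)
      (hfc.stronglyMeasurableAtFilter isOpen_Ioi x hx) (hfd x hx).continuousAt
  have hkd : ∀ x : ℝ, 0 < x → deriv k x = f x := fun x hx => (hk1 x hx).deriv
  have hkdd : ∀ x : ℝ, 0 < x → deriv (deriv k) x =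
      (x * deriv (deriv P) x - 2 * deriv P x) / (2 * Real.sqrt (deriv P x) * x ^ 2) := by
    intro x hx
    have : deriv k =ᶠ[nhds x] f := Filter.eventually_of_mem (Ioi_mem_nhds hx) hkd
    rw [this.deriv_eq, (hfd x hx).deriv]
  have hk0 : k 0 = 0 := by rw [hk]; simp
  have hkc : ∀ b : ℝ, 0 < b → ContinuousOn k (Icc 0 b) := by
    intro b hb
    rw [hkeq]
    have := intervalIntegral.continuousOn_primitive_interval' (hInt b hb) left_mem_uIcc
    rwa [uIcc_of_le hb.le] at this
  have hkpos : ∀ x : ℝ, 0 < x → 0 < k x := by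
    intro x hx
    rw [hk]
    exact intervalIntegral.intervalIntegral_pos_of_pos_on (hInt x hx) (fun y hy => hfpos y hy.1) hx
  have hrc : ∀ (m θ : ℝ), 0 < θ → Continuous (fun x : ℝ => m * x ^ θ) := fun m θ hθ =>
    continuous_const.mul (Real.continuous_rpow_const hθ.le)
  -- bounds for k near zero
  have K1 : ∀ᶠ x in nhdsWithin (0:ℝ) (Ioi 0),
      (Real.sqrt (κ₁ * γ₁) / 2 / ((γ₁ - 1) / 2)) * x ^ ((γ₁ - 1) / 2) ≤ k x ∧
      k x ≤ (2 * Real.sqrt (κ₁ * γ₁) / ((γ₁ - 1) / 2)) * x ^ ((γ₁ - 1) / 2) := by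
    filter_upwards [Ioc_mem_nhdsGT hδ0] with x hx
    constructor
    · refine aux_mono hx.1.le (hrc _ _ hθ₁).continuousOn (hkc x hx.1)
        (fun y hy => aux_rpow_deriv hy.1) (fun y hy => hk1 y hy.1) (fun y hy => ?_) ?_
      · rw [div_mul_cancel₀ _ hθ₁.ne']
        exact (hF1 ⟨hy.1, hy.2.le.trans hx.2⟩).1
      · simp only [Real.zero_rpow hθ₁.ne', mul_zero, hk0, le_refl]
    · refine aux_mono hx.1.le (hkc x hx.1) (hrc _ _ hθ₁).continuousOn (fun y hy => hk1 y hy.1)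
        (fun y hy => aux_rpow_deriv hy.1) (fun y hy => ?_) ?_
      · rw [div_mul_cancel₀ _ hθ₁.ne']
        exact (hF1 ⟨hy.1, hy.2.le.trans hx.2⟩).2
      · simp only [Real.zero_rpow hθ₁.ne', mul_zero, hk0, le_refl]
  -- bounds for k near infinity
  have hRθ : 0 < R ^ ((γ₂ - 1) / 2) := Real.rpow_pos_of_pos hR0 _
  have K2 : ∀ᶠ x in (atTop : Filter ℝ),
      (min (Real.sqrt (κ₂ * γ₂) / 2 / ((γ₂ - 1) / 2)) (k R / R ^ ((γ₂ - 1) / 2)))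
        * x ^ ((γ₂ - 1) / 2) ≤ k x ∧
      k x ≤ (max (2 * Real.sqrt (κ₂ * γ₂) / ((γ₂ - 1) / 2)) (k R / R ^ ((γ₂ - 1) / 2)))
        * x ^ ((γ₂ - 1) / 2) := by
    filter_upwards [eventually_ge_atTop R] with x hx
    have hkc' : ContinuousOn k (Icc R x) :=
      (hkc x (hR0.trans_le hx)).mono (Icc_subset_Icc_left hR0.le)
    constructor
    · refine aux_mono hx (hrc _ _ hθ₂).continuousOn hkc'
        (fun y hy => aux_rpow_deriv (hR0.trans hy.1)) (fun y hy => hk1 y (hR0.trans hy.1))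
        (fun y hy => ?_) ?_
      · refine le_trans ?_ (hF2 y hy.1.le).1
        refine mul_le_mul_of_nonneg_right ?_ (Real.rpow_pos_of_pos (hR0.trans hy.1) _).le
        rw [← le_div_iff₀ hθ₂]
        exact min_le_left _ _
      · rw [← le_div_iff₀ hRθ]
        exact min_le_right _ _
    · refine aux_mono hx hkc' (hrc _ _ hθ₂).continuousOn (fun y hy => hk1 y (hR0.trans hy.1))
        (fun y hy => aux_rpow_deriv (hR0.trans hy.1))
        (fun y hy => ?_) ?_
      · refine le_trans (hF2 y hy.1.le).2 ?_
        refine mul_le_mul_of_nonneg_right ?_ (Real.rpow_pos_of_pos (hR0.trans hy.1) _).le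
        rw [← div_le_iff₀ hθ₂]
        exact le_max_left _ _
      · rw [← div_le_iff₀ hRθ]
        exact le_max_right _ _
  -- conclusion
  have M1 : κ₁ * (γ₁ * (γ₁ - 3)) / (2 * Real.sqrt (κ₁ * γ₁)) < 0 :=
    div_neg_of_neg_of_pos (mul_neg_of_pos_of_neg hκ₁
      (mul_neg_of_pos_of_neg (by linarith) (by linarith))) (by positivity)
  have M2 : κ₂ * (γ₂ * (γ₂ - 3)) / (2 * Real.sqrt (κ₂ * γ₂)) < 0 :=
    div_neg_of_neg_of_pos (mul_neg_of_pos_of_neg hκ₂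
      (mul_neg_of_pos_of_neg (by linarith) (by linarith))) (by positivity)
  obtain ⟨C1, hC1, D1⟩ := aux_combine (k1 := deriv k) (k2 := deriv (deriv k)) L1 M1
    (by positivity) pos1 K1
    (A1.congr' (pos1.mono fun x hx => by simp only [hkd x hx, hf]))
    (A2.congr' (pos1.mono fun x hx => by simp only [hkdd x hx]))
  obtain ⟨C2, hC2, D2⟩ := aux_combine (k1 := deriv k) (k2 := deriv (deriv k)) L2 M2
    (lt_min (by positivity) (div_pos (hkpos R hR0) hRθ)) pos2 K2
    (B1.congr' (pos2.mono fun x hx => by simp only [hkd x hx, hf]))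
    (B2.congr' (pos2.mono fun x hx => by simp only [hkdd x hx]))
  obtain ⟨r1, hr1, E1⟩ := (mem_nhdsGT_iff_exists_Ioc_subset).1 (D1 (max C1 C2) (le_max_left _ _))
  obtain ⟨r2, E2⟩ := eventually_atTop.1 (D2 (max C1 C2) (le_max_right _ _))
  refine ⟨min r1 ρstar, ⟨lt_min hr1 hρstar, min_le_right _ _⟩, max r2 ρss, le_max_right _ _,
    max C1 C2, lt_max_of_lt_left hC1, fun ρ hρ => E1 ⟨hρ.1, hρ.2.trans (min_le_left _ _)⟩,
    fun ρ hρ => E2 ρ ((le_max_left _ _).trans hρ)⟩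
end

section
/- Under the hypotheses (H1)–(H3) on the pressure P, with k(ρ) = ∫₀^ρ √(P'(y))/y dy, the identity ρ k''(ρ)/k'(ρ) = ρ P''(ρ)/(2P'(ρ)) − 1 holds for every ρ > 0. Moreover there exist a constant ν ∈ (0,1) and thresholds ρ̄₁ ∈ (0, ρ_*], ρ̄₂ ≥ ρ^* such that: for all ρ ∈ (0, ρ̄₁], ((3γ₁−1)(γ₁−1)/(γ₁+5)) P'(ρ) ≤ ρ P''(ρ) ≤ ((5+γ₁)(γ₁−1)/(3γ₁−1)) P'(ρ) < 2P'(ρ); for all ρ ≥ ρ̄₂, ((3γ₁−1)(γ₂−1)/(γ₁+5)) P'(ρ) ≤ ρ P''(ρ) ≤ ((5+γ₁)(γ₂−1)/(3γ₁−1)) P'(ρ) < 2P'(ρ); and consequently 0 < |ρ k''(ρ)/k'(ρ)| ≤ ν for all ρ ∈ (0, ρ̄₁] ∪ [ρ̄₂, ∞). -/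
open Set MeasureTheory Filter

/-- First derivative of a perturbed power law. -/
lemma aux_deriv1 (Q : ℝ → ℝ) (κ γ ρ : ℝ) (hQ : ContDiffOn ℝ 4 Q (Ioi 0)) (hρ : 0 < ρ) :
    HasDerivAt (fun x => κ * x ^ γ * (1 + Q x))
      (κ * (γ * ρ ^ (γ - 1)) * (1 + Q ρ) + κ * ρ ^ γ * deriv Q ρ) ρ := by
  have h1 : HasDerivAt Q (deriv Q ρ) ρ :=
    ((hQ.contDiffAt (Ioi_mem_nhds hρ)).differentiableAt (by norm_num)).hasDerivAt
  have h2 : HasDerivAt (fun x : ℝ => x ^ γ) (γ * ρ ^ (γ - 1)) ρ :=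
    Real.hasDerivAt_rpow_const (Or.inl hρ.ne')
  exact (h2.const_mul κ).mul (h1.const_add 1)

lemma aux_deriv_diff (Q : ℝ → ℝ) (ρ : ℝ) (hQ : ContDiffOn ℝ 4 Q (Ioi 0)) (hρ : 0 < ρ) :
    HasDerivAt (deriv Q) (deriv (deriv Q) ρ) ρ := by
  have h : ContDiffOn ℝ 3 (deriv Q) (Ioi 0) :=
    hQ.deriv_of_isOpen isOpen_Ioi (by norm_num)
  exact ((h.contDiffAt (Ioi_mem_nhds hρ)).differentiableAt (by norm_num)).hasDerivAt

lemma aux_formulas (P Q : ℝ → ℝ) (κ γ ρ : ℝ) (hQ : ContDiffOn ℝ 4 Q (Ioi 0)) (hρ : 0 < ρ)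
    (hP : P =ᶠ[nhds ρ] fun x => κ * x ^ γ * (1 + Q x)) :
    deriv P ρ = κ * ρ ^ (γ - 1) * (γ * (1 + Q ρ) + ρ * deriv Q ρ) ∧
    ρ * deriv (deriv P) ρ = κ * ρ ^ (γ - 1) *
      (γ * (γ - 1) * (1 + Q ρ) + 2 * γ * (ρ * deriv Q ρ) + ρ ^ 2 * deriv (deriv Q) ρ) := by
  have e1 : ρ ^ γ = ρ ^ (γ - 1) * ρ := by
    rw [← Real.rpow_add_one hρ.ne']; congr 1; ring
  have e2 : ρ ^ (γ - 1) = ρ ^ (γ - 1 - 1) * ρ := by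
    rw [← Real.rpow_add_one hρ.ne']; congr 1; ring
  constructor
  · rw [hP.deriv_eq, (aux_deriv1 Q κ γ ρ hQ hρ).deriv, e1]; ring
  · have hd : deriv P =ᶠ[nhds ρ] fun x =>
        κ * (γ * x ^ (γ - 1)) * (1 + Q x) + κ * x ^ γ * deriv Q x := by
      filter_upwards [hP.deriv, Ioi_mem_nhds hρ] with x hx hx0
      rw [hx, (aux_deriv1 Q κ γ x hQ hx0).deriv]
    have h1 : HasDerivAt Q (deriv Q ρ) ρ :=
      ((hQ.contDiffAt (Ioi_mem_nhds hρ)).differentiableAt (by norm_num)).hasDerivAt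
    have h2 : HasDerivAt (fun x : ℝ => x ^ γ) (γ * ρ ^ (γ - 1)) ρ :=
      Real.hasDerivAt_rpow_const (Or.inl hρ.ne')
    have h3 : HasDerivAt (fun x : ℝ => x ^ (γ - 1)) ((γ - 1) * ρ ^ (γ - 1 - 1)) ρ :=
      Real.hasDerivAt_rpow_const (Or.inl hρ.ne')
    have h4 := (((h3.const_mul γ).const_mul κ).mul (h1.const_add 1)).add
      ((h2.const_mul κ).mul (aux_deriv_diff Q ρ hQ hρ))
    have h5 : deriv (deriv P) ρ = _ := hd.deriv_eq.trans h4.deriv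
    rw [h5, e1, e2]; ring

lemma aux_asymp_s4 (P Q : ℝ → ℝ) (κ γ e C a b : ℝ) (l : Filter ℝ) (hκ : 0 < κ) (hγ : 1 < γ)
    (hQ : ContDiffOn ℝ 4 Q (Ioi 0)) (ha : a < γ - 1) (hb : γ - 1 < b)
    (hl : ∀ᶠ ρ in l, 0 < ρ)
    (hP : ∀ᶠ ρ in l, P =ᶠ[nhds ρ] fun x => κ * x ^ γ * (1 + Q x))
    (hbd : ∀ᶠ ρ in l, ∀ j : ℕ, j ≤ 4 → |iteratedDeriv j Q ρ| ≤ C * ρ ^ (e - (j : ℝ)))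
    (hlim : Tendsto (fun ρ : ℝ => ρ ^ e) l (nhds 0)) :
    ∀ᶠ ρ in l, a * deriv P ρ ≤ ρ * deriv (deriv P) ρ ∧
      ρ * deriv (deriv P) ρ ≤ b * deriv P ρ := by
  have hlim' : Tendsto (fun ρ : ℝ => C * ρ ^ e) l (nhds 0) := by
    simpa using hlim.const_mul C
  have key : ∀ j : ℕ, j ≤ 4 → Tendsto (fun ρ => ρ ^ j * iteratedDeriv j Q ρ) l (nhds 0) := by
    intro j hj
    refine squeeze_zero_norm' ?_ hlim'
    filter_upwards [hl, hbd] with ρ h0 hρ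
    rw [norm_mul, Real.norm_eq_abs, Real.norm_eq_abs, abs_of_pos (pow_pos h0 j)]
    calc ρ ^ j * |iteratedDeriv j Q ρ| ≤ ρ ^ j * (C * ρ ^ (e - (j : ℝ))) := by
          gcongr; exact hρ j hj
      _ = C * ρ ^ e := by
          rw [Real.rpow_sub h0, Real.rpow_natCast]; field_simp
  have k0 : Tendsto Q l (nhds 0) := by simpa using key 0 (by norm_num)
  have k1 : Tendsto (fun ρ => ρ * deriv Q ρ) l (nhds 0) := by
    simpa [iteratedDeriv_one] using key 1 (by norm_num)
  have k2 : Tendsto (fun ρ => ρ ^ 2 * deriv (deriv Q) ρ) l (nhds 0) := by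
    simpa [iteratedDeriv_succ, iteratedDeriv_zero] using key 2 (by norm_num)
  have hD : Tendsto (fun ρ => γ * (1 + Q ρ) + ρ * deriv Q ρ) l (nhds (γ * (1 + 0) + 0)) :=
    ((k0.const_add 1).const_mul γ).add k1
  have hN : Tendsto (fun ρ => γ * (γ - 1) * (1 + Q ρ) + 2 * γ * (ρ * deriv Q ρ)
      + ρ ^ 2 * deriv (deriv Q) ρ) l (nhds (γ * (γ - 1) * (1 + 0) + 2 * γ * 0 + 0)) :=
    (((k0.const_add 1).const_mul _).add (k1.const_mul _)).add k2
  have i1 := (hD.const_mul a).eventually_lt hN (by nlinarith)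
  have i2 := hN.eventually_lt (hD.const_mul b) (by nlinarith)
  filter_upwards [hl, hP, i1, i2] with ρ h0 hρ j1 j2
  obtain ⟨f1, f2⟩ := aux_formulas P Q κ γ ρ hQ h0 hρ
  rw [f1, f2]
  have hp : 0 < κ * ρ ^ (γ - 1) := mul_pos hκ (Real.rpow_pos_of_pos h0 _)
  constructor
  · have := mul_le_mul_of_nonneg_left j1.le hp.le
    linarith
  · have := mul_le_mul_of_nonneg_left j2.le hp.le
    linarith

lemma aux_meas (P : ℝ → ℝ) : Measurable (fun y => Real.sqrt (deriv P y) / y) :=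
  (measurable_deriv P).sqrt.div measurable_id

lemma aux_contAt (P : ℝ → ℝ) (hPC4 : ContDiffOn ℝ 4 P (Ioi 0)) (ρ : ℝ) (hρ : 0 < ρ) :
    ContinuousAt (fun y => Real.sqrt (deriv P y) / y) ρ :=
  ((aux_deriv_diff P ρ hPC4 hρ).continuousAt.sqrt).div continuousAt_id hρ.ne'

lemma aux_int (P Q : ℝ → ℝ) (ρs γ κ C : ℝ) (hPC4 : ContDiffOn ℝ 4 P (Ioi 0))
    (hρs : 0 < ρs) (hγ : 1 < γ) (hκ : 0 < κ) (hC : 0 < C)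
    (hQ : ContDiffOn ℝ 4 Q (Ioi 0))
    (hP : ∀ ρ ∈ Ico (0:ℝ) ρs, P ρ = κ * ρ ^ γ * (1 + Q ρ))
    (hbd : ∀ ρ ∈ Ioo (0:ℝ) ρs, ∀ j : ℕ, j ≤ 4 →
      |iteratedDeriv j Q ρ| ≤ C * ρ ^ (γ - 1 - (j : ℝ))) (ρ : ℝ) (hρ : 0 < ρ) :
    IntervalIntegrable (fun y => Real.sqrt (deriv P y) / y) volume 0 ρ := by
  set u := ρs / 2 with hu
  have hu0 : 0 < u := by positivity
  have huρ : u < ρs := by rw [hu]; linarith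
  have h1 : IntervalIntegrable (fun y => Real.sqrt (deriv P y) / y) volume u ρ := by
    apply ContinuousOn.intervalIntegrable
    intro x hx
    have : 0 < x := lt_of_lt_of_le (lt_min hu0 hρ) hx.1
    exact (aux_contAt P hPC4 x this).continuousWithinAt
  refine IntervalIntegrable.trans ?_ h1
  set M := κ * (γ * (1 + C * u ^ (γ - 1)) + C * u ^ (γ - 1)) with hM
  have hM0 : 0 ≤ M := by positivity
  have h2 : IntervalIntegrable (fun y : ℝ => Real.sqrt M * y ^ ((γ - 1) / 2 - 1)) volume 0 u :=
    (intervalIntegral.intervalIntegrable_rpow' (by linarith)).const_mul _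
  refine h2.mono_fun' (aux_meas P).aestronglyMeasurable ?_
  rw [uIoc_of_le hu0.le]
  refine (ae_restrict_iff' measurableSet_Ioc).2 (Eventually.of_forall ?_)
  intro y hy
  obtain ⟨hy0, hyu⟩ := hy
  have hyρ : y < ρs := lt_of_le_of_lt hyu huρ
  have hPe : P =ᶠ[nhds y] fun x => κ * x ^ γ * (1 + Q x) := by
    filter_upwards [Ioo_mem_nhds hy0 hyρ] with x hx
    exact hP x ⟨hx.1.le, hx.2⟩
  have f1 := (aux_formulas P Q κ γ y hQ hy0 hPe).1
  have b0 := hbd y ⟨hy0, hyρ⟩ 0 (by norm_num)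
  have b1 := hbd y ⟨hy0, hyρ⟩ 1 (by norm_num)
  simp only [iteratedDeriv_zero, iteratedDeriv_one, Nat.cast_zero, Nat.cast_one, sub_zero] at b0 b1
  have hmono : y ^ (γ - 1) ≤ u ^ (γ - 1) := Real.rpow_le_rpow hy0.le hyu (by linarith)
  have c0 : Q y ≤ C * u ^ (γ - 1) :=
    (le_abs_self _).trans (b0.trans (by gcongr))
  have c1 : y * deriv Q y ≤ C * u ^ (γ - 1) := by
    calc y * deriv Q y ≤ y * (C * y ^ (γ - 1 - 1)) := by
          gcongr; exact (le_abs_self _).trans b1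
      _ = C * y ^ (γ - 1) := by
          rw [Real.rpow_sub_one hy0.ne' (γ - 1)]; field_simp
      _ ≤ _ := by gcongr
  have hle : deriv P y ≤ M * y ^ (γ - 1) := by
    rw [f1, hM]
    have hp : 0 ≤ κ * y ^ (γ - 1) := by positivity
    have : γ * (1 + Q y) + y * deriv Q y ≤ γ * (1 + C * u ^ (γ - 1)) + C * u ^ (γ - 1) := by
      gcongr
    have := mul_le_mul_of_nonneg_left this hp
    linarith
  beta_reduce
  rw [Real.norm_eq_abs, abs_of_nonneg (by positivity)]
  have hs : Real.sqrt (deriv P y) ≤ Real.sqrt M * y ^ ((γ - 1) / 2) := by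
    refine (Real.sqrt_le_sqrt hle).trans (le_of_eq ?_)
    rw [Real.sqrt_mul hM0, Real.sqrt_eq_rpow (y ^ (γ - 1)), ← Real.rpow_mul hy0.le]
    congr 2; ring
  rw [Real.rpow_sub_one hy0.ne', ← mul_div_assoc]
  gcongr

lemma aux_ident (P k : ℝ → ℝ) (hPC4 : ContDiffOn ℝ 4 P (Ioi 0))
    (hpos : ∀ ρ : ℝ, 0 < ρ → 0 < deriv P ρ)
    (hint : ∀ ρ : ℝ, 0 < ρ →
      IntervalIntegrable (fun y => Real.sqrt (deriv P y) / y) volume 0 ρ)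
    (hk : ∀ ρ : ℝ, k ρ = ∫ y in (0:ℝ)..ρ, Real.sqrt (deriv P y) / y) (ρ : ℝ) (hρ : 0 < ρ) :
    ρ * deriv (deriv k) ρ / deriv k ρ = ρ * deriv (deriv P) ρ / (2 * deriv P ρ) - 1 := by
  have hd : ∀ x : ℝ, 0 < x → deriv k x = Real.sqrt (deriv P x) / x := by
    intro x hx
    have : k = fun u => ∫ y in (0:ℝ)..u, Real.sqrt (deriv P y) / y := funext hk
    rw [this]
    exact (intervalIntegral.integral_hasDerivAt_right (hint x hx)
      ((aux_meas P).stronglyMeasurable.stronglyMeasurableAtFilter)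
      (aux_contAt P hPC4 x hx)).deriv
  have he : deriv k =ᶠ[nhds ρ] fun x => Real.sqrt (deriv P x) / x := by
    filter_upwards [Ioi_mem_nhds hρ] with x hx using hd x hx
  have h1 := ((aux_deriv_diff P ρ hPC4 hρ).sqrt (hpos ρ hρ).ne').div (hasDerivAt_id ρ) hρ.ne'
  have h2 : deriv (deriv k) ρ = _ := he.deriv_eq.trans h1.deriv
  rw [h2, hd ρ hρ]
  have hp := hpos ρ hρ
  have hs : 0 < Real.sqrt (deriv P ρ) := Real.sqrt_pos.2 hp
  have hsq : Real.sqrt (deriv P ρ) ^ 2 = deriv P ρ := Real.sq_sqrt hp.le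
  generalize deriv (deriv P) ρ = B at *
  generalize Real.sqrt (deriv P ρ) = s at *
  rw [← hsq]
  simp only [id]
  field_simp

theorem genuine_nonlinearity_bounds
    (P Q₁ Q₂ : ℝ → ℝ) (ρstar ρss γ₁ γ₂ κ₁ κ₂ Cs Css εe : ℝ)
    (hPC1 : ContDiffOn ℝ 1 P (Ici 0))
    (hPC4 : ContDiffOn ℝ 4 P (Ioi 0))
    (hH1 : ∀ ρ : ℝ, 0 < ρ → 0 < deriv P ρ ∧ 0 < 2 * deriv P ρ + ρ * deriv (deriv P) ρ)
    (hρstar : 0 < ρstar) (hγ₁ : 1 < γ₁) (hγ₁3 : γ₁ < 3) (hκ₁ : 0 < κ₁) (hCs : 0 < Cs)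
    (hQ₁C4 : ContDiffOn ℝ 4 Q₁ (Ioi 0))
    (hPsmall : ∀ ρ ∈ Ico (0:ℝ) ρstar, P ρ = κ₁ * ρ ^ γ₁ * (1 + Q₁ ρ))
    (hQ₁bd : ∀ ρ ∈ Ioo (0:ℝ) ρstar, ∀ j : ℕ, j ≤ 4 →
      |iteratedDeriv j Q₁ ρ| ≤ Cs * ρ ^ (γ₁ - 1 - (j : ℝ)))
    (hρss : ρstar < ρss) (hγ₂ : 6/5 < γ₂) (hγ₂1 : γ₂ ≤ γ₁) (hκ₂ : 0 < κ₂)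
    (hεe : 0 < εe) (hCss : 0 < Css)
    (hQ₂C4 : ContDiffOn ℝ 4 Q₂ (Ioi 0))
    (hPlarge : ∀ ρ : ℝ, ρss ≤ ρ → P ρ = κ₂ * ρ ^ γ₂ * (1 + Q₂ ρ))
    (hQ₂bd : ∀ ρ : ℝ, ρss ≤ ρ → ∀ j : ℕ, j ≤ 4 →
      |iteratedDeriv j Q₂ ρ| ≤ Css * ρ ^ (-εe - (j : ℝ))) :
    ∀ k : ℝ → ℝ, (∀ ρ : ℝ, k ρ = ∫ y in (0:ℝ)..ρ, Real.sqrt (deriv P y) / y) →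
      (∀ ρ : ℝ, 0 < ρ →
        ρ * deriv (deriv k) ρ / deriv k ρ = ρ * deriv (deriv P) ρ / (2 * deriv P ρ) - 1) ∧
      (∃ ν ∈ Ioo (0:ℝ) 1, ∃ ρb₁ ∈ Ioc (0:ℝ) ρstar, ∃ ρb₂ : ℝ, ρss ≤ ρb₂ ∧
        (∀ ρ ∈ Ioc (0:ℝ) ρb₁,
          (3 * γ₁ - 1) * (γ₁ - 1) / (γ₁ + 5) * deriv P ρ ≤ ρ * deriv (deriv P) ρ ∧
          ρ * deriv (deriv P) ρ ≤ (5 + γ₁) * (γ₁ - 1) / (3 * γ₁ - 1) * deriv P ρ ∧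
          (5 + γ₁) * (γ₁ - 1) / (3 * γ₁ - 1) * deriv P ρ < 2 * deriv P ρ) ∧
        (∀ ρ : ℝ, ρb₂ ≤ ρ →
          (3 * γ₁ - 1) * (γ₂ - 1) / (γ₁ + 5) * deriv P ρ ≤ ρ * deriv (deriv P) ρ ∧
          ρ * deriv (deriv P) ρ ≤ (5 + γ₁) * (γ₂ - 1) / (3 * γ₁ - 1) * deriv P ρ ∧
          (5 + γ₁) * (γ₂ - 1) / (3 * γ₁ - 1) * deriv P ρ < 2 * deriv P ρ) ∧
        (∀ ρ : ℝ, (ρ ∈ Ioc (0:ℝ) ρb₁ ∨ ρb₂ ≤ ρ) →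
          0 < |ρ * deriv (deriv k) ρ / deriv k ρ| ∧
          |ρ * deriv (deriv k) ρ / deriv k ρ| ≤ ν)) := by
  intro k hk
  have hid := aux_ident P k hPC4 (fun ρ h => (hH1 ρ h).1)
    (aux_int P Q₁ ρstar γ₁ κ₁ Cs hPC4 hρstar hγ₁ hκ₁ hCs hQ₁C4 hPsmall hQ₁bd) hk
  refine ⟨hid, ?_⟩
  have p1 : 0 < γ₁ + 5 := by linarith
  have p2 : 0 < 3 * γ₁ - 1 := by linarith
  have lo : ∀ g : ℝ, 1 < g → (3 * γ₁ - 1) * (g - 1) / (γ₁ + 5) < g - 1 := by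
    intro g hg
    rw [div_lt_iff₀ p1]
    nlinarith
  have hi : ∀ g : ℝ, 1 < g → g - 1 < (5 + γ₁) * (g - 1) / (3 * γ₁ - 1) := by
    intro g hg
    rw [lt_div_iff₀ p2]
    nlinarith
  have two : ∀ g : ℝ, 1 < g → g ≤ γ₁ → (5 + γ₁) * (g - 1) / (3 * γ₁ - 1) < 2 := by
    intro g hg hg1
    rw [div_lt_iff₀ p2]
    nlinarith
  have hg2 : 1 < γ₂ := by linarith
  have E1 := aux_asymp_s4 P Q₁ κ₁ γ₁ (γ₁ - 1) Cs _ _ (nhdsWithin 0 (Ioi 0)) hκ₁ hγ₁ hQ₁C4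
    (lo γ₁ hγ₁) (hi γ₁ hγ₁) self_mem_nhdsWithin
    (by
      filter_upwards [Ioo_mem_nhdsGT hρstar] with ρ hρ
      filter_upwards [Ioo_mem_nhds hρ.1 hρ.2] with x hx
      exact hPsmall x ⟨hx.1.le, hx.2⟩)
    (by
      filter_upwards [Ioo_mem_nhdsGT hρstar] with ρ hρ using hQ₁bd ρ hρ)
    (by
      have := (Real.continuousAt_rpow_const 0 (γ₁ - 1) (Or.inr (by linarith))).tendsto
      rw [Real.zero_rpow (by linarith)] at this
      exact this.mono_left nhdsWithin_le_nhds)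
  have E2 := aux_asymp_s4 P Q₂ κ₂ γ₂ (-εe) Css _ _ atTop hκ₂ hg2 hQ₂C4
    (lo γ₂ hg2) (hi γ₂ hg2) (eventually_gt_atTop 0)
    (by
      filter_upwards [eventually_gt_atTop ρss] with ρ hρ
      filter_upwards [Ioi_mem_nhds hρ] with x hx
      exact hPlarge x (le_of_lt hx))
    (by
      filter_upwards [eventually_ge_atTop ρss] with ρ hρ using hQ₂bd ρ hρ)
    (tendsto_rpow_neg_atTop hεe)
  obtain ⟨u, hu0, hu⟩ := mem_nhdsGT_iff_exists_Ioc_subset.1 E1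
  obtain ⟨v, hv⟩ := eventually_atTop.1 E2
  set L := (3 * γ₁ - 1) * (γ₂ - 1) / (γ₁ + 5) with hL
  have hL0 : 0 < L := div_pos (mul_pos p2 (by linarith)) p1
  have hL2 : L < 2 := by linarith [lo γ₂ hg2]
  have hLL : L ≤ (3 * γ₁ - 1) * (γ₁ - 1) / (γ₁ + 5) := by
    rw [hL]; gcongr
  have A1 : ∀ ρ ∈ Ioc (0:ℝ) (min u ρstar),
          (3 * γ₁ - 1) * (γ₁ - 1) / (γ₁ + 5) * deriv P ρ ≤ ρ * deriv (deriv P) ρ ∧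
          ρ * deriv (deriv P) ρ ≤ (5 + γ₁) * (γ₁ - 1) / (3 * γ₁ - 1) * deriv P ρ ∧
          (5 + γ₁) * (γ₁ - 1) / (3 * γ₁ - 1) * deriv P ρ < 2 * deriv P ρ := by
    intro ρ hρ
    have h := hu ⟨hρ.1, hρ.2.trans (min_le_left _ _)⟩
    exact ⟨h.1, h.2, mul_lt_mul_of_pos_right (two γ₁ hγ₁ le_rfl) (hH1 ρ hρ.1).1⟩
  have A2 : ∀ ρ : ℝ, max v ρss ≤ ρ →
          L * deriv P ρ ≤ ρ * deriv (deriv P) ρ ∧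
          ρ * deriv (deriv P) ρ ≤ (5 + γ₁) * (γ₂ - 1) / (3 * γ₁ - 1) * deriv P ρ ∧
          (5 + γ₁) * (γ₂ - 1) / (3 * γ₁ - 1) * deriv P ρ < 2 * deriv P ρ := by
    intro ρ hρ
    have h := hv ρ ((le_max_left _ _).trans hρ)
    have h0 : 0 < ρ := by linarith [(le_max_right v ρss).trans hρ]
    exact ⟨h.1, h.2, mul_lt_mul_of_pos_right (two γ₂ hg2 hγ₂1) (hH1 ρ h0).1⟩
  refine ⟨1 - L / 2, ⟨by linarith, by linarith⟩, min u ρstar,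
    ⟨lt_min hu0 hρstar, min_le_right _ _⟩, max v ρss, le_max_right _ _, A1, A2, ?_⟩
  intro ρ hρ
  have h0 : 0 < ρ := by
    rcases hρ with h | h
    · exact h.1
    · linarith [(le_max_right v ρss).trans h]
  have hp := (hH1 ρ h0).1
  have hb : L * deriv P ρ ≤ ρ * deriv (deriv P) ρ ∧ ρ * deriv (deriv P) ρ < 2 * deriv P ρ := by
    rcases hρ with h | h
    · obtain ⟨a, b, c⟩ := A1 ρ h
      exact ⟨(mul_le_mul_of_nonneg_right hLL hp.le).trans a, b.trans_lt c⟩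
    · obtain ⟨a, b, c⟩ := A2 ρ h
      exact ⟨a, b.trans_lt c⟩
  rw [hid ρ h0]
  have r1 : L / 2 ≤ ρ * deriv (deriv P) ρ / (2 * deriv P ρ) := by
    rw [le_div_iff₀ (by positivity)]; linarith [hb.1]
  have r2 : ρ * deriv (deriv P) ρ / (2 * deriv P ρ) < 1 := by
    rw [div_lt_one (by positivity)]; exact hb.2
  rw [abs_of_neg (by linarith)]
  constructor <;> linarith
end

section
/- Under the hypotheses (H1)–(H3) on the pressure P, with k(ρ) = ∫₀^ρ √(P'(y))/y dy, define d(ρ) = 2 + ρ k''(ρ)/k'(ρ). Then d(ρ) = 1 + ρ P''(ρ)/(2P'(ρ)) and d(ρ) > 0 for every ρ > 0; there is a constant C > 0 with d(ρ) ≤ C for all ρ > 0; and, with θ₂ = (γ₂−1)/2, there exist a constant C' > 0 and a threshold ρ̄ ≥ ρ^* such that |d(ρ) − (1+θ₂)| ≤ C' ρ^{−ε} for all ρ ≥ ρ̄. -/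
open Set MeasureTheory Filter

theorem core_bound (P Q : ℝ → ℝ) (γ κ ρ C s : ℝ) (hγ : 1 < γ) (hκ : 0 < κ) (hρ : 0 < ρ)
    (hQ : ContDiffOn ℝ 4 Q (Ioi 0))
    (hP : ∀ᶠ x in nhds ρ, P x = κ * x ^ γ * (1 + Q x))
    (hb : ∀ j : ℕ, j ≤ 4 → |iteratedDeriv j Q ρ| ≤ C * ρ ^ (s - (j : ℝ)))
    (hA : C * ρ ^ s ≤ 1 / 4) :
    deriv P ρ ≤ κ * (2 * γ) * ρ ^ (γ - 1) ∧
    |ρ * deriv (deriv P) ρ / (2 * deriv P ρ) - (γ - 1) / 2| ≤ (γ + 2) * (C * ρ ^ s) := by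
  have hev0 : ∀ᶠ x in nhds ρ, 0 < x := eventually_gt_nhds hρ
  have hQ1 : ∀ x, 0 < x → HasDerivAt Q (deriv Q x) x := fun x hx =>
    ((hQ.contDiffAt (Ioi_mem_nhds hx)).differentiableAt (by norm_num)).hasDerivAt
  have hQ2 : HasDerivAt (deriv Q) (deriv (deriv Q) ρ) ρ := by
    have h1 : ContDiffOn ℝ 3 (deriv Q) (Ioi 0) :=
      ((contDiffOn_succ_iff_deriv_of_isOpen (n := 3) isOpen_Ioi).1 (by norm_num; exact hQ)).2.2
    exact ((h1.contDiffAt (Ioi_mem_nhds hρ)).differentiableAt (by norm_num)).hasDerivAt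
  have hd1 : ∀ᶠ x in nhds ρ, deriv P x =
      κ * (γ * x ^ (γ - 1)) * (1 + Q x) + κ * x ^ γ * deriv Q x := by
    filter_upwards [hP.eventually_nhds, hev0] with x hx hx0
    have hx' : P =ᶠ[nhds x] fun x => κ * x ^ γ * (1 + Q x) := hx
    rw [hx'.deriv_eq]
    have h := ((Real.hasDerivAt_rpow_const (x := x) (p := γ) (Or.inl hx0.ne')).const_mul κ).mul
      ((hQ1 x hx0).const_add 1)
    exact h.deriv
  have hd2 : deriv (deriv P) ρ =
      κ * (γ * ((γ - 1) * ρ ^ (γ - 1 - 1))) * (1 + Q ρ) + κ * (γ * ρ ^ (γ - 1)) * deriv Q ρ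
      + (κ * (γ * ρ ^ (γ - 1)) * deriv Q ρ + κ * ρ ^ γ * deriv (deriv Q) ρ) := by
    rw [EventuallyEq.deriv_eq hd1]
    have h0 := (Real.hasDerivAt_rpow_const (x := ρ) (p := γ) (Or.inl hρ.ne')).const_mul κ
    have h1 := ((Real.hasDerivAt_rpow_const (x := ρ) (p := γ - 1)
      (Or.inl hρ.ne')).const_mul γ).const_mul κ
    exact ((h1.mul ((hQ1 ρ hρ).const_add 1)).add (h0.mul hQ2)).deriv
  have hd1' := hd1.self_of_nhds
  have b0 : |Q ρ| ≤ C * ρ ^ s := by simpa using hb 0 (by norm_num)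
  have b1 : |ρ * deriv Q ρ| ≤ C * ρ ^ s := by
    have := hb 1 (by norm_num)
    rw [iteratedDeriv_one] at this
    rw [abs_mul, abs_of_pos hρ]
    calc ρ * |deriv Q ρ| ≤ ρ * (C * ρ ^ (s - ((1:ℕ) : ℝ))) := by gcongr
      _ = C * ρ ^ s := by
        rw [Real.rpow_sub hρ, Real.rpow_natCast]; field_simp
  have b2 : |ρ ^ 2 * deriv (deriv Q) ρ| ≤ C * ρ ^ s := by
    have := hb 2 (by norm_num)
    rw [iteratedDeriv_succ, iteratedDeriv_one] at this
    rw [abs_mul, abs_of_pos (by positivity : 0 < ρ ^ 2)]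
    calc ρ ^ 2 * |deriv (deriv Q) ρ| ≤ ρ ^ 2 * (C * ρ ^ (s - ((2:ℕ) : ℝ))) := by gcongr
      _ = C * ρ ^ s := by
        rw [Real.rpow_sub hρ, Real.rpow_natCast]; field_simp
  have e1 : ρ ^ γ = ρ ^ (γ - 1) * ρ := by
    rw [Real.rpow_sub hρ, Real.rpow_one]; field_simp
  have e2 : ρ ^ (γ - 1 - 1) = ρ ^ (γ - 1) / ρ := by
    rw [Real.rpow_sub hρ (γ - 1), Real.rpow_one]
  rw [e1] at hd1' hd2
  rw [e2] at hd2
  have hX : 0 < ρ ^ (γ - 1) := Real.rpow_pos_of_pos hρ _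
  generalize ρ ^ (γ - 1) = X at *
  generalize C * ρ ^ s = A at *
  generalize Q ρ = q at *
  obtain ⟨q1, hq1⟩ : ∃ q1, q1 = ρ * deriv Q ρ := ⟨_, rfl⟩
  obtain ⟨q2, hq2⟩ : ∃ q2, q2 = ρ ^ 2 * deriv (deriv Q) ρ := ⟨_, rfl⟩
  rw [← hq1] at b1
  rw [← hq2] at b2
  have hP1 : deriv P ρ = κ * X * (γ * (1 + q) + q1) := by rw [hd1', hq1]; ring
  have hP2 : ρ * deriv (deriv P) ρ = κ * X * (γ * (γ - 1) * (1 + q) + 2 * γ * q1 + q2) := by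
    rw [hd2, hq1, hq2]; field_simp; ring
  obtain ⟨l0, u0⟩ := abs_le.1 b0
  obtain ⟨l1, u1⟩ := abs_le.1 b1
  obtain ⟨l2, u2⟩ := abs_le.1 b2
  have hD : 1 / 2 ≤ γ * (1 + q) + q1 := by nlinarith
  have hDu : γ * (1 + q) + q1 ≤ 2 * γ := by nlinarith
  constructor
  · rw [hP1]
    have := mul_le_mul_of_nonneg_left hDu (mul_pos hκ hX).le
    linarith
  · rw [hP1, hP2]
    have hD0 : 0 < γ * (1 + q) + q1 := by linarith
    have : κ * X * (γ * (γ - 1) * (1 + q) + 2 * γ * q1 + q2) / (2 * (κ * X * (γ * (1 + q) + q1)))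
        - (γ - 1) / 2 = ((γ + 1) * q1 + q2) / (2 * (γ * (1 + q) + q1)) := by
      field_simp; ring
    rw [this, abs_div, abs_of_pos (by linarith : 0 < 2 * (γ * (1 + q) + q1)),
      div_le_iff₀ (by linarith)]
    have hA0 : 0 ≤ A := (abs_nonneg _).trans b0
    have h1 : |(γ + 1) * q1 + q2| ≤ (γ + 2) * A := by
      rw [abs_le]; constructor <;> nlinarith
    have h2 : 0 ≤ (γ + 2) * A := by positivity
    nlinarith

theorem d_function_bounds
    (P Q₁ Q₂ : ℝ → ℝ) (ρstar ρss γ₁ γ₂ κ₁ κ₂ Cs Css εe : ℝ)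
    (hPC1 : ContDiffOn ℝ 1 P (Ici 0))
    (hPC4 : ContDiffOn ℝ 4 P (Ioi 0))
    (hH1 : ∀ ρ : ℝ, 0 < ρ → 0 < deriv P ρ ∧ 0 < 2 * deriv P ρ + ρ * deriv (deriv P) ρ)
    (hρstar : 0 < ρstar) (hγ₁ : 1 < γ₁) (hγ₁3 : γ₁ < 3) (hκ₁ : 0 < κ₁) (hCs : 0 < Cs)
    (hQ₁C4 : ContDiffOn ℝ 4 Q₁ (Ioi 0))
    (hPsmall : ∀ ρ ∈ Ico (0:ℝ) ρstar, P ρ = κ₁ * ρ ^ γ₁ * (1 + Q₁ ρ))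
    (hQ₁bd : ∀ ρ ∈ Ioo (0:ℝ) ρstar, ∀ j : ℕ, j ≤ 4 →
      |iteratedDeriv j Q₁ ρ| ≤ Cs * ρ ^ (γ₁ - 1 - (j : ℝ)))
    (hρss : ρstar < ρss) (hγ₂ : 6/5 < γ₂) (hγ₂1 : γ₂ ≤ γ₁) (hκ₂ : 0 < κ₂)
    (hεe : 0 < εe) (hCss : 0 < Css)
    (hQ₂C4 : ContDiffOn ℝ 4 Q₂ (Ioi 0))
    (hPlarge : ∀ ρ : ℝ, ρss ≤ ρ → P ρ = κ₂ * ρ ^ γ₂ * (1 + Q₂ ρ))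
    (hQ₂bd : ∀ ρ : ℝ, ρss ≤ ρ → ∀ j : ℕ, j ≤ 4 →
      |iteratedDeriv j Q₂ ρ| ≤ Css * ρ ^ (-εe - (j : ℝ))) :
    ∀ k : ℝ → ℝ, (∀ ρ : ℝ, k ρ = ∫ y in (0:ℝ)..ρ, Real.sqrt (deriv P y) / y) →
    ∀ d : ℝ → ℝ, (∀ ρ : ℝ, d ρ = 2 + ρ * deriv (deriv k) ρ / deriv k ρ) →
      (∀ ρ : ℝ, 0 < ρ → d ρ = 1 + ρ * deriv (deriv P) ρ / (2 * deriv P ρ) ∧ 0 < d ρ) ∧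
      (∃ C : ℝ, 0 < C ∧ ∀ ρ : ℝ, 0 < ρ → d ρ ≤ C) ∧
      (∃ C' : ℝ, 0 < C' ∧ ∃ ρbar : ℝ, ρss ≤ ρbar ∧ ∀ ρ : ℝ, ρbar ≤ ρ →
        |d ρ - (1 + (γ₂ - 1) / 2)| ≤ C' * ρ ^ (-εe)) := by
  intro k hk d hd
  have hγ₂' : 1 < γ₂ := by linarith
  have hρss0 : 0 < ρss := hρstar.trans hρss
  have hP' : ContDiffOn ℝ 3 (deriv P) (Ioi 0) :=
    ((contDiffOn_succ_iff_deriv_of_isOpen (n := 3) isOpen_Ioi).1 (by norm_num; exact hPC4)).2.2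
  have hP'' : ContDiffOn ℝ 2 (deriv (deriv P)) (Ioi 0) :=
    ((contDiffOn_succ_iff_deriv_of_isOpen (n := 2) isOpen_Ioi).1 (by norm_num; exact hP')).2.2
  have hPd : ∀ x, 0 < x → HasDerivAt (deriv P) (deriv (deriv P) x) x := fun x hx =>
    ((hP'.contDiffAt (Ioi_mem_nhds hx)).differentiableAt (by norm_num)).hasDerivAt
  -- small densities
  have hsmall : ∃ r, 0 < r ∧ ∀ ρ, 0 < ρ → ρ < r →
      deriv P ρ ≤ κ₁ * (2 * γ₁) * ρ ^ (γ₁ - 1) ∧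
      |ρ * deriv (deriv P) ρ / (2 * deriv P ρ) - (γ₁ - 1) / 2| ≤ (γ₁ + 2) * (1 / 4) := by
    have ht : Tendsto (fun ρ : ℝ => Cs * ρ ^ (γ₁ - 1)) (nhds 0) (nhds 0) := by
      have h := (Real.continuousAt_rpow_const (0:ℝ) (γ₁ - 1) (Or.inr (by linarith))).tendsto.const_mul Cs
      rwa [Real.zero_rpow (by linarith), mul_zero] at h
    have he := ht.eventually (eventually_lt_nhds (by norm_num : (0:ℝ) < 1 / 4))
    obtain ⟨δ, hδ, hδ'⟩ := Metric.eventually_nhds_iff.1 he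
    refine ⟨min δ ρstar, lt_min hδ hρstar, fun ρ h0 h1 => ?_⟩
    have h2 : Cs * ρ ^ (γ₁ - 1) < 1 / 4 :=
      hδ' (by rw [Real.dist_eq, sub_zero, abs_of_pos h0]; exact h1.trans_le (min_le_left _ _))
    have h3 : ρ < ρstar := h1.trans_le (min_le_right _ _)
    have hc := core_bound P Q₁ γ₁ κ₁ ρ Cs (γ₁ - 1) hγ₁ hκ₁ h0 hQ₁C4
      (by filter_upwards [Ioo_mem_nhds h0 h3] with x hx using hPsmall x ⟨hx.1.le, hx.2⟩)
      (hQ₁bd ρ ⟨h0, h3⟩) h2.le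
    refine ⟨hc.1, hc.2.trans ?_⟩
    have : 0 < γ₁ + 2 := by linarith
    gcongr
  obtain ⟨r, hr, hsm⟩ := hsmall
  -- large densities
  have hlarge : ∃ R, ρss ≤ R ∧ ∀ ρ, R ≤ ρ → Css * ρ ^ (-εe) ≤ 1 / 4 ∧
      |ρ * deriv (deriv P) ρ / (2 * deriv P ρ) - (γ₂ - 1) / 2| ≤ (γ₂ + 2) * (Css * ρ ^ (-εe)) := by
    have ht : Tendsto (fun ρ : ℝ => Css * ρ ^ (-εe)) atTop (nhds 0) := by
      have h := (tendsto_rpow_neg_atTop hεe).const_mul Css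
      rwa [mul_zero] at h
    have he := ht.eventually (eventually_lt_nhds (by norm_num : (0:ℝ) < 1 / 4))
    obtain ⟨N, hN⟩ := eventually_atTop.1 he
    refine ⟨max N (ρss + 1), by linarith [le_max_right N (ρss + 1)], fun ρ h1 => ?_⟩
    have h2 := hN ρ ((le_max_left _ _).trans h1)
    have h3 : ρss < ρ := by linarith [(le_max_right N (ρss + 1)).trans h1]
    exact ⟨h2.le, (core_bound P Q₂ γ₂ κ₂ ρ Css (-εe) hγ₂' hκ₂ (hρss0.trans h3) hQ₂C4
      (by filter_upwards [Ioi_mem_nhds h3] with x hx using hPlarge x (le_of_lt hx))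
      (hQ₂bd ρ h3.le) h2.le).2⟩
  obtain ⟨R, hR, hlg⟩ := hlarge
  -- integrability
  have hmeas : Measurable (fun y : ℝ => Real.sqrt (deriv P y) / y) :=
    ((measurable_deriv P).sqrt).div measurable_id
  have hcont : ContinuousOn (fun y : ℝ => Real.sqrt (deriv P y) / y) (Ioi 0) :=
    (Real.continuous_sqrt.comp_continuousOn hP'.continuousOn).div continuousOn_id
      (fun x hx => (ne_of_gt hx))
  have hint0 : IntervalIntegrable (fun y : ℝ => Real.sqrt (deriv P y) / y) volume 0 (r / 2) := by
    have hg : IntervalIntegrable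
        (fun y : ℝ => Real.sqrt (κ₁ * (2 * γ₁)) * y ^ ((γ₁ - 1) / 2 - 1)) volume 0 (r / 2) :=
      (intervalIntegral.intervalIntegrable_rpow' (by linarith)).const_mul _
    refine hg.mono_fun hmeas.aestronglyMeasurable ?_
    rw [uIoc_of_le (by linarith)]
    refine (ae_restrict_iff' measurableSet_Ioc).2 (Eventually.of_forall fun y hy => ?_)
    have hy0 : 0 < y := hy.1
    have hb := (hsm y hy0 (by linarith [hy.2])).1
    beta_reduce
    rw [Real.norm_of_nonneg (by positivity), Real.norm_of_nonneg (by positivity)]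
    have h1 : Real.sqrt (deriv P y) ≤ Real.sqrt (κ₁ * (2 * γ₁)) * y ^ ((γ₁ - 1) / 2) := by
      refine (Real.sqrt_le_sqrt hb).trans (le_of_eq ?_)
      rw [Real.sqrt_mul (by positivity), Real.sqrt_eq_rpow (y ^ _), ← Real.rpow_mul hy0.le]
      ring_nf
    rw [Real.rpow_sub hy0, Real.rpow_one, ← mul_div_assoc]
    gcongr
  have hint : ∀ ρ, 0 < ρ →
      IntervalIntegrable (fun y : ℝ => Real.sqrt (deriv P y) / y) volume 0 ρ := fun ρ hρ =>
    hint0.trans ((hcont.mono (fun x hx => by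
      have := hx.1
      exact (lt_min (by linarith) hρ : 0 < min (r / 2) ρ).trans_le this)).intervalIntegrable)
  have hk1 : ∀ ρ, 0 < ρ → deriv k ρ = Real.sqrt (deriv P ρ) / ρ := fun ρ hρ => by
    have h : k = fun ρ => ∫ y in (0:ℝ)..ρ, Real.sqrt (deriv P y) / y := funext hk
    rw [h]
    exact (intervalIntegral.integral_hasDerivAt_right (hint ρ hρ)
      (hmeas.stronglyMeasurable.stronglyMeasurableAtFilter)
      (hcont.continuousAt (Ioi_mem_nhds hρ))).deriv
  have hform : ∀ ρ : ℝ, 0 < ρ → d ρ = 1 + ρ * deriv (deriv P) ρ / (2 * deriv P ρ) := fun ρ hρ => by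
    have hev : deriv k =ᶠ[nhds ρ] fun x => Real.sqrt (deriv P x) / x := by
      filter_upwards [Ioi_mem_nhds hρ] with x hx using hk1 x hx
    have hp := (hH1 ρ hρ).1
    have hs : 0 < Real.sqrt (deriv P ρ) := Real.sqrt_pos.2 hp
    have h2 := (((hPd ρ hρ).sqrt hp.ne').div (hasDerivAt_id ρ) hρ.ne').deriv
    have h3 : deriv (deriv k) ρ = _ := hev.deriv_eq.trans h2
    rw [hd, hk1 ρ hρ, h3]
    have hsq : deriv P ρ = Real.sqrt (deriv P ρ) ^ 2 := (Real.sq_sqrt hp.le).symm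
    simp only [id]
    generalize deriv (deriv P) ρ = b at *
    generalize Real.sqrt (deriv P ρ) = s at *
    rw [hsq]
    field_simp
    ring
  refine ⟨fun ρ hρ => ⟨hform ρ hρ, ?_⟩, ?_, ?_⟩
  · obtain ⟨h1, h2⟩ := hH1 ρ hρ
    rw [hform ρ hρ]
    have : 1 + ρ * deriv (deriv P) ρ / (2 * deriv P ρ)
        = (2 * deriv P ρ + ρ * deriv (deriv P) ρ) / (2 * deriv P ρ) := by field_simp
    rw [this]
    positivity
  · have hc : ContinuousOn (fun ρ => 1 + ρ * deriv (deriv P) ρ / (2 * deriv P ρ)) (Icc r R) := by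
      have hsub : Icc r R ⊆ Ioi 0 := fun x hx => hr.trans_le hx.1
      have : ContinuousOn (fun ρ => 1 + ρ * deriv (deriv P) ρ / (2 * deriv P ρ)) (Ioi 0) :=
        continuousOn_const.add ((continuousOn_id.mul hP''.continuousOn).div
          (continuousOn_const.mul hP'.continuousOn)
          (fun x hx => (mul_pos two_pos (hH1 x hx).1).ne'))
      exact this.mono hsub
    obtain ⟨M, hM⟩ := isCompact_Icc.bddAbove_image hc
    refine ⟨max M (1 + γ₁ + γ₁ + 2), lt_max_of_lt_right (by linarith), fun ρ hρ => ?_⟩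
    rw [hform ρ hρ]
    rcases lt_or_ge ρ r with h | h
    · refine le_trans ?_ (le_max_right _ _)
      have := (abs_le.1 (hsm ρ hρ h).2).2
      linarith
    · rcases le_or_gt ρ R with h' | h'
      · exact le_trans (hM ⟨ρ, ⟨h, h'⟩, rfl⟩) (le_max_left _ _)
      · refine le_trans ?_ (le_max_right _ _)
        obtain ⟨ha, hb⟩ := hlg ρ h'.le
        have := (abs_le.1 hb).2
        have : (γ₂ + 2) * (Css * ρ ^ (-εe)) ≤ (γ₂ + 2) * (1 / 4) := by gcongr
        linarith
  · refine ⟨(γ₂ + 2) * Css, by positivity, R, hR, fun ρ h => ?_⟩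
    rw [hform ρ (by linarith)]
    have := (hlg ρ h).2
    rw [add_sub_add_left_eq_sub, mul_assoc]
    exact this
end

section
/- Let 𝒞₁, 𝒞₂, 𝒞₃ > 0 and define the white dwarf pressure P(ρ) = 𝒞₁ ∫₀^{𝒞₂ ρ^{1/3}} s⁴/√(𝒞₃ + s²) ds for ρ ≥ 0. Then P is infinitely differentiable on (0,∞) with P'(ρ) = (𝒞₁𝒞₂⁵/3) ρ^{2/3} (𝒞₃ + 𝒞₂² ρ^{2/3})^{−1/2} > 0 and 2P'(ρ) + ρ P''(ρ) > 0 for all ρ > 0, and moreover lim_{ρ→0⁺} P(ρ)/ρ^{5/3} = 𝒞₁𝒞₂⁵/(5√𝒞₃) and lim_{ρ→∞} P(ρ)/ρ^{4/3} = 𝒞₁𝒞₂⁴/4. -/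
open Set MeasureTheory Filter

lemma wd_g_contDiff (C : ℝ) (hC : 0 < C) :
    ContDiff ℝ (⊤ : ℕ∞) (fun s : ℝ => s ^ 4 / Real.sqrt (C + s ^ 2)) := by
  apply ContDiff.div
  · fun_prop
  · apply ContDiff.sqrt
    · fun_prop
    · intro x; positivity
  · intro x; positivity

lemma wd_G_hasDerivAt (C : ℝ) (hC : 0 < C) (x : ℝ) :
    HasDerivAt (fun x : ℝ => ∫ s in (0:ℝ)..x, s ^ 4 / Real.sqrt (C + s ^ 2))
      (x ^ 4 / Real.sqrt (C + x ^ 2)) x := by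
  have hc := (wd_g_contDiff C hC).continuous
  exact intervalIntegral.integral_hasDerivAt_right (hc.intervalIntegrable _ _)
    (hc.stronglyMeasurableAtFilter _ _) hc.continuousAt

lemma wd_G_contDiff (C : ℝ) (hC : 0 < C) :
    ContDiff ℝ (⊤ : ℕ∞) (fun x : ℝ => ∫ s in (0:ℝ)..x, s ^ 4 / Real.sqrt (C + s ^ 2)) := by
  rw [contDiff_infty_iff_deriv]
  refine ⟨fun x => (wd_G_hasDerivAt C hC x).differentiableAt, ?_⟩
  have : deriv (fun x : ℝ => ∫ s in (0:ℝ)..x, s ^ 4 / Real.sqrt (C + s ^ 2))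
      = fun s : ℝ => s ^ 4 / Real.sqrt (C + s ^ 2) := by
    funext x; exact (wd_G_hasDerivAt C hC x).deriv
  rw [this]
  exact wd_g_contDiff C hC

lemma wd_G_zero (C : ℝ) (hC : 0 < C) :
    Tendsto (fun x : ℝ => (∫ s in (0:ℝ)..x, s ^ 4 / Real.sqrt (C + s ^ 2)) / x ^ 5)
      (nhdsWithin 0 (Ioi 0)) (nhds (1 / (5 * Real.sqrt C))) := by
  have hc := (wd_g_contDiff C hC).continuous
  have hl : Tendsto (fun x : ℝ => 1 / (5 * Real.sqrt (C + x ^ 2)))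
      (nhdsWithin 0 (Ioi 0)) (nhds (1 / (5 * Real.sqrt C))) := by
    have : ContinuousAt (fun x : ℝ => 1 / (5 * Real.sqrt (C + x ^ 2))) 0 := by
      apply ContinuousAt.div
      · fun_prop
      · fun_prop
      · positivity
    have h2 := this.tendsto.mono_left (nhdsWithin_le_nhds (s := Ioi (0:ℝ)))
    simpa using h2
  refine tendsto_of_tendsto_of_tendsto_of_le_of_le' hl tendsto_const_nhds ?_ ?_
  · filter_upwards [self_mem_nhdsWithin] with x hx
    have hx : 0 < x := hx
    rw [le_div_iff₀ (by positivity)]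
    have h : ∫ s in (0:ℝ)..x, s ^ 4 / Real.sqrt (C + x ^ 2)
        ≤ ∫ s in (0:ℝ)..x, s ^ 4 / Real.sqrt (C + s ^ 2) := by
      apply intervalIntegral.integral_mono_on hx.le
      · exact Continuous.intervalIntegrable (by fun_prop) _ _
      · exact hc.intervalIntegrable _ _
      · intro s hs
        have := hs.1
        have := hs.2
        gcongr
    refine le_trans (le_of_eq ?_) h
    rw [intervalIntegral.integral_div, integral_pow]
    have : Real.sqrt (C + x ^ 2) ≠ 0 := by positivity
    field_simp
    norm_num
    ring
  · filter_upwards [self_mem_nhdsWithin] with x hx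
    have hx : 0 < x := hx
    rw [div_le_iff₀ (by positivity)]
    have h : ∫ s in (0:ℝ)..x, s ^ 4 / Real.sqrt (C + s ^ 2)
        ≤ ∫ s in (0:ℝ)..x, s ^ 4 / Real.sqrt C := by
      apply intervalIntegral.integral_mono_on hx.le
      · exact hc.intervalIntegrable _ _
      · exact Continuous.intervalIntegrable (by fun_prop) _ _
      · intro s hs
        gcongr
        nlinarith
    refine le_trans h (le_of_eq ?_)
    rw [intervalIntegral.integral_div, integral_pow]
    have : Real.sqrt C ≠ 0 := by positivity
    field_simp
    norm_num
    ring

lemma wd_G_top (C : ℝ) (hC : 0 < C) :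
    Tendsto (fun x : ℝ => (∫ s in (0:ℝ)..x, s ^ 4 / Real.sqrt (C + s ^ 2)) / x ^ 4)
      atTop (nhds (1 / 4)) := by
  have hc := (wd_g_contDiff C hC).continuous
  have hl : Tendsto (fun x : ℝ => 1 / 4 - (Real.sqrt C / 3) * x⁻¹) atTop (nhds (1 / 4)) := by
    have h2 := (tendsto_const_nhds (x := (1/4 : ℝ))).sub
      ((tendsto_const_nhds (x := Real.sqrt C / 3)).mul (tendsto_inv_atTop_zero (𝕜 := ℝ)))
    simpa using h2
  refine tendsto_of_tendsto_of_tendsto_of_le_of_le' hl tendsto_const_nhds ?_ ?_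
  · filter_upwards [eventually_gt_atTop 0] with x hx
    rw [le_div_iff₀ (by positivity)]
    have h : ∫ s in (0:ℝ)..x, (s ^ 3 - Real.sqrt C * s ^ 2)
        ≤ ∫ s in (0:ℝ)..x, s ^ 4 / Real.sqrt (C + s ^ 2) := by
      apply intervalIntegral.integral_mono_on hx.le
      · exact Continuous.intervalIntegrable (by fun_prop) _ _
      · exact hc.intervalIntegrable _ _
      · intro s hs
        have hs0 := hs.1
        have hq : Real.sqrt (C + s ^ 2) ≤ Real.sqrt C + s := by
          apply Real.sqrt_le_iff.2
          refine ⟨by positivity, ?_⟩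
          nlinarith [Real.sq_sqrt hC.le, Real.sqrt_nonneg C, mul_nonneg (Real.sqrt_nonneg C) hs0]
        refine le_trans ?_ (div_le_div_of_nonneg_left (by positivity) (by positivity) hq)
        have : 0 < Real.sqrt C := by positivity
        rw [le_div_iff₀ (by positivity)]
        have : 0 ≤ (Real.sqrt C * s) ^ 2 := by positivity
        nlinarith
    refine le_trans (le_of_eq ?_) h
    rw [intervalIntegral.integral_sub (Continuous.intervalIntegrable (by fun_prop) _ _)
      (Continuous.intervalIntegrable (by fun_prop) _ _),
      intervalIntegral.integral_const_mul, integral_pow, integral_pow]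
    field_simp
    norm_num
    ring
  · filter_upwards [eventually_gt_atTop 0] with x hx
    rw [div_le_iff₀ (by positivity)]
    have h : ∫ s in (0:ℝ)..x, s ^ 4 / Real.sqrt (C + s ^ 2)
        ≤ ∫ s in (0:ℝ)..x, s ^ 3 := by
      apply intervalIntegral.integral_mono_on hx.le
      · exact hc.intervalIntegrable _ _
      · exact Continuous.intervalIntegrable (by fun_prop) _ _
      · intro s hs
        have hs0 := hs.1
        have hq : s ≤ Real.sqrt (C + s ^ 2) := Real.le_sqrt_of_sq_le (by linarith)
        rw [div_le_iff₀ (by positivity)]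
        calc s ^ 4 = s ^ 3 * s := by ring
          _ ≤ _ := by gcongr
    refine le_trans h (le_of_eq ?_)
    rw [integral_pow]
    norm_num
    ring

theorem white_dwarf_pressure
    (C₁ C₂ C₃ : ℝ) (hC₁ : 0 < C₁) (hC₂ : 0 < C₂) (hC₃ : 0 < C₃)
    (P : ℝ → ℝ)
    (hP : ∀ ρ : ℝ, 0 ≤ ρ →
      P ρ = C₁ * ∫ s in (0:ℝ)..(C₂ * ρ ^ ((1:ℝ)/3)), s ^ 4 / Real.sqrt (C₃ + s ^ 2)) :
    ContDiffOn ℝ (⊤ : ℕ∞) P (Ioi 0) ∧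
    (∀ ρ : ℝ, 0 < ρ →
      deriv P ρ = C₁ * C₂ ^ 5 / 3 * ρ ^ ((2:ℝ)/3) * (C₃ + C₂ ^ 2 * ρ ^ ((2:ℝ)/3)) ^ (-(1:ℝ)/2) ∧
      0 < deriv P ρ ∧
      0 < 2 * deriv P ρ + ρ * deriv (deriv P) ρ) ∧
    Tendsto (fun ρ : ℝ => P ρ / ρ ^ ((5:ℝ)/3)) (nhdsWithin 0 (Ioi 0))
      (nhds (C₁ * C₂ ^ 5 / (5 * Real.sqrt C₃))) ∧
    Tendsto (fun ρ : ℝ => P ρ / ρ ^ ((4:ℝ)/3)) atTop (nhds (C₁ * C₂ ^ 4 / 4)) := by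
  have hpow : ∀ ρ : ℝ, 0 < ρ → ∀ n : ℕ, (ρ ^ ((1:ℝ)/3)) ^ n = ρ ^ ((n:ℝ)/3) := by
    intro ρ hρ n
    rw [← Real.rpow_natCast, ← Real.rpow_mul hρ.le]
    congr 1; ring
  have hd : ∀ ρ : ℝ, 0 < ρ → deriv P ρ =
      C₁ * C₂ ^ 5 / 3 * ρ ^ ((2:ℝ)/3) * (C₃ + C₂ ^ 2 * ρ ^ ((2:ℝ)/3)) ^ (-(1:ℝ)/2) := by
    intro ρ hρ
    have h1 : HasDerivAt (fun ρ : ℝ => C₂ * ρ ^ ((1:ℝ)/3))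
        (C₂ * ((1:ℝ)/3 * ρ ^ ((1:ℝ)/3 - 1))) ρ :=
      (Real.hasDerivAt_rpow_const (Or.inl hρ.ne')).const_mul C₂
    have h2 := ((wd_G_hasDerivAt C₃ hC₃ (C₂ * ρ ^ ((1:ℝ)/3))).comp ρ h1).const_mul C₁
    have h3 : P =ᶠ[nhds ρ] (fun ρ : ℝ => C₁ *
        ((fun x : ℝ => ∫ s in (0:ℝ)..x, s ^ 4 / Real.sqrt (C₃ + s ^ 2)) ∘
          (fun ρ : ℝ => C₂ * ρ ^ ((1:ℝ)/3))) ρ) := by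
      filter_upwards [lt_mem_nhds hρ] with y hy
      exact hP y (le_of_lt hy)
    rw [h3.deriv_eq, h2.deriv]
    have e2 : (C₂ * ρ ^ ((1:ℝ)/3)) ^ 2 = C₂ ^ 2 * ρ ^ ((2:ℝ)/3) := by
      rw [mul_pow, hpow ρ hρ 2]; norm_num
    have e4 : (C₂ * ρ ^ ((1:ℝ)/3)) ^ 4 = C₂ ^ 4 * ρ ^ ((4:ℝ)/3) := by
      rw [mul_pow, hpow ρ hρ 4]; norm_num
    have e : ρ ^ ((4:ℝ)/3) * ρ ^ ((1:ℝ)/3 - 1) = ρ ^ ((2:ℝ)/3) := by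
      rw [← Real.rpow_add hρ]; norm_num
    have hD : 0 < C₃ + C₂ ^ 2 * ρ ^ ((2:ℝ)/3) := by positivity
    rw [e2, e4, neg_div, Real.rpow_neg hD.le, Real.sqrt_eq_rpow, ← e]
    ring
  refine ⟨?_, ?_, ?_, ?_⟩
  · have h : ContDiffOn ℝ (⊤ : ℕ∞) (fun ρ : ℝ => C₁ *
        ((fun x : ℝ => ∫ s in (0:ℝ)..x, s ^ 4 / Real.sqrt (C₃ + s ^ 2)) ∘
          (fun ρ : ℝ => C₂ * ρ ^ ((1:ℝ)/3))) ρ) (Ioi 0) := by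
      apply contDiffOn_const.mul
      apply (wd_G_contDiff C₃ hC₃).comp_contDiffOn
      apply contDiffOn_const.mul
      exact contDiffOn_id.rpow_const_of_ne (fun x hx => ne_of_gt hx)
    exact h.congr (fun y hy => hP y (le_of_lt hy))
  · intro ρ hρ
    have hD : 0 < C₃ + C₂ ^ 2 * ρ ^ ((2:ℝ)/3) := by positivity
    have hpos : 0 < deriv P ρ := by rw [hd ρ hρ]; positivity
    refine ⟨hd ρ hρ, hpos, ?_⟩
    have h3 : deriv P =ᶠ[nhds ρ] (fun ρ : ℝ => C₁ * C₂ ^ 5 / 3 * ρ ^ ((2:ℝ)/3) *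
        (C₃ + C₂ ^ 2 * ρ ^ ((2:ℝ)/3)) ^ (-(1:ℝ)/2)) := by
      filter_upwards [lt_mem_nhds hρ] with y hy
      exact hd y hy
    have h1 : HasDerivAt (fun ρ : ℝ => ρ ^ ((2:ℝ)/3))
        ((2:ℝ)/3 * ρ ^ ((2:ℝ)/3 - 1)) ρ :=
      Real.hasDerivAt_rpow_const (Or.inl hρ.ne')
    have h4 := (h1.const_mul (C₁ * C₂ ^ 5 / 3)).mul
      (((h1.const_mul (C₂ ^ 2)).const_add C₃).rpow_const (p := -(1:ℝ)/2) (Or.inl hD.ne'))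
    have h5 := h3.deriv_eq.trans h4.deriv
    rw [h5, hd ρ hρ]
    have e1 : ρ ^ ((2:ℝ)/3 - 1) = ρ ^ ((2:ℝ)/3) / ρ := Real.rpow_sub_one hρ.ne' _
    have e2 := Real.rpow_sub_one hD.ne' (-(1:ℝ)/2)
    rw [e1, e2]
    have hR : 0 < ρ ^ ((2:ℝ)/3) := by positivity
    have hE : 0 < (C₃ + C₂ ^ 2 * ρ ^ ((2:ℝ)/3)) ^ (-(1:ℝ)/2) := by positivity
    generalize (C₃ + C₂ ^ 2 * ρ ^ ((2:ℝ)/3)) ^ (-(1:ℝ)/2) = E at *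
    generalize ρ ^ ((2:ℝ)/3) = R at *
    have : 0 < C₁ * C₂ ^ 5 / 9 * R * E * (8 * C₃ + 7 * C₂ ^ 2 * R) / (C₃ + C₂ ^ 2 * R) := by
      positivity
    convert this using 1
    field_simp
    ring
  · have hx : Tendsto (fun ρ : ℝ => C₂ * ρ ^ ((1:ℝ)/3)) (nhdsWithin 0 (Ioi 0))
        (nhdsWithin 0 (Ioi 0)) := by
      apply tendsto_nhdsWithin_of_tendsto_nhds_of_eventually_within
      · have : ContinuousAt (fun ρ : ℝ => C₂ * ρ ^ ((1:ℝ)/3)) 0 :=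
          continuousAt_const.mul (Real.continuousAt_rpow_const _ _ (Or.inr (by norm_num)))
        have h2 := this.tendsto.mono_left (nhdsWithin_le_nhds (s := Ioi (0:ℝ)))
        simpa using h2
      · filter_upwards [self_mem_nhdsWithin] with y hy
        have hy : 0 < y := hy
        rw [mem_Ioi]
        positivity
    have h := ((wd_G_zero C₃ hC₃).comp hx).const_mul (C₁ * C₂ ^ 5)
    rw [mul_one_div] at h
    refine h.congr' ?_
    filter_upwards [self_mem_nhdsWithin] with y hy
    have hy : 0 < y := hy
    have e5 : (C₂ * y ^ ((1:ℝ)/3)) ^ 5 = C₂ ^ 5 * y ^ ((5:ℝ)/3) := by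
      rw [mul_pow, hpow y hy 5]; norm_num
    rw [hP y hy.le, Function.comp_apply, e5]
    field_simp
  · have hx : Tendsto (fun ρ : ℝ => C₂ * ρ ^ ((1:ℝ)/3)) atTop atTop :=
      (tendsto_rpow_atTop (by norm_num)).const_mul_atTop hC₂
    have h := ((wd_G_top C₃ hC₃).comp hx).const_mul (C₁ * C₂ ^ 4)
    rw [mul_one_div] at h
    refine h.congr' ?_
    filter_upwards [eventually_gt_atTop 0] with y hy
    have e5 : (C₂ * y ^ ((1:ℝ)/3)) ^ 4 = C₂ ^ 4 * y ^ ((4:ℝ)/3) := by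
      rw [mul_pow, hpow y hy 4]; norm_num
    rw [hP y hy.le, Function.comp_apply, e5]
    field_simp
end

section
/- Let δ > 0 and ε₀ ∈ (0, 4/5). Define P_δ(ρ) = ∫₀^{ρ^{1/3}} s⁴/√(δ + s^{2+ε₀}) ds for ρ > 0, set γ₂ = 4/3 − ε₀/6, let e_δ(ρ) = ∫₀^ρ P_δ(s)/s² ds (the integral converges), and let h_δ(ρ) = P_δ(ρ)/ρ − (γ₂−1) e_δ(ρ). Then for every ρ > 0 one has the identity ρ P_δ''(ρ) − (γ₂−1) P_δ'(ρ) = ((2+ε₀)/18) δ ρ^{2/3} (δ + ρ^{(2+ε₀)/3})^{−3/2} > 0, and consequently h_δ'(ρ) > 0 for all ρ > 0. -/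
open Set MeasureTheory Filter

lemma aux_cont (δ ε : ℝ) (hδ : 0 < δ) (hε : 0 < ε) :
    Continuous (fun s : ℝ => s ^ 4 / Real.sqrt (δ + |s| ^ (2 + ε))) := by
  have h1 : Continuous (fun s : ℝ => |s| ^ (2 + ε)) :=
    continuous_abs.rpow_const (fun _ => Or.inr (by linarith))
  refine (continuous_pow 4).div (continuous_const.add h1).sqrt ?_
  intro s
  have : 0 ≤ |s| ^ (2 + ε) := by positivity
  exact (Real.sqrt_pos.mpr (by linarith)).ne'

lemma aux_deriv1_s10 (δ ε : ℝ) (hδ : 0 < δ) (hε : 0 < ε) (ρ : ℝ) (hρ : 0 < ρ) :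
    HasDerivAt (fun r : ℝ => ∫ s in (0:ℝ)..(r ^ ((1:ℝ)/3)), s ^ 4 / Real.sqrt (δ + |s| ^ (2 + ε)))
      (1/3 * ρ ^ ((2:ℝ)/3) * (δ + ρ ^ ((2+ε)/3)) ^ (-(1:ℝ)/2)) ρ := by
  have hc := aux_cont δ ε hδ hε
  have h1 := (hc.integral_hasStrictDerivAt 0 (ρ ^ ((1:ℝ)/3))).hasDerivAt
  have h2 := Real.hasDerivAt_rpow_const (p := (1:ℝ)/3) (Or.inl hρ.ne')
  have h3 := h1.comp ρ h2
  refine h3.congr_deriv ?_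
  have hD : 0 < δ + ρ ^ ((2+ε)/3) := by positivity
  have e1 : |ρ ^ ((1:ℝ)/3)| ^ (2 + ε) = ρ ^ ((2+ε)/3) := by
    rw [abs_of_nonneg (by positivity), ← Real.rpow_mul hρ.le]; congr 1; ring
  have e2 : (ρ ^ ((1:ℝ)/3)) ^ 4 = ρ ^ ((4:ℝ)/3) := by
    rw [← Real.rpow_natCast, ← Real.rpow_mul hρ.le]; norm_num
  have e3 : ρ ^ ((2:ℝ)/3) = ρ ^ ((4:ℝ)/3) * ρ ^ ((1:ℝ)/3 - 1) := by
    rw [← Real.rpow_add hρ]; norm_num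
  have e4 : (δ + ρ ^ ((2+ε)/3)) ^ (-(1:ℝ)/2) = (Real.sqrt (δ + ρ ^ ((2+ε)/3)))⁻¹ := by
    rw [Real.sqrt_eq_rpow, ← Real.rpow_neg hD.le]; norm_num
  rw [e1, e2, e3, e4, div_eq_mul_inv]; ring

lemma aux_deriv2 (δ ε : ℝ) (hδ : 0 < δ) (ρ : ℝ) (hρ : 0 < ρ) :
    ∃ P2 : ℝ, HasDerivAt (fun r : ℝ => 1/3 * r ^ ((2:ℝ)/3) * (δ + r ^ ((2+ε)/3)) ^ (-(1:ℝ)/2)) P2 ρ ∧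
      ρ * P2 - ((4:ℝ)/3 - ε/6 - 1) * (1/3 * ρ ^ ((2:ℝ)/3) * (δ + ρ ^ ((2+ε)/3)) ^ (-(1:ℝ)/2))
       = (2 + ε) / 18 * δ * ρ ^ ((2:ℝ)/3) * (δ + ρ ^ ((2 + ε)/3)) ^ (-(3:ℝ)/2) := by
  have hD : 0 < δ + ρ ^ ((2+ε)/3) := by positivity
  have h2 := Real.hasDerivAt_rpow_const (p := (2:ℝ)/3) (Or.inl hρ.ne')
  have h3 := Real.hasDerivAt_rpow_const (p := (2+ε)/3) (Or.inl hρ.ne')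
  have h4 := (h3.const_add δ).rpow_const (p := -(1:ℝ)/2) (Or.inl hD.ne')
  refine ⟨_, (h2.const_mul (1/3)).mul h4, ?_⟩
  have e1 : ρ ^ ((2:ℝ)/3 - 1) = ρ ^ ((2:ℝ)/3) / ρ := by rw [Real.rpow_sub_one hρ.ne']
  have e2 : ρ ^ ((2+ε)/3 - 1) = ρ ^ ((2+ε)/3) / ρ := by rw [Real.rpow_sub_one hρ.ne']
  have e3 : (-(1:ℝ)/2 - 1) = -(3:ℝ)/2 := by norm_num
  have e4 : (δ + ρ ^ ((2+ε)/3)) ^ (-(1:ℝ)/2)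
      = (δ + ρ ^ ((2+ε)/3)) ^ (-(3:ℝ)/2) * (δ + ρ ^ ((2+ε)/3)) := by
    rw [← Real.rpow_add_one hD.ne']; norm_num
  rw [e1, e2, e3, e4]
  field_simp
  ring

theorem example_pressure_h_increasing
    (δ ε₀ : ℝ) (hδ : 0 < δ) (hε₀ : 0 < ε₀) (hε₀' : ε₀ < 4/5)
    (Pδ : ℝ → ℝ)
    (hPδ : ∀ ρ : ℝ, 0 < ρ →
      Pδ ρ = ∫ s in (0:ℝ)..(ρ ^ ((1:ℝ)/3)), s ^ 4 / Real.sqrt (δ + s ^ (2 + ε₀))) :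
    (∀ ρ : ℝ, 0 < ρ → IntervalIntegrable (fun s => Pδ s / s ^ 2) volume 0 ρ) ∧
    ∀ eδ : ℝ → ℝ, (∀ ρ : ℝ, eδ ρ = ∫ s in (0:ℝ)..ρ, Pδ s / s ^ 2) →
    ∀ hδfun : ℝ → ℝ,
      (∀ ρ : ℝ, 0 < ρ → hδfun ρ = Pδ ρ / ρ - ((4:ℝ)/3 - ε₀/6 - 1) * eδ ρ) →
      ∀ ρ : ℝ, 0 < ρ →
        (ρ * deriv (deriv Pδ) ρ - ((4:ℝ)/3 - ε₀/6 - 1) * deriv Pδ ρ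
          = (2 + ε₀) / 18 * δ * ρ ^ ((2:ℝ)/3) * (δ + ρ ^ ((2 + ε₀)/3)) ^ (-(3:ℝ)/2)) ∧
        0 < ρ * deriv (deriv Pδ) ρ - ((4:ℝ)/3 - ε₀/6 - 1) * deriv Pδ ρ ∧
        0 < deriv hδfun ρ := by
  have hc := aux_cont δ ε₀ hδ hε₀
  have hP : ∀ ρ : ℝ, 0 < ρ → Pδ ρ =
      ∫ s in (0:ℝ)..(ρ ^ ((1:ℝ)/3)), s ^ 4 / Real.sqrt (δ + |s| ^ (2 + ε₀)) := by
    intro ρ hρ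
    rw [hPδ ρ hρ]
    refine intervalIntegral.integral_congr ?_
    intro s hs
    rw [uIcc_of_le (by positivity)] at hs
    simp only [abs_of_nonneg hs.1]
  have hd1 : ∀ ρ : ℝ, 0 < ρ → HasDerivAt Pδ
      (1/3 * ρ ^ ((2:ℝ)/3) * (δ + ρ ^ ((2+ε₀)/3)) ^ (-(1:ℝ)/2)) ρ := by
    intro ρ hρ
    refine (aux_deriv1_s10 δ ε₀ hδ hε₀ ρ hρ).congr_of_eventuallyEq ?_
    filter_upwards [lt_mem_nhds hρ] with r hr using hP r hr
  have hcont : ContinuousOn (fun s => Pδ s / s ^ 2) (Ioi 0) := by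
    intro s hs
    have hs' : (0:ℝ) < s := hs
    exact ((hd1 s hs).continuousAt.div (continuous_pow 2).continuousAt
      (by positivity)).continuousWithinAt
  have hbound : ∀ s : ℝ, 0 < s → ‖Pδ s / s ^ 2‖ ≤ (Real.sqrt δ)⁻¹ * s ^ (-(1:ℝ)/3) := by
    intro s hs
    have hx : 0 < s ^ ((1:ℝ)/3) := by positivity
    have hb : ‖Pδ s‖ ≤ (s ^ ((1:ℝ)/3)) ^ 4 / Real.sqrt δ * |s ^ ((1:ℝ)/3) - 0| := by
      rw [hP s hs]
      refine intervalIntegral.norm_integral_le_of_norm_le_const ?_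
      intro t ht
      rw [uIoc_of_le hx.le] at ht
      have ht0 := ht.1
      have : 0 ≤ |t| ^ (2 + ε₀) := by positivity
      rw [Real.norm_of_nonneg (by positivity)]
      have hsq : 0 < Real.sqrt δ := Real.sqrt_pos.mpr hδ
      have := ht.2
      gcongr
      linarith
    rw [sub_zero, abs_of_pos hx] at hb
    rw [norm_div, Real.norm_of_nonneg (by positivity : 0 ≤ s ^ 2), div_le_iff₀ (by positivity)]
    refine hb.trans (le_of_eq ?_)
    have e1 : (s ^ ((1:ℝ)/3)) ^ 4 * s ^ ((1:ℝ)/3) = s ^ (-(1:ℝ)/3) * s ^ 2 := by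
      rw [← pow_succ, ← Real.rpow_natCast, ← Real.rpow_mul hs.le, ← Real.rpow_natCast s 2,
        ← Real.rpow_add hs]
      norm_num
    rw [mul_assoc, ← e1]
    ring
  have hint : ∀ ρ : ℝ, 0 < ρ → IntervalIntegrable (fun s => Pδ s / s ^ 2) volume 0 ρ := by
    intro ρ hρ
    have hg : IntervalIntegrable (fun s : ℝ => (Real.sqrt δ)⁻¹ * s ^ (-(1:ℝ)/3)) volume 0 ρ :=
      (intervalIntegral.intervalIntegrable_rpow' (by norm_num)).const_mul _
    refine hg.mono_fun' ?_ ?_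
    · rw [uIoc_of_le hρ.le]
      exact (hcont.mono (fun x hx => hx.1)).aestronglyMeasurable measurableSet_Ioc
    · rw [uIoc_of_le hρ.le]
      filter_upwards [ae_restrict_mem measurableSet_Ioc] with s hs using hbound s hs.1
  refine ⟨hint, ?_⟩
  intro eδ he h hh ρ hρ
  have hderiv : ∀ r : ℝ, 0 < r → deriv Pδ r
      = 1/3 * r ^ ((2:ℝ)/3) * (δ + r ^ ((2+ε₀)/3)) ^ (-(1:ℝ)/2) := fun r hr => (hd1 r hr).deriv
  have hid : ρ * deriv (deriv Pδ) ρ - ((4:ℝ)/3 - ε₀/6 - 1) * deriv Pδ ρ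
      = (2 + ε₀) / 18 * δ * ρ ^ ((2:ℝ)/3) * (δ + ρ ^ ((2 + ε₀)/3)) ^ (-(3:ℝ)/2) := by
    obtain ⟨P2, h2, h3⟩ := aux_deriv2 δ ε₀ hδ ρ hρ
    have : HasDerivAt (deriv Pδ) P2 ρ := by
      refine h2.congr_of_eventuallyEq ?_
      filter_upwards [lt_mem_nhds hρ] with r hr using hderiv r hr
    rw [this.deriv, hderiv ρ hρ, h3]
  refine ⟨hid, ?_, ?_⟩
  · rw [hid]; positivity
  -- the function Q = ρ P' - γ P vanishes at zero and is strictly increasing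
  let p : ℝ → ℝ := fun r => 1/3 * r ^ ((2:ℝ)/3) * (δ + r ^ ((2+ε₀)/3)) ^ (-(1:ℝ)/2)
  let F : ℝ → ℝ := fun r =>
    ∫ s in (0:ℝ)..(r ^ ((1:ℝ)/3)), s ^ 4 / Real.sqrt (δ + |s| ^ (2 + ε₀))
  let Q : ℝ → ℝ := fun r => r * p r - (4/3 - ε₀/6) * F r
  have hFc : Continuous F := by
    have h1 : Continuous (fun x : ℝ => ∫ s in (0:ℝ)..x, s ^ 4 / Real.sqrt (δ + |s| ^ (2 + ε₀))) :=
      intervalIntegral.continuous_primitive (fun a b => hc.intervalIntegrable a b) 0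
    exact h1.comp (Real.continuous_rpow_const (by norm_num))
  have hpc : ContinuousOn p (Ici 0) := by
    have c1 : Continuous (fun r : ℝ => r ^ ((2:ℝ)/3)) := Real.continuous_rpow_const (by norm_num)
    have c2 : Continuous (fun r : ℝ => r ^ ((2+ε₀)/3)) :=
      Real.continuous_rpow_const (by positivity)
    refine (continuous_const.mul c1).continuousOn.mul
      ((continuous_const.add c2).continuousOn.rpow_const ?_)
    intro x hx
    have hx' : (0:ℝ) ≤ x := hx
    left
    have : 0 ≤ x ^ ((2+ε₀)/3) := by positivity
    exact (add_pos_of_pos_of_nonneg hδ this).ne'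
  have hQc : ContinuousOn Q (Ici 0) :=
    (continuousOn_id.mul hpc).sub (continuous_const.mul hFc).continuousOn
  have hmono : StrictMonoOn Q (Ici 0) := by
    refine strictMonoOn_of_deriv_pos (convex_Ici 0) hQc ?_
    intro r hr
    rw [interior_Ici] at hr
    have hr0 : (0:ℝ) < r := hr
    obtain ⟨P2, h2, h3⟩ := aux_deriv2 δ ε₀ hδ r hr0
    have hQ : HasDerivAt Q (1 * p r + r * P2 - (4/3 - ε₀/6) * p r) r :=
      ((hasDerivAt_id r).mul h2).sub ((aux_deriv1_s10 δ ε₀ hδ hε₀ r hr0).const_mul _)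
    rw [hQ.deriv]
    have h4 : 1 * p r + r * P2 - (4/3 - ε₀/6) * p r
        = (2 + ε₀) / 18 * δ * r ^ ((2:ℝ)/3) * (δ + r ^ ((2 + ε₀)/3)) ^ (-(3:ℝ)/2) := by
      rw [← h3]; simp only [p]; ring
    rw [h4]
    positivity
  have hQ0 : Q 0 = 0 := by
    simp [Q, F]
  have hQpos : 0 < Q ρ := by
    rw [← hQ0]
    exact hmono (mem_Ici.mpr le_rfl) (mem_Ici.mpr hρ.le) hρ
  have hed : HasDerivAt eδ (Pδ ρ / ρ ^ 2) ρ := by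
    have h1 : HasDerivAt (fun r => ∫ s in (0:ℝ)..r, Pδ s / s ^ 2) (Pδ ρ / ρ ^ 2) ρ :=
      intervalIntegral.integral_hasDerivAt_right (hint ρ hρ)
        (hcont.stronglyMeasurableAtFilter isOpen_Ioi ρ hρ)
        (hcont.continuousAt (Ioi_mem_nhds hρ))
    rwa [← (funext he : eδ = fun r => ∫ s in (0:ℝ)..r, Pδ s / s ^ 2)] at h1
  have hhd : HasDerivAt h ((p ρ * ρ - Pδ ρ * 1) / ρ ^ 2
      - ((4:ℝ)/3 - ε₀/6 - 1) * (Pδ ρ / ρ ^ 2)) ρ := by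
    refine (((hd1 ρ hρ).div (hasDerivAt_id ρ) hρ.ne').sub (hed.const_mul _)).congr_of_eventuallyEq ?_
    filter_upwards [lt_mem_nhds hρ] with r hr using hh r hr
  rw [hhd.deriv]
  have h5 : (p ρ * ρ - Pδ ρ * 1) / ρ ^ 2 - ((4:ℝ)/3 - ε₀/6 - 1) * (Pδ ρ / ρ ^ 2)
      = Q ρ / ρ ^ 2 := by
    have : F ρ = Pδ ρ := (hP ρ hρ).symm
    simp only [Q, this]
    ring
  rw [h5]
  positivity
end

section
/- Let 0 < θ₂ < 1, θ ≥ 0, ε > 0, ρ^* > 1, and let C, C₀, D be positive constants. Let d : (0,∞) → ℝ be a measurable function with 0 < d(s) ≤ D for all s > 0 and |d(r) − (1+θ₂)| ≤ C₀ r^{−ε} for all r ≥ ρ^*. Let x : (0,∞) → [0,∞) be measurable and locally integrable, and suppose x(t) ≤ C t^{θ} + t^{−1} ∫₀^t d(s) x(s) ds for all t ≥ ρ^*. Then there exists a constant C̃ > 0, independent of t, such that for all t ≥ ρ^*: x(t) ≤ C̃ t^{θ₂} if 0 ≤ θ < θ₂; x(t) ≤ C̃ t^{θ₂} ln t if θ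 = θ₂; and x(t) ≤ C̃ t^{θ} if θ > θ₂. -/
open Set MeasureTheory Filter

/-- Core estimate: with `W` a primitive of `t ^ (θ - θ₂ - 1)`. -/
theorem gronwall_core
    (θ₂ θ εe ρs C C₀ D : ℝ)
    (hθ₂ : 0 < θ₂) (hεe : 0 < εe) (hρs : 1 < ρs)
    (hC : 0 < C) (hC₀ : 0 < C₀)
    (d x : ℝ → ℝ)
    (hd_meas : Measurable d)
    (hd_pos : ∀ s : ℝ, 0 < s → 0 < d s ∧ d s ≤ D)
    (hd_asymp : ∀ r : ℝ, ρs ≤ r → |d r - (1 + θ₂)| ≤ C₀ * r ^ (-εe))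
    (hx_nn : ∀ t : ℝ, 0 < t → 0 ≤ x t)
    (hx_int : ∀ t : ℝ, 0 < t → IntervalIntegrable x volume 0 t)
    (hx_ineq : ∀ t : ℝ, ρs ≤ t → x t ≤ C * t ^ θ + t⁻¹ * ∫ s in (0:ℝ)..t, d s * x s)
    (W : ℝ → ℝ) (hW : ∀ t : ℝ, 0 < t → HasDerivAt W (t ^ (θ - θ₂ - 1)) t) :
    ∃ A B : ℝ, 0 ≤ A ∧ 0 ≤ B ∧ ∀ t : ℝ, ρs ≤ t →
      x t ≤ C * t ^ θ + t ^ θ₂ * (A + B * (W t - W ρs)) := by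
  have hρ0 : 0 < ρs := by linarith
  have hint : ∀ t : ℝ, 0 < t → IntervalIntegrable (fun s => d s * x s) volume 0 t := by
    intro t ht
    have h := hx_int t ht
    rw [intervalIntegrable_iff_integrableOn_Ioc_of_le ht.le] at h ⊢
    refine Integrable.bdd_mul (c := D) h hd_meas.aestronglyMeasurable ?_
    refine (ae_restrict_iff' measurableSet_Ioc).2 (Eventually.of_forall ?_)
    intro s hs
    have := hd_pos s hs.1
    rw [Real.norm_eq_abs, abs_of_pos this.1]
    exact this.2
  set y : ℝ → ℝ := fun t => ∫ s in (0:ℝ)..t, d s * x s with hy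
  have hycont : ContinuousOn y (Ioi 0) := by
    intro t ht
    have ht' : (0:ℝ) < t := ht
    have h1 : (0:ℝ) ≤ t + 1 := by linarith
    have h := intervalIntegral.continuousOn_primitive_interval' (hint (t+1) (by linarith))
      (left_mem_uIcc)
    rw [uIcc_of_le h1] at h
    exact (h.continuousAt (Icc_mem_nhds ht' (by linarith))).continuousWithinAt
  have hynn : ∀ t, 0 < t → 0 ≤ y t := by
    intro t ht
    refine intervalIntegral.integral_nonneg_of_ae_restrict ht.le ?_
    rw [← restrict_Ioc_eq_restrict_Icc]
    refine (ae_restrict_iff' measurableSet_Ioc).2 (Eventually.of_forall ?_)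
    intro s hs
    exact mul_nonneg (hd_pos s hs.1).1.le (hx_nn s hs.1)
  set b : ℝ → ℝ := fun s => 1 + θ₂ + C₀ * s ^ (-εe) with hb
  have hbpos : ∀ s, 0 < s → 0 < b s := fun s hs => by
    have := Real.rpow_pos_of_pos hs (-εe)
    simp only [hb]; positivity
  have hble : ∀ s, ρs ≤ s → b s ≤ 1 + θ₂ + C₀ := fun s hs => by
    have := Real.rpow_le_one_of_one_le_of_nonpos (x := s) (z := -εe) (by linarith) (by linarith)
    simp only [hb]; nlinarith
  have hdb : ∀ s, ρs ≤ s → d s ≤ b s := fun s hs => by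
    have := (abs_le.1 (hd_asymp s hs)).2
    simp only [hb]; linarith
  set f : ℝ → ℝ := fun s => b s * (C * s ^ θ + s⁻¹ * y s) with hf
  have hrp : ∀ p : ℝ, ContinuousOn (fun s : ℝ => s ^ p) (Ioi 0) := fun p s hs =>
    (Real.continuousAt_rpow_const s p (Or.inl (ne_of_gt hs))).continuousWithinAt
  have hfcont : ContinuousOn f (Ioi 0) := by
    have hinv : ContinuousOn (fun s : ℝ => s⁻¹) (Ioi 0) :=
      continuousOn_inv₀.mono (fun s hs => ne_of_gt hs)
    exact (continuousOn_const.add (continuousOn_const.mul (hrp _))).mul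
      ((continuousOn_const.mul (hrp _)).add (hinv.mul hycont))
  have hfint : ∀ t, 0 < t → IntervalIntegrable f volume ρs t := fun t ht =>
    (hfcont.mono (fun s hs => lt_of_lt_of_le (lt_min hρ0 ht) hs.1)).intervalIntegrable
  set z : ℝ → ℝ := fun t => y ρs + ∫ s in ρs..t, f s with hz
  have hzd : ∀ t, 0 < t → HasDerivAt z (f t) t := by
    intro t ht
    refine HasDerivAt.const_add _ ?_
    exact intervalIntegral.integral_hasDerivAt_right (hfint t ht)
      (hfcont.stronglyMeasurableAtFilter isOpen_Ioi t ht) (hfcont.continuousAt (Ioi_mem_nhds ht))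
  have hyz : ∀ t, ρs ≤ t → y t ≤ z t := by
    intro t ht
    have ht0 : 0 < t := by linarith
    have hi : IntervalIntegrable (fun s => d s * x s) volume ρs t :=
      (hint ρs hρ0).symm.trans (hint t ht0)
    have h1 : y t = y ρs + ∫ s in ρs..t, d s * x s :=
      (intervalIntegral.integral_add_adjacent_intervals (hint ρs hρ0) hi).symm
    rw [h1]
    refine add_le_add le_rfl ?_
    refine intervalIntegral.integral_mono_on ht hi (hfint t ht0) ?_
    intro s hs
    have hs0 : 0 < s := by linarith [hs.1]
    exact mul_le_mul (hdb s hs.1) (hx_ineq s hs.1) (hx_nn s hs0) (hbpos s hs0).le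
  set N : ℝ → ℝ := fun t => t ^ (-(1 + θ₂)) * Real.exp (C₀ / εe * t ^ (-εe)) with hN
  have hNd : ∀ t, 0 < t → HasDerivAt N (-(N t * (b t * t⁻¹))) t := by
    intro t ht
    have h1 := Real.hasDerivAt_rpow_const (x := t) (p := -(1 + θ₂)) (Or.inl ht.ne')
    have h2 := (((Real.hasDerivAt_rpow_const (x := t) (p := -εe)
      (Or.inl ht.ne')).const_mul (C₀ / εe)).exp)
    refine (h1.mul h2).congr_deriv ?_
    rw [Real.rpow_sub_one ht.ne', Real.rpow_sub_one ht.ne']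
    simp only [hN, hb]
    field_simp
    ring
  have hNlow : ∀ t, 0 < t → t ^ (-(1 + θ₂)) ≤ N t := by
    intro t ht
    have h0 := Real.rpow_pos_of_pos ht (-(1 + θ₂))
    have h1 := Real.rpow_pos_of_pos ht (-εe)
    exact le_mul_of_one_le_right h0.le (Real.one_le_exp (by positivity))
  have hNup : ∀ t, ρs ≤ t → N t ≤ t ^ (-(1 + θ₂)) * Real.exp (C₀ / εe) := by
    intro t ht
    have ht0 : 0 < t := by linarith
    have h0 := Real.rpow_pos_of_pos ht0 (-(1 + θ₂))
    have h1 := Real.rpow_le_one_of_one_le_of_nonpos (x := t) (z := -εe) (by linarith) (by linarith)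
    refine mul_le_mul_of_nonneg_left (Real.exp_le_exp.2 ?_) h0.le
    exact mul_le_of_le_one_right (by positivity) h1
  have hNpos : ∀ t, 0 < t → 0 < N t := fun t ht =>
    lt_of_lt_of_le (Real.rpow_pos_of_pos ht _) (hNlow t ht)
  set B : ℝ := Real.exp (C₀ / εe) * (1 + θ₂ + C₀) * C with hB
  have hB0 : 0 ≤ B := by positivity
  have hFd : ∀ t, 0 < t → HasDerivAt (fun t => z t * N t - B * W t)
      (f t * N t + z t * (-(N t * (b t * t⁻¹))) - B * t ^ (θ - θ₂ - 1)) t := fun t ht =>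
    ((hzd t ht).mul (hNd t ht)).sub ((hW t ht).const_mul B)
  have hanti : AntitoneOn (fun t => z t * N t - B * W t) (Ici ρs) := by
    refine antitoneOn_of_deriv_nonpos (convex_Ici ρs) ?_ ?_ ?_
    · intro t ht
      exact (hFd t (lt_of_lt_of_le hρ0 ht)).continuousAt.continuousWithinAt
    · intro t ht
      rw [interior_Ici] at ht
      exact (hFd t (lt_trans hρ0 ht)).differentiableAt.differentiableWithinAt
    · intro t ht
      rw [interior_Ici] at ht
      have ht1 : ρs ≤ t := le_of_lt ht
      have ht0 : 0 < t := by linarith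
      rw [(hFd t ht0).deriv]
      have e1 : f t * N t + z t * (-(N t * (b t * t⁻¹))) =
          N t * b t * (C * t ^ θ) - N t * b t * t⁻¹ * (z t - y t) := by
        simp only [hf]; ring
      have e2 : 0 ≤ N t * b t * t⁻¹ * (z t - y t) := by
        have := hNpos t ht0
        have := hbpos t ht0
        have := hyz t ht1
        exact mul_nonneg (by positivity) (by linarith)
      have e3 : N t * b t ≤ (t ^ (-(1 + θ₂)) * Real.exp (C₀ / εe)) * (1 + θ₂ + C₀) :=
        mul_le_mul (hNup t ht1) (hble t ht1) (hbpos t ht0).le (by positivity)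
      have e4 : N t * b t * (C * t ^ θ) ≤
          (t ^ (-(1 + θ₂)) * Real.exp (C₀ / εe)) * (1 + θ₂ + C₀) * (C * t ^ θ) :=
        mul_le_mul_of_nonneg_right e3 (by positivity)
      have e5 : t ^ (θ - θ₂ - 1) = t ^ (-(1 + θ₂)) * t ^ θ := by
        rw [← Real.rpow_add ht0]; congr 1; ring
      have e6 : (t ^ (-(1 + θ₂)) * Real.exp (C₀ / εe)) * (1 + θ₂ + C₀) * (C * t ^ θ)
          = B * t ^ (θ - θ₂ - 1) := by
        rw [e5, hB]; ring
      linarith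
  have hzρ : z ρs = y ρs := by simp [hz]
  refine ⟨z ρs * N ρs, B, ?_, hB0, ?_⟩
  · rw [hzρ]; exact mul_nonneg (hynn ρs hρ0) (hNpos ρs hρ0).le
  intro t ht
  have ht0 : 0 < t := by linarith
  have h1 : z t * N t - B * W t ≤ z ρs * N ρs - B * W ρs := hanti self_mem_Ici ht ht
  have hz0 : 0 ≤ z t := (hynn t ht0).trans (hyz t ht)
  have h2 : y t * t ^ (-(1 + θ₂)) ≤ z ρs * N ρs + B * (W t - W ρs) := by
    have := mul_le_mul (hyz t ht) (hNlow t ht0) (Real.rpow_pos_of_pos ht0 _).le hz0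
    linarith
  have h3 : t⁻¹ * y t = t ^ θ₂ * (y t * t ^ (-(1 + θ₂))) := by
    have : t⁻¹ = t ^ θ₂ * t ^ (-(1 + θ₂)) := by
      rw [← Real.rpow_add ht0, ← Real.rpow_neg_one]; congr 1; ring
    rw [this]; ring
  have h4 := mul_le_mul_of_nonneg_left h2 (Real.rpow_pos_of_pos ht0 θ₂).le
  have h5 : x t ≤ C * t ^ θ + t⁻¹ * y t := hx_ineq t ht
  linarith

theorem gronwall_variant
    (θ₂ θ εe ρs C C₀ D : ℝ)
    (hθ₂ : 0 < θ₂) (hθ₂1 : θ₂ < 1) (hθ : 0 ≤ θ) (hεe : 0 < εe) (hρs : 1 < ρs)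
    (hC : 0 < C) (hC₀ : 0 < C₀) (hD : 0 < D)
    (d x : ℝ → ℝ)
    (hd_meas : Measurable d)
    (hd_pos : ∀ s : ℝ, 0 < s → 0 < d s ∧ d s ≤ D)
    (hd_asymp : ∀ r : ℝ, ρs ≤ r → |d r - (1 + θ₂)| ≤ C₀ * r ^ (-εe))
    (hx_meas : Measurable x)
    (hx_nn : ∀ t : ℝ, 0 < t → 0 ≤ x t)
    (hx_int : ∀ t : ℝ, 0 < t → IntervalIntegrable x volume 0 t)
    (hx_ineq : ∀ t : ℝ, ρs ≤ t → x t ≤ C * t ^ θ + t⁻¹ * ∫ s in (0:ℝ)..t, d s * x s) :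
    ∃ Ct : ℝ, 0 < Ct ∧ ∀ t : ℝ, ρs ≤ t →
      (θ < θ₂ → x t ≤ Ct * t ^ θ₂) ∧
      (θ = θ₂ → x t ≤ Ct * t ^ θ₂ * Real.log t) ∧
      (θ₂ < θ → x t ≤ Ct * t ^ θ) := by
  have hρ0 : 0 < ρs := by linarith
  have core := gronwall_core θ₂ θ εe ρs C C₀ D hθ₂ hεe hρs hC hC₀ d x hd_meas hd_pos hd_asymp
    hx_nn hx_int hx_ineq
  have hpow : θ ≠ θ₂ → ∀ t : ℝ, 0 < t →
      HasDerivAt (fun t : ℝ => t ^ (θ - θ₂) / (θ - θ₂)) (t ^ (θ - θ₂ - 1)) t := by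
    intro hne t ht
    have hne' : θ - θ₂ ≠ 0 := sub_ne_zero.2 hne
    refine ((Real.hasDerivAt_rpow_const (x := t) (p := θ - θ₂)
      (Or.inl ht.ne')).div_const (θ - θ₂)).congr_deriv ?_
    field_simp
  rcases lt_trichotomy θ θ₂ with h | h | h
  · obtain ⟨A, B, hA, hB, hx⟩ := core _ (hpow h.ne)
    have hδ : 0 < θ₂ - θ := by linarith
    have hq : 0 < ρs ^ (θ - θ₂) / (θ₂ - θ) := div_pos (Real.rpow_pos_of_pos hρ0 _) hδ
    refine ⟨C + (A + B * (ρs ^ (θ - θ₂) / (θ₂ - θ))), by positivity, fun t ht =>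
      ⟨fun _ => ?_, fun h' => absurd h' h.ne, fun h' => absurd h' h.not_gt⟩⟩
    have ht0 : 0 < t := by linarith
    have h1 := hx t ht
    have h2 : t ^ θ ≤ t ^ θ₂ := Real.rpow_le_rpow_of_exponent_le (by linarith) h.le
    have h3 : 0 < t ^ (θ - θ₂) / (θ₂ - θ) := div_pos (Real.rpow_pos_of_pos ht0 _) hδ
    have e : ∀ u : ℝ, u / (θ - θ₂) = -(u / (θ₂ - θ)) := fun u => by
      rw [← neg_sub θ₂ θ, div_neg]
    simp only [e] at h1
    have h4 : t ^ θ₂ * (A + B * (-(t ^ (θ - θ₂) / (θ₂ - θ)) - -(ρs ^ (θ - θ₂) / (θ₂ - θ))))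
        ≤ t ^ θ₂ * (A + B * (ρs ^ (θ - θ₂) / (θ₂ - θ))) := by
      gcongr
      linarith
    have h5 := mul_le_mul_of_nonneg_left h2 hC.le
    linarith
  · obtain ⟨A, B, hA, hB, hx⟩ := core Real.log (fun t ht => by
      rw [h, sub_self, zero_sub, Real.rpow_neg_one]; exact Real.hasDerivAt_log ht.ne')
    have hl : 0 < Real.log ρs := Real.log_pos hρs
    refine ⟨(C + A) / Real.log ρs + B, by positivity, fun t ht =>
      ⟨fun h' => absurd h h'.ne, fun _ => ?_, fun h' => absurd h h'.ne'⟩⟩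
    have ht0 : 0 < t := by linarith
    have h1 := hx t ht
    rw [h] at h1
    have h2 : Real.log ρs ≤ Real.log t := Real.log_le_log hρ0 ht
    have h3 : C + A ≤ (C + A) / Real.log ρs * Real.log t := by
      rw [div_mul_eq_mul_div, le_div_iff₀ hl]
      exact mul_le_mul_of_nonneg_left h2 (by linarith)
    have h4 : C + A + B * (Real.log t - Real.log ρs) ≤
        ((C + A) / Real.log ρs + B) * Real.log t := by nlinarith
    have h5 := mul_le_mul_of_nonneg_left h4 (Real.rpow_pos_of_pos ht0 θ₂).le
    linarith
  · obtain ⟨A, B, hA, hB, hx⟩ := core _ (hpow h.ne')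
    have hδ : 0 < θ - θ₂ := by linarith
    refine ⟨C + A + B / (θ - θ₂), by positivity, fun t ht =>
      ⟨fun h' => absurd h' h.not_gt, fun h' => absurd h' h.ne', fun _ => ?_⟩⟩
    have ht0 : 0 < t := by linarith
    have h1 := hx t ht
    have h2 : t ^ θ₂ ≤ t ^ θ := Real.rpow_le_rpow_of_exponent_le (by linarith) h.le
    have h3 : 0 < ρs ^ (θ - θ₂) / (θ - θ₂) := div_pos (Real.rpow_pos_of_pos hρ0 _) hδ
    have h4 : t ^ θ₂ * (A + B * (t ^ (θ - θ₂) / (θ - θ₂) - ρs ^ (θ - θ₂) / (θ - θ₂)))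
        ≤ t ^ θ₂ * (A + B * (t ^ (θ - θ₂) / (θ - θ₂))) := by
      gcongr
      linarith
    have h5 : t ^ θ₂ * t ^ (θ - θ₂) = t ^ θ := by
      rw [← Real.rpow_add ht0]; congr 1; ring
    have h6 : t ^ θ₂ * (A + B * (t ^ (θ - θ₂) / (θ - θ₂))) =
        t ^ θ₂ * A + B / (θ - θ₂) * t ^ θ := by
      rw [← h5]; ring
    have h7 := mul_le_mul_of_nonneg_right h2 hA
    linarith
end

section
/- Let 0 < θ₂ < 1, θ > θ₂, ε > 0, ρ^* > 1, and let C, C₀, D be positive constants. Let d : (0,∞) → ℝ be a measurable function with 0 < d(s) ≤ D for all s > 0 and |d(r) − (1+θ₂)| ≤ C₀ r^{−ε} for all r ≥ ρ^*. Let x : (0,∞) → [0,∞) be measurable and locally integrable, and suppose x(t) ≤ C t^{θ} ln t + t^{−1} ∫₀^t d(s) x(s) ds for all t ≥ ρ^*. Then there exists a constant C̃ > 0, independent of t, such that x(t) ≤ C̃ t^{θ} ln t for all t ≥ ρ^*. -/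
open Set MeasureTheory Filter

theorem gronwall_variant_log
    (θ₂ θ εe ρs C C₀ D : ℝ)
    (hθ₂ : 0 < θ₂) (hθ₂1 : θ₂ < 1) (hθ : θ₂ < θ) (hεe : 0 < εe) (hρs : 1 < ρs)
    (hC : 0 < C) (hC₀ : 0 < C₀) (hD : 0 < D)
    (d x : ℝ → ℝ)
    (hd_meas : Measurable d)
    (hd_pos : ∀ s : ℝ, 0 < s → 0 < d s ∧ d s ≤ D)
    (hd_asymp : ∀ r : ℝ, ρs ≤ r → |d r - (1 + θ₂)| ≤ C₀ * r ^ (-εe))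
    (hx_meas : Measurable x)
    (hx_nn : ∀ t : ℝ, 0 < t → 0 ≤ x t)
    (hx_int : ∀ t : ℝ, 0 < t → IntervalIntegrable x volume 0 t)
    (hx_ineq : ∀ t : ℝ, ρs ≤ t →
      x t ≤ C * t ^ θ * Real.log t + t⁻¹ * ∫ s in (0:ℝ)..t, d s * x s) :
    ∃ Ct : ℝ, 0 < Ct ∧ ∀ t : ℝ, ρs ≤ t → x t ≤ Ct * t ^ θ * Real.log t := by
  -- choose `R` past which `d` is below `1 + (θ₂ + θ) / 2`
  obtain ⟨R, hR, hRd⟩ : ∃ R, ρs ≤ R ∧ ∀ s, R ≤ s → d s ≤ 1 + (θ₂ + θ) / 2 := by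
    have h1 : Tendsto (fun r : ℝ => C₀ * r ^ (-εe)) atTop (nhds (C₀ * 0)) :=
      (tendsto_rpow_neg_atTop hεe).const_mul C₀
    rw [mul_zero] at h1
    have h2 := h1.eventually (gt_mem_nhds (show (0:ℝ) < (θ - θ₂) / 2 by linarith))
    obtain ⟨R, hR⟩ := eventually_atTop.1 h2
    refine ⟨max R ρs, le_max_right _ _, fun s hs => ?_⟩
    have h3 := hR s (le_trans (le_max_left _ _) hs)
    have h4 := (abs_le.1 (hd_asymp s (le_trans (le_max_right _ _) hs))).2
    linarith
  have hR0 : 0 < R := by linarith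
  have hlog : 0 < Real.log ρs := Real.log_pos hρs
  have hθ0 : 0 < θ := by linarith
  -- integrability of the product
  have hdx : ∀ t : ℝ, 0 < t → IntervalIntegrable (fun s => d s * x s) volume 0 t := by
    intro t ht
    have h := (hx_int t ht).const_mul D
    rw [intervalIntegrable_iff_integrableOn_Ioc_of_le ht.le] at h ⊢
    refine Integrable.mono' h (hd_meas.mul hx_meas).aestronglyMeasurable ?_
    filter_upwards [ae_restrict_mem measurableSet_Ioc] with s hs
    have h1 := hd_pos s hs.1
    have h2 := hx_nn s hs.1
    rw [Real.norm_eq_abs, abs_of_nonneg (mul_nonneg h1.1.le h2)]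
    exact mul_le_mul_of_nonneg_right h1.2 h2
  have hI_nn : ∀ t : ℝ, 0 < t → 0 ≤ ∫ s in (0:ℝ)..t, d s * x s := by
    intro t ht
    rw [intervalIntegral.integral_of_le ht.le]
    refine setIntegral_nonneg measurableSet_Ioc fun s hs => ?_
    exact mul_nonneg (hd_pos s hs.1).1.le (hx_nn s hs.1)
  have hI_mono : ∀ t T : ℝ, 0 < t → t ≤ T →
      ∫ s in (0:ℝ)..t, d s * x s ≤ ∫ s in (0:ℝ)..T, d s * x s := by
    intro t T ht hT
    have hsub := intervalIntegral.integral_interval_sub_left (hdx T (ht.trans_le hT)) (hdx t ht)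
    have : 0 ≤ ∫ s in t..T, d s * x s := by
      rw [intervalIntegral.integral_of_le hT]
      refine setIntegral_nonneg measurableSet_Ioc fun s hs => ?_
      exact mul_nonneg (hd_pos s (ht.trans hs.1)).1.le (hx_nn s (ht.trans hs.1))
    linarith
  -- lower bound on the weight
  have hw : ∀ t, ρs ≤ t → Real.log ρs ≤ t ^ θ * Real.log t := by
    intro t ht
    have h1 : 1 ≤ t ^ θ := Real.one_le_rpow (by linarith) hθ0.le
    have h2 : Real.log ρs ≤ Real.log t := Real.log_le_log (by linarith) ht
    nlinarith
  -- crude bound on bounded intervals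
  have hcrude : ∀ T t, ρs ≤ t → t ≤ T →
      x t ≤ (C + (∫ s in (0:ℝ)..T, d s * x s) / Real.log ρs) * (t ^ θ * Real.log t) := by
    intro T t ht hT
    have ht0 : 0 < t := by linarith
    have h1 := hx_ineq t ht
    have h2 := hI_mono t T ht0 hT
    have h3 := hI_nn t ht0
    have h4 : t⁻¹ ≤ 1 := inv_le_one_of_one_le₀ (by linarith)
    have h5 : t⁻¹ * (∫ s in (0:ℝ)..t, d s * x s) ≤ ∫ s in (0:ℝ)..T, d s * x s := by
      nlinarith
    have h6 : (∫ s in (0:ℝ)..T, d s * x s) ≤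
        (∫ s in (0:ℝ)..T, d s * x s) / Real.log ρs * (t ^ θ * Real.log t) := by
      calc (∫ s in (0:ℝ)..T, d s * x s)
          = (∫ s in (0:ℝ)..T, d s * x s) / Real.log ρs * Real.log ρs := by
            field_simp
        _ ≤ _ := mul_le_mul_of_nonneg_left (hw t ht)
            (div_nonneg (h3.trans h2) hlog.le)
    linarith
  obtain ⟨A, hA⟩ : ∃ A, A = (∫ s in (0:ℝ)..R, d s * x s) / Real.log ρs := ⟨_, rfl⟩
  have hA0 : 0 ≤ A := by rw [hA]; exact div_nonneg (hI_nn R hR0) hlog.le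
  obtain ⟨q, hq⟩ : ∃ q, q = (1 + (θ₂ + θ) / 2) / (1 + θ) := ⟨_, rfl⟩
  have hq1 : q < 1 := by rw [hq, div_lt_one (by linarith)]; linarith
  have hq0 : 0 < q := by rw [hq]; apply div_pos <;> linarith
  -- improvement of bounds
  have himp : ∀ T S, 0 ≤ S → (∀ t, R ≤ t → t ≤ T → x t ≤ S * (t ^ θ * Real.log t)) →
      ∀ t, R ≤ t → t ≤ T → x t ≤ (C + A + q * S) * (t ^ θ * Real.log t) := by
    intro T S hS hb t ht hT
    have htρ : ρs ≤ t := hR.trans ht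
    have ht0 : 0 < t := by linarith
    have hlt : 0 < Real.log t := Real.log_pos (by linarith)
    have h1 := hx_ineq t htρ
    have hsub := intervalIntegral.integral_interval_sub_left (hdx t ht0) (hdx R hR0)
    have hmono : ∫ s in R..t, d s * x s ≤
        ∫ s in R..t, ((1 + (θ₂ + θ) / 2) * S * Real.log t) * s ^ θ := by
      refine intervalIntegral.integral_mono_on ht ((hdx R hR0).symm.trans (hdx t ht0)) ?_ ?_
      · exact (intervalIntegral.intervalIntegrable_rpow' (by linarith)).const_mul _
      · intro s hs
        have hs0 : 0 < s := by linarith [hs.1]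
        have hsθ : 0 ≤ s ^ θ := Real.rpow_nonneg hs0.le _
        have e1 := hb s hs.1 (hs.2.trans hT)
        have e2 : Real.log s ≤ Real.log t := Real.log_le_log hs0 hs.2
        have e3 : x s ≤ S * (s ^ θ * Real.log t) :=
          e1.trans (mul_le_mul_of_nonneg_left (mul_le_mul_of_nonneg_left e2 hsθ) hS)
        calc d s * x s ≤ (1 + (θ₂ + θ) / 2) * (S * (s ^ θ * Real.log t)) :=
              mul_le_mul (hRd s hs.1) e3 (hx_nn s hs0) (by linarith)
          _ = _ := by ring
    rw [intervalIntegral.integral_const_mul, integral_rpow (Or.inl (by linarith))] at hmono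
    have hRp : 0 ≤ R ^ (θ + 1) := Real.rpow_nonneg hR0.le _
    have h2 : ∫ s in R..t, d s * x s ≤ t * (q * S * (t ^ θ * Real.log t)) := by
      refine hmono.trans ?_
      calc (1 + (θ₂ + θ) / 2) * S * Real.log t * ((t ^ (θ + 1) - R ^ (θ + 1)) / (θ + 1))
          ≤ (1 + (θ₂ + θ) / 2) * S * Real.log t * (t ^ (θ + 1) / (θ + 1)) := by
            apply mul_le_mul_of_nonneg_left
            · apply div_le_div_of_nonneg_right <;> linarith
            · exact mul_nonneg (mul_nonneg (by linarith) hS) hlt.le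
        _ = _ := by
            rw [Real.rpow_add_one ht0.ne', hq, add_comm θ 1]
            ring
    have h3 : ∫ s in (0:ℝ)..R, d s * x s ≤ t * (A * (t ^ θ * Real.log t)) := by
      have e1 : ∫ s in (0:ℝ)..R, d s * x s = A * Real.log ρs := by
        rw [hA]; field_simp
      rw [e1]
      have e2 : A * Real.log ρs ≤ A * (t ^ θ * Real.log t) :=
        mul_le_mul_of_nonneg_left (hw t htρ) hA0
      have e3 : 0 ≤ A * Real.log ρs := mul_nonneg hA0 hlog.le
      nlinarith
    have h4 : t⁻¹ * (∫ s in (0:ℝ)..t, d s * x s) ≤ (A + q * S) * (t ^ θ * Real.log t) := by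
      rw [inv_mul_le_iff₀ ht0]
      linarith
    linarith
  have hmain : ∀ T, R ≤ T → x T ≤ (C + A) / (1 - q) * (T ^ θ * Real.log T) := by
    intro T hT
    have hwp : ∀ t, R ≤ t → 0 < t ^ θ * Real.log t := fun t ht =>
      hlog.trans_le (hw t (hR.trans ht))
    have hne : ((fun t => x t / (t ^ θ * Real.log t)) '' Icc R T).Nonempty :=
      ⟨_, T, ⟨hT, le_rfl⟩, rfl⟩
    have hbdd : BddAbove ((fun t => x t / (t ^ θ * Real.log t)) '' Icc R T) := by
      refine ⟨C + (∫ s in (0:ℝ)..T, d s * x s) / Real.log ρs, ?_⟩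
      rintro _ ⟨t, ht, rfl⟩
      exact (div_le_iff₀ (hwp t ht.1)).2 (hcrude T t (hR.trans ht.1) ht.2)
    obtain ⟨S, hS⟩ : ∃ S, S = sSup ((fun t => x t / (t ^ θ * Real.log t)) '' Icc R T) := ⟨_, rfl⟩
    have hup : ∀ t, R ≤ t → t ≤ T → x t ≤ S * (t ^ θ * Real.log t) := by
      intro t h1 h2
      rw [← div_le_iff₀ (hwp t h1), hS]
      exact le_csSup hbdd ⟨t, ⟨h1, h2⟩, rfl⟩
    have hS0 : 0 ≤ S := by
      have := (hx_nn T (by linarith)).trans (hup T hT le_rfl)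
      exact nonneg_of_mul_nonneg_left this (hwp T hT)
    have hSle : S ≤ C + A + q * S := by
      conv_lhs => rw [hS]
      refine csSup_le hne ?_
      rintro _ ⟨t, ht, rfl⟩
      exact (div_le_iff₀ (hwp t ht.1)).2 (himp T S hS0 hup t ht.1 ht.2)
    refine (hup T hT le_rfl).trans (mul_le_mul_of_nonneg_right ?_ (hwp T hT).le)
    rw [le_div_iff₀ (by linarith)]
    linarith
  have hB : 0 ≤ (C + A) / (1 - q) := div_nonneg (by linarith) (by linarith)
  refine ⟨(C + A) + (C + A) / (1 - q), by linarith, fun t ht => ?_⟩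
  have hwt : 0 < t ^ θ * Real.log t := hlog.trans_le (hw t ht)
  rw [mul_assoc]
  rcases le_total R t with h | h
  · refine (hmain t h).trans (mul_le_mul_of_nonneg_right ?_ hwt.le)
    linarith
  · have := hcrude R t ht h
    rw [← hA] at this
    refine this.trans (mul_le_mul_of_nonneg_right ?_ hwt.le)
    linarith
end

section
/- Under the hypotheses (H1)–(H3) on the pressure P, with k(ρ) = ∫₀^ρ √(P'(y))/y dy, λ₁ = (3−γ₁)/(2(γ₁−1)), M_{λ₁} = (2λ₁ (2λ₁+1)^{−1/2} ∫_{−1}^{1} (1−z²)^{λ₁} dz)^{−1}, a₁(ρ) = M_{λ₁} k(ρ)^{−λ₁} k'(ρ)^{−1/2}, and a₂(ρ) = −(4(λ₁+1))^{−1} k(ρ)^{−λ₁−1} k'(ρ)^{−1/2} ∫₀^ρ k(s)^{λ₁} k'(s)^{−1/2} a₁''(s) ds (the integral converges), the following holds: for every ρ_max > 0 there exists a constant C(ρ_max) > 0 such that, with θ₁ = (γ₁−1)/2, for all ρ ∈ (0, ρ_max]: |a₁(ρ)| + ρ^{1−2θ₁}|a₁'(ρ)| + ρ^{2−2θ₁}|a₁''(ρ)|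 + |a₂(ρ)| + ρ|a₂'(ρ)| + ρ²|a₂''(ρ)| ≤ C(ρ_max). -/
open Set MeasureTheory Filter

/-- Symbol class: `n` Euler derivatives are all `O(x ^ m)` at `0+`. -/
def EulerSymb : ℕ → ℝ → (ℝ → ℝ) → Prop
  | 0, m, f => ContinuousOn f (Ioi 0) ∧ Asymptotics.IsBigO (nhdsWithin 0 (Ioi 0)) f (fun x => x ^ m)
  | n + 1, m, f => DifferentiableOn ℝ f (Ioi 0) ∧
      Asymptotics.IsBigO (nhdsWithin 0 (Ioi 0)) f (fun x => x ^ m) ∧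
      EulerSymb n m (fun x => x * deriv f x)

lemma EulerSymb.bigO {n : ℕ} {m : ℝ} {f : ℝ → ℝ} (h : EulerSymb n m f) :
    Asymptotics.IsBigO (nhdsWithin 0 (Ioi 0)) f (fun x => x ^ m) := by
  cases n with
  | zero => exact h.2
  | succ n => exact h.2.1

lemma EulerSymb.cont {n : ℕ} {m : ℝ} {f : ℝ → ℝ} (h : EulerSymb n m f) : ContinuousOn f (Ioi 0) := by
  cases n with
  | zero => exact h.1
  | succ n => exact h.1.continuousOn

lemma EulerSymb.of_succ {n : ℕ} : ∀ {m : ℝ} {f : ℝ → ℝ}, EulerSymb (n + 1) m f → EulerSymb n m f := by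
  induction n with
  | zero => intro m f h; exact ⟨h.1.continuousOn, h.2.1⟩
  | succ n ih => intro m f h; exact ⟨h.1, h.2.1, ih h.2.2⟩

lemma EulerSymb.hasDerivAt {n : ℕ} {m : ℝ} {f : ℝ → ℝ} (h : EulerSymb (n + 1) m f) {x : ℝ} (hx : 0 < x) :
    HasDerivAt f (deriv f x) x :=
  (h.1.differentiableAt (Ioi_mem_nhds hx)).hasDerivAt

lemma EulerSymb.congr {n : ℕ} : ∀ {m : ℝ} {f g : ℝ → ℝ}, EulerSymb n m f → (∀ x, 0 < x → g x = f x) →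
    EulerSymb n m g := by
  induction n with
  | zero =>
    intro m f g h hfg
    refine ⟨h.1.congr hfg, h.2.congr' ?_ EventuallyEq.rfl⟩
    filter_upwards [self_mem_nhdsWithin] with x hx using (hfg x hx).symm
  | succ n ih =>
    intro m f g h hfg
    refine ⟨h.1.congr hfg, h.2.1.congr' ?_ EventuallyEq.rfl, ih h.2.2 ?_⟩
    · filter_upwards [self_mem_nhdsWithin] with x hx using (hfg x hx).symm
    · intro x hx
      have : g =ᶠ[nhds x] f := by
        filter_upwards [Ioi_mem_nhds hx] with y hy using hfg y hy
      show x * deriv g x = x * deriv f x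
      rw [this.deriv_eq]

lemma EulerSymb.mk_succ {n : ℕ} {m : ℝ} {f f' : ℝ → ℝ} (hd : ∀ x, 0 < x → HasDerivAt f (f' x) x)
    (hO : Asymptotics.IsBigO (nhdsWithin 0 (Ioi 0)) f (fun x => x ^ m))
    (h : EulerSymb n m (fun x => x * f' x)) : EulerSymb (n + 1) m f := by
  refine ⟨fun x hx => (hd x hx).differentiableAt.differentiableWithinAt, hO, h.congr ?_⟩
  intro x hx
  rw [(hd x hx).deriv]

lemma EulerSymb.add {n : ℕ} : ∀ {m : ℝ} {f g : ℝ → ℝ}, EulerSymb n m f → EulerSymb n m g →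
    EulerSymb n m (fun x => f x + g x) := by
  induction n with
  | zero => intro m f g hf hg; exact ⟨hf.1.add hg.1, hf.2.add hg.2⟩
  | succ n ih =>
    intro m f g hf hg
    refine EulerSymb.mk_succ (f' := fun x => deriv f x + deriv g x)
      (fun x hx => (hf.hasDerivAt hx).add (hg.hasDerivAt hx)) (hf.2.1.add hg.2.1) ?_
    exact (ih hf.2.2 hg.2.2).congr (fun x _ => by ring)

lemma EulerSymb.mul {n : ℕ} : ∀ {m p : ℝ} {f g : ℝ → ℝ}, EulerSymb n m f → EulerSymb n p g →
    EulerSymb n (m + p) (fun x => f x * g x) := by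
  have key : ∀ {m p : ℝ} {f g : ℝ → ℝ},
    Asymptotics.IsBigO (nhdsWithin 0 (Ioi 0)) f (fun x => x ^ m) →
    Asymptotics.IsBigO (nhdsWithin 0 (Ioi 0)) g (fun x => x ^ p) →
    Asymptotics.IsBigO (nhdsWithin 0 (Ioi 0)) (fun x => f x * g x) (fun x : ℝ => x ^ (m + p)) := by
    intro m p f g hf hg
    refine (hf.mul hg).congr' EventuallyEq.rfl ?_
    filter_upwards [self_mem_nhdsWithin] with x hx using (Real.rpow_add hx m p).symm
  induction n with
  | zero => intro m p f g hf hg; exact ⟨hf.1.mul hg.1, key hf.2 hg.2⟩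
  | succ n ih =>
    intro m p f g hf hg
    refine EulerSymb.mk_succ (f' := fun x => deriv f x * g x + f x * deriv g x)
      (fun x hx => (hf.hasDerivAt hx).mul (hg.hasDerivAt hx)) (key hf.2.1 hg.2.1) ?_
    exact ((ih hf.2.2 hg.of_succ).add (ih hf.of_succ hg.2.2)).congr (fun x _ => by ring)

lemma EulerSymb.rpow_mul {n : ℕ} : ∀ (c p : ℝ), EulerSymb n p (fun x => c * x ^ p) := by
  induction n with
  | zero =>
    intro c p
    refine ⟨fun x hx => ?_, Asymptotics.isBigO_const_mul_self _ _ _⟩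
    exact ((Real.continuousAt_rpow_const x p (Or.inl (ne_of_gt hx))).const_mul c).continuousWithinAt
  | succ n ih =>
    intro c p
    refine EulerSymb.mk_succ (f' := fun x => c * (p * x ^ (p - 1)))
      (fun x hx => (Real.hasDerivAt_rpow_const (Or.inl hx.ne')).const_mul c)
      (Asymptotics.isBigO_const_mul_self _ _ _) ?_
    refine (ih (c * p) p).congr (fun x hx => ?_)
    have : x ^ p = x * x ^ (p - 1) := by
      rw [Real.rpow_sub_one hx.ne']; field_simp
    rw [this]; ring

lemma EulerSymb.const {n : ℕ} (c : ℝ) : EulerSymb n 0 (fun _ => c) :=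
  (EulerSymb.rpow_mul c 0).congr (fun x _ => by simp)

lemma EulerSymb.const_mul {n : ℕ} {m : ℝ} {f : ℝ → ℝ} (c : ℝ) (h : EulerSymb n m f) :
    EulerSymb n m (fun x => c * f x) := by
  have := (EulerSymb.const (n := n) c).mul h
  rwa [zero_add] at this

lemma EulerSymb.mono {n : ℕ} : ∀ {m p : ℝ} {f : ℝ → ℝ}, p ≤ m → EulerSymb n m f → EulerSymb n p f := by
  have key : ∀ {m p : ℝ}, p ≤ m → Asymptotics.IsBigO (nhdsWithin 0 (Ioi 0))
      (fun x : ℝ => x ^ m) (fun x : ℝ => x ^ p) := by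
    intro m p h
    refine Asymptotics.IsBigO.of_bound 1 ?_
    filter_upwards [Ioo_mem_nhdsGT (zero_lt_one (α := ℝ))] with x hx
    rw [one_mul, Real.norm_of_nonneg (Real.rpow_nonneg hx.1.le _),
      Real.norm_of_nonneg (Real.rpow_nonneg hx.1.le _)]
    exact Real.rpow_le_rpow_of_exponent_ge hx.1 hx.2.le h
  induction n with
  | zero => intro m p f h hf; exact ⟨hf.1, hf.2.trans (key h)⟩
  | succ n ih => intro m p f h hf; exact ⟨hf.1, hf.2.1.trans (key h), ih h hf.2.2⟩

lemma EulerSymb.of_le {n : ℕ} {m : ℝ} {f : ℝ → ℝ} (k : ℕ) (h : EulerSymb (n + k) m f) : EulerSymb n m f := by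
  induction k with
  | zero => exact h
  | succ k ih => exact ih h.of_succ

lemma EulerSymb.deriv {n : ℕ} {m : ℝ} {f : ℝ → ℝ} (h : EulerSymb (n + 1) m f) : EulerSymb n (m - 1) (deriv f) := by
  have := (EulerSymb.rpow_mul (n := n) 1 (-1)).mul h.2.2
  rw [show -1 + m = m - 1 by ring] at this
  refine this.congr (fun x hx => ?_)
  rw [Real.rpow_neg_one]; field_simp

lemma EulerSymb.of_contDiffOn {n : ℕ} : ∀ {m : ℝ} {f : ℝ → ℝ}, ContDiffOn ℝ n f (Ioi 0) →
    (∀ j : ℕ, j ≤ n → Asymptotics.IsBigO (nhdsWithin 0 (Ioi 0)) (iteratedDeriv j f)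
      (fun x => x ^ (m - j))) → EulerSymb n m f := by
  induction n with
  | zero =>
    intro m f h hO
    refine ⟨h.continuousOn, ?_⟩
    simpa using hO 0 le_rfl
  | succ n ih =>
    intro m f h hO
    have hd : DifferentiableOn ℝ f (Ioi 0) := h.differentiableOn (by simp)
    refine ⟨hd, by simpa using hO 0 (Nat.zero_le _), ?_⟩
    have h1 : EulerSymb n (m - 1) (_root_.deriv f) := by
      apply ih
      · exact ((contDiffOn_succ_iff_deriv_of_isOpen isOpen_Ioi).1 (by exact_mod_cast h)).2.2
      · intro j hj
        have := hO (j + 1) (by omega)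
        rw [iteratedDeriv_succ'] at this
        rw [show m - 1 - (j : ℝ) = m - ((j + 1 : ℕ) : ℝ) by push_cast; ring]
        exact this
    have := (EulerSymb.rpow_mul (n := n) 1 1).mul h1
    rw [show 1 + (m - 1) = m by ring] at this
    exact this.congr (fun x hx => by simp)

/-- Powers of `1 + g`. -/
lemma EulerSymb.one_add_rpow {n : ℕ} {m : ℝ} (hm : 0 < m) {g : ℝ → ℝ} (hpos : ∀ x, 0 < x → 0 < 1 + g x)
    (hg : EulerSymb n m g) : ∀ p : ℝ, EulerSymb n m (fun x => (1 + g x) ^ p - 1) := by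
  have hO : Asymptotics.IsBigO (nhdsWithin 0 (Ioi 0)) g (fun x => x ^ m) := hg.bigO
  have key : ∀ p : ℝ, Asymptotics.IsBigO (nhdsWithin 0 (Ioi 0))
      (fun x => (1 + g x) ^ p - 1) (fun x => x ^ m) := by
    intro p
    have ht : Tendsto (fun x : ℝ => x ^ m) (nhdsWithin 0 (Ioi 0)) (nhds 0) := by
      have := (Real.continuousAt_rpow_const 0 m (Or.inr hm.le)).tendsto
      rw [Real.zero_rpow hm.ne'] at this
      exact this.mono_left nhdsWithin_le_nhds
    have hg0 : Tendsto g (nhdsWithin 0 (Ioi 0)) (nhds 0) := hO.trans_tendsto ht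
    have hg1 : Tendsto (fun x => 1 + g x) (nhdsWithin 0 (Ioi 0)) (nhds 1) := by
      simpa using hg0.const_add 1
    have hd : HasDerivAt (fun y : ℝ => y ^ p) (p * 1 ^ (p - 1)) 1 :=
      Real.hasDerivAt_rpow_const (Or.inl one_ne_zero)
    have := hd.differentiableAt.isBigO_sub.comp_tendsto hg1
    refine Asymptotics.IsBigO.trans ?_ hO
    simpa [Function.comp_def] using this
  induction n with
  | zero =>
    intro p
    refine ⟨?_, key p⟩
    exact ((continuousOn_const.add hg.1).rpow_const
      (fun x hx => Or.inl (hpos x hx).ne')).sub continuousOn_const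
  | succ n ih =>
    intro p
    refine EulerSymb.mk_succ (f' := fun x => _root_.deriv g x * p * (1 + g x) ^ (p - 1)) ?_ (key p) ?_
    · intro x hx
      exact (((hg.hasDerivAt hx).const_add 1).rpow_const (Or.inl (hpos x hx).ne')).sub_const 1
    · have h1 : EulerSymb n 0 (fun x => p * (((1 + g x) ^ (p - 1) - 1) + 1)) :=
        (((ih hg.of_succ (p - 1)).mono hm.le).add (EulerSymb.const 1)).const_mul p
      have := hg.2.2.mul h1
      rw [add_zero] at this
      exact this.congr (fun x _ => by ring)

lemma EulerSymb.bound {n : ℕ} {m : ℝ} {f : ℝ → ℝ} (h : EulerSymb n m f) (R : ℝ) :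
    ∃ C : ℝ, 0 < C ∧ ∀ x ∈ Ioc (0:ℝ) R, |f x| ≤ C * x ^ m := by
  obtain ⟨c, hc⟩ := h.bigO.bound
  rw [eventually_iff, mem_nhdsGT_iff_exists_Ioo_subset] at hc
  obtain ⟨δ, hδ, hsub⟩ := hc
  have hδ : 0 < δ := hδ
  have hcont : ContinuousOn (fun x => |f x| * x ^ (-m)) (Icc δ R) := by
    have h1 : ContinuousOn (fun x : ℝ => x ^ (-m)) (Icc δ R) :=
      fun x hx => (Real.continuousAt_rpow_const x (-m)
        (Or.inl (hδ.trans_le hx.1).ne')).continuousWithinAt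
    exact ((h.cont.mono (fun x hx => hδ.trans_le hx.1)).abs).mul h1
  obtain ⟨B, hB⟩ := isCompact_Icc.exists_bound_of_continuousOn hcont
  refine ⟨max 1 (max c B), by positivity, fun x hx => ?_⟩
  have hxm : 0 < x ^ m := Real.rpow_pos_of_pos hx.1 m
  rcases lt_or_ge x δ with hlt | hge
  · have := hsub ⟨hx.1, hlt⟩
    simp only [mem_setOf_eq, Real.norm_eq_abs, abs_of_pos hxm] at this
    refine this.trans ?_
    gcongr
    exact (le_max_left _ _).trans (le_max_right _ _)
  · have := hB x ⟨hge, hx.2⟩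
    rw [Real.norm_eq_abs, abs_mul, abs_abs, Real.rpow_neg hx.1.le, abs_inv, abs_of_pos hxm,
      ← div_eq_mul_inv, div_le_iff₀ hxm] at this
    refine this.trans ?_
    gcongr
    exact (le_max_right _ _).trans (le_max_right _ _)

lemma EulerSymb.intervalIntegrable {n : ℕ} {p : ℝ} (hp : 0 < p) {w : ℝ → ℝ} (h : EulerSymb n (p - 1) w)
    {R : ℝ} (hR : 0 < R) : IntervalIntegrable w volume 0 R := by
  obtain ⟨C, hC, hb⟩ := h.bound R
  have h1 : IntervalIntegrable (fun x : ℝ => C * x ^ (p - 1)) volume 0 R :=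
    (intervalIntegral.intervalIntegrable_rpow' (by linarith)).const_mul C
  refine h1.mono_fun' ?_ ?_
  · rw [uIoc_of_le hR.le]
    exact (h.cont.mono (fun x hx => hx.1)).aestronglyMeasurable measurableSet_Ioc
  · rw [uIoc_of_le hR.le]
    filter_upwards [ae_restrict_mem measurableSet_Ioc] with x hx using hb x hx

lemma EulerSymb.integral_hasDerivAt {n : ℕ} {p : ℝ} (hp : 0 < p) {w : ℝ → ℝ} (h : EulerSymb n (p - 1) w)
    {x : ℝ} (hx : 0 < x) : HasDerivAt (fun r => ∫ s in (0:ℝ)..r, w s) (w x) x := by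
  refine intervalIntegral.integral_hasDerivAt_right (h.intervalIntegrable hp hx) ?_ ?_
  · exact h.cont.stronglyMeasurableAtFilter isOpen_Ioi x hx
  · exact h.cont.continuousAt (Ioi_mem_nhds hx)

lemma EulerSymb.integral_bigO {n : ℕ} {p : ℝ} (hp : 0 < p) {w : ℝ → ℝ} (h : EulerSymb n (p - 1) w) :
    Asymptotics.IsBigO (nhdsWithin 0 (Ioi 0)) (fun r => ∫ s in (0:ℝ)..r, w s)
      (fun x => x ^ p) := by
  obtain ⟨C, hC, hb⟩ := h.bound 1
  refine Asymptotics.IsBigO.of_bound (C / p) ?_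
  filter_upwards [Ioo_mem_nhdsGT (zero_lt_one (α := ℝ))] with x hx
  have h1 : IntervalIntegrable (fun x : ℝ => C * x ^ (p - 1)) volume 0 x :=
    (intervalIntegral.intervalIntegrable_rpow' (by linarith)).const_mul C
  have h2 : ‖∫ s in (0:ℝ)..x, w s‖ ≤ ∫ s in (0:ℝ)..x, C * s ^ (p - 1) := by
    refine intervalIntegral.norm_integral_le_of_norm_le hx.1.le ?_ h1
    exact ae_of_all _ (fun s hs => hb s ⟨hs.1, hs.2.trans hx.2.le⟩)
  refine h2.trans (le_of_eq ?_)
  rw [intervalIntegral.integral_const_mul, integral_rpow (Or.inl (by linarith)),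
    Real.norm_of_nonneg (Real.rpow_nonneg hx.1.le _), sub_add_cancel, Real.zero_rpow hp.ne']
  ring

lemma EulerSymb.integral {n : ℕ} {p : ℝ} (hp : 0 < p) {w : ℝ → ℝ} (h : EulerSymb n (p - 1) w) :
    EulerSymb (n + 1) p (fun r => ∫ s in (0:ℝ)..r, w s) := by
  refine EulerSymb.mk_succ (f' := w) (fun x hx => h.integral_hasDerivAt hp hx) (h.integral_bigO hp) ?_
  have := (EulerSymb.rpow_mul (n := n) 1 1).mul h
  rw [show 1 + (p - 1) = p by ring] at this
  exact this.congr (fun x hx => by simp)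

/-- The relative error of the primitive. -/
lemma EulerSymb.average {n : ℕ} {ν t c : ℝ} (hν : 0 < ν) (ht : 0 < t) (hc : 0 < c) {h : ℝ → ℝ}
    (hh : EulerSymb n ν h) {w : ℝ → ℝ} (hw : ∀ x, 0 < x → w x = c * t * x ^ (t - 1) * (1 + h x)) :
    EulerSymb n (t - 1) w ∧ EulerSymb n ν (fun r => (∫ s in (0:ℝ)..r, w s) / (c * r ^ t) - 1) := by
  have hwS : EulerSymb n (t - 1) w := by
    have := (EulerSymb.rpow_mul (n := n) (c * t) (t - 1)).mul ((EulerSymb.const 1).add (hh.mono hν.le))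
    rw [add_zero] at this
    exact this.congr hw
  refine ⟨hwS, ?_⟩
  have hv : EulerSymb n (t + ν - 1) (fun x => c * t * x ^ (t - 1) * h x) := by
    have := (EulerSymb.rpow_mul (n := n) (c * t) (t - 1)).mul hh
    rwa [show t - 1 + ν = t + ν - 1 by ring] at this
  have hI : ∀ r, 0 < r → (∫ s in (0:ℝ)..r, w s) / (c * r ^ t) - 1
      = c⁻¹ * r ^ (-t) * ∫ s in (0:ℝ)..r, c * t * s ^ (t - 1) * h s := by
    intro r hr
    have e1 : ∫ s in (0:ℝ)..r, w s = ∫ s in (0:ℝ)..r,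
        (c * t * s ^ (t - 1) + c * t * s ^ (t - 1) * h s) := by
      refine intervalIntegral.integral_congr_ae (ae_of_all _ (fun s hs => ?_))
      rw [uIoc_of_le hr.le] at hs
      rw [hw s hs.1]; ring
    rw [e1, intervalIntegral.integral_add
      ((EulerSymb.rpow_mul (n := n) (c * t) (t - 1)).intervalIntegrable ht hr)
      (hv.intervalIntegrable (by positivity) hr), intervalIntegral.integral_const_mul (c * t) (fun s : ℝ => s ^ (t - 1)),
      integral_rpow (Or.inl (by linarith)), sub_add_cancel, Real.zero_rpow ht.ne',
      Real.rpow_neg hr.le]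
    have := (Real.rpow_pos_of_pos hr t).ne'
    field_simp
    ring
  have := (EulerSymb.rpow_mul (n := n + 1) c⁻¹ (-t)).mul (hv.integral (by positivity))
  rw [show -t + (t + ν) = ν by ring] at this
  exact this.of_succ.congr hI

theorem entropy_kernel_coefficients_bounded_density
    (P Q₁ Q₂ : ℝ → ℝ) (ρstar ρss γ₁ γ₂ κ₁ κ₂ Cs Css εe : ℝ)
    (hPC1 : ContDiffOn ℝ 1 P (Ici 0))
    (hPC4 : ContDiffOn ℝ 4 P (Ioi 0))
    (hH1 : ∀ ρ : ℝ, 0 < ρ → 0 < deriv P ρ ∧ 0 < 2 * deriv P ρ + ρ * deriv (deriv P) ρ)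
    (hρstar : 0 < ρstar) (hγ₁ : 1 < γ₁) (hγ₁3 : γ₁ < 3) (hκ₁ : 0 < κ₁) (hCs : 0 < Cs)
    (hQ₁C4 : ContDiffOn ℝ 4 Q₁ (Ioi 0))
    (hPsmall : ∀ ρ ∈ Ico (0:ℝ) ρstar, P ρ = κ₁ * ρ ^ γ₁ * (1 + Q₁ ρ))
    (hQ₁bd : ∀ ρ ∈ Ioo (0:ℝ) ρstar, ∀ j : ℕ, j ≤ 4 →
      |iteratedDeriv j Q₁ ρ| ≤ Cs * ρ ^ (γ₁ - 1 - (j : ℝ)))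
    (hρss : ρstar < ρss) (hγ₂ : 6/5 < γ₂) (hγ₂1 : γ₂ ≤ γ₁) (hκ₂ : 0 < κ₂)
    (hεe : 0 < εe) (hCss : 0 < Css)
    (hQ₂C4 : ContDiffOn ℝ 4 Q₂ (Ioi 0))
    (hPlarge : ∀ ρ : ℝ, ρss ≤ ρ → P ρ = κ₂ * ρ ^ γ₂ * (1 + Q₂ ρ))
    (hQ₂bd : ∀ ρ : ℝ, ρss ≤ ρ → ∀ j : ℕ, j ≤ 4 →
      |iteratedDeriv j Q₂ ρ| ≤ Css * ρ ^ (-εe - (j : ℝ)))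
    (lam₁ Mlam θ₁ θ₂ : ℝ)
    (hlam₁ : lam₁ = (3 - γ₁) / (2 * (γ₁ - 1)))
    (hMlam : Mlam = (2 * lam₁ / Real.sqrt (2 * lam₁ + 1) * ∫ z in (-1:ℝ)..1, (1 - z ^ 2) ^ lam₁)⁻¹)
    (hθ₁ : θ₁ = (γ₁ - 1) / 2) (hθ₂ : θ₂ = (γ₂ - 1) / 2)
    (k a₁ a₂ : ℝ → ℝ)
    (hk : ∀ ρ : ℝ, k ρ = ∫ y in (0:ℝ)..ρ, Real.sqrt (deriv P y) / y)
    (ha₁ : ∀ ρ : ℝ, a₁ ρ = Mlam * k ρ ^ (-lam₁) * deriv k ρ ^ (-(1:ℝ)/2))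
    (ha₂ : ∀ ρ : ℝ, a₂ ρ = -(4 * (lam₁ + 1))⁻¹ * k ρ ^ (-lam₁ - 1) * deriv k ρ ^ (-(1:ℝ)/2) *
      ∫ s in (0:ℝ)..ρ, k s ^ lam₁ * deriv k s ^ (-(1:ℝ)/2) * deriv (deriv a₁) s) :
    (∀ ρ : ℝ, 0 < ρ → IntervalIntegrable
      (fun s => k s ^ lam₁ * deriv k s ^ (-(1:ℝ)/2) * deriv (deriv a₁) s) volume 0 ρ) ∧
    ∀ ρmax : ℝ, 0 < ρmax → ∃ C : ℝ, 0 < C ∧ ∀ ρ ∈ Ioc (0:ℝ) ρmax,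
      |a₁ ρ| + ρ ^ (1 - 2 * θ₁) * |deriv a₁ ρ| + ρ ^ (2 - 2 * θ₁) * |deriv (deriv a₁) ρ|
        + |a₂ ρ| + ρ * |deriv a₂ ρ| + ρ ^ 2 * |deriv (deriv a₂) ρ| ≤ C := by
  have hν : 0 < γ₁ - 1 := by linarith
  have hθpos : 0 < θ₁ := by rw [hθ₁]; linarith
  have hν2 : γ₁ - 1 = 2 * θ₁ := by rw [hθ₁]; ring
  -- the relative error of `P`
  have hPne : ∀ x : ℝ, 0 < x → κ₁ * x ^ γ₁ ≠ 0 := fun x hx =>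
    (mul_pos hκ₁ (Real.rpow_pos_of_pos hx _)).ne'
  have hPd : ∀ x : ℝ, 0 < x → HasDerivAt P (deriv P x) x := fun x hx =>
    ((hPC4.differentiableOn (by norm_num)).differentiableAt (Ioi_mem_nhds hx)).hasDerivAt
  obtain ⟨q, hq⟩ : ∃ q : ℝ → ℝ, q = fun x => P x / (κ₁ * x ^ γ₁) - 1 := ⟨_, rfl⟩
  have hqS : EulerSymb 4 (γ₁ - 1) q := by
    apply EulerSymb.of_contDiffOn
    · rw [hq]
      refine (ContDiffOn.div (by exact_mod_cast hPC4) ?_ (fun x hx => hPne x hx)).sub contDiffOn_const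
      refine contDiffOn_const.mul ?_
      intro x hx
      exact (Real.contDiffAt_rpow_const_of_ne (ne_of_gt hx)).contDiffWithinAt
    · intro j hj
      refine Asymptotics.IsBigO.of_bound Cs ?_
      filter_upwards [Ioo_mem_nhdsGT hρstar] with x hx
      have he : q =ᶠ[nhds x] Q₁ := by
        filter_upwards [Ioo_mem_nhds hx.1 hx.2] with y hy
        rw [hq]
        simp only
        rw [hPsmall y ⟨hy.1.le, hy.2⟩, mul_div_cancel_left₀ _ (hPne y hy.1)]
        ring
      rw [he.iteratedDeriv_eq, Real.norm_of_nonneg (Real.rpow_nonneg hx.1.le _)]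
      exact hQ₁bd x hx j hj
  -- the relative error of `P prime`
  obtain ⟨r, hr⟩ : ∃ r : ℝ → ℝ, r = fun x => q x + γ₁⁻¹ * (x * deriv q x) := ⟨_, rfl⟩
  have hrS : EulerSymb 3 (γ₁ - 1) r := by
    rw [hr]; exact hqS.of_succ.add (hqS.2.2.const_mul _)
  have hP' : ∀ x, 0 < x → deriv P x = κ₁ * γ₁ * x ^ (γ₁ - 1) * (1 + r x) := by
    intro x hx
    have he : P =ᶠ[nhds x] fun y => κ₁ * y ^ γ₁ * (1 + q y) := by
      filter_upwards [Ioi_mem_nhds hx] with y hy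
      have := hPne y hy
      rw [hq]
      simp only
      rw [add_sub_cancel, mul_div_cancel₀ _ this]
    have hd := ((Real.hasDerivAt_rpow_const (p := γ₁) (Or.inl hx.ne')).const_mul κ₁).mul
      ((hqS.hasDerivAt hx).const_add 1)
    rw [he.deriv_eq]
    refine Eq.trans (HasDerivAt.deriv hd) ?_
    rw [hr]
    have : x ^ γ₁ = x * x ^ (γ₁ - 1) := by
      rw [Real.rpow_sub_one hx.ne']; field_simp
    rw [this]
    have : γ₁ ≠ 0 := by linarith
    field_simp
    ring
  have hrpos : ∀ x, 0 < x → 0 < 1 + r x := by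
    intro x hx
    have h1 := (hH1 x hx).1
    rw [hP' x hx] at h1
    have h2 : 0 < κ₁ * γ₁ * x ^ (γ₁ - 1) := by
      have := Real.rpow_pos_of_pos hx (γ₁ - 1)
      positivity
    exact (pos_iff_pos_of_mul_pos h1).1 h2
  -- `k prime`
  obtain ⟨h, hh⟩ : ∃ h : ℝ → ℝ, h = fun x => (1 + r x) ^ (1 / 2 : ℝ) - 1 := ⟨_, rfl⟩
  have hhS : EulerSymb 3 (γ₁ - 1) h := by
    rw [hh]; exact EulerSymb.one_add_rpow hν hrpos hrS _
  have hhpos : ∀ x, 0 < x → 0 < 1 + h x := by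
    intro x hx
    rw [hh]
    simp only [add_sub_cancel]
    exact Real.rpow_pos_of_pos (hrpos x hx) _
  obtain ⟨c, hc⟩ : ∃ c : ℝ, c = Real.sqrt (κ₁ * γ₁) / θ₁ := ⟨_, rfl⟩
  have hcpos : 0 < c := by
    rw [hc]; have : 0 < κ₁ * γ₁ := by positivity
    have := Real.sqrt_pos.2 this
    positivity
  have hw : ∀ x, 0 < x → Real.sqrt (deriv P x) / x = c * θ₁ * x ^ (θ₁ - 1) * (1 + h x) := by
    intro x hx
    have e1 : c * θ₁ = Real.sqrt (κ₁ * γ₁) := by rw [hc]; field_simp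
    have e2 : Real.sqrt (x ^ (γ₁ - 1)) = x ^ θ₁ := by
      rw [Real.sqrt_eq_rpow, ← Real.rpow_mul hx.le]
      congr 1; rw [hθ₁]; ring
    rw [hP' x hx, e1, hh, Real.sqrt_mul (by have := Real.rpow_nonneg hx.le (γ₁ - 1); positivity),
      Real.sqrt_mul (by positivity), e2, Real.rpow_sub_one hx.ne', Real.sqrt_eq_rpow (1 + r x)]
    ring
  obtain ⟨hwS, hHS'⟩ := EulerSymb.average hν hθpos hcpos hhS hw
  have hk' : ∀ x, 0 < x → deriv k x = c * θ₁ * x ^ (θ₁ - 1) * (1 + h x) := by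
    intro x hx
    have : k = fun r => ∫ y in (0:ℝ)..r, Real.sqrt (deriv P y) / y := funext hk
    rw [this, (hwS.integral_hasDerivAt hθpos hx).deriv, hw x hx]
  obtain ⟨H, hH⟩ : ∃ H : ℝ → ℝ, H = fun x => k x / (c * x ^ θ₁) - 1 := ⟨_, rfl⟩
  have hHS : EulerSymb 3 (γ₁ - 1) H := hHS'.congr (fun x _ => by rw [hH]; simp only [hk])
  have hkH : ∀ x, 0 < x → k x = c * x ^ θ₁ * (1 + H x) := by
    intro x hx
    have := (Real.rpow_pos_of_pos hx θ₁).ne'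
    rw [hH]
    field_simp
    ring
  have hkpos : ∀ x, 0 < x → 0 < k x := by
    intro x hx
    rw [hk]
    refine intervalIntegral.intervalIntegral_pos_of_pos_on (hwS.intervalIntegrable hθpos hx) ?_ hx
    intro y hy
    exact div_pos (Real.sqrt_pos.2 (hH1 y hy.1).1) hy.1
  have hHpos : ∀ x, 0 < x → 0 < 1 + H x := by
    intro x hx
    have h1 := hkpos x hx
    rw [hkH x hx] at h1
    exact (pos_iff_pos_of_mul_pos h1).1 (mul_pos hcpos (Real.rpow_pos_of_pos hx _))
  -- powers of `k`, `k prime`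
  have hkpow : ∀ p x : ℝ, 0 < x → k x ^ p = c ^ p * x ^ (θ₁ * p) * (1 + H x) ^ p := by
    intro p x hx
    have := Real.rpow_nonneg hx.le θ₁
    rw [hkH x hx, Real.mul_rpow (by positivity) (hHpos x hx).le, Real.mul_rpow hcpos.le this,
      ← Real.rpow_mul hx.le]
  have hk'pow : ∀ p x : ℝ, 0 < x →
      deriv k x ^ p = (c * θ₁) ^ p * x ^ ((θ₁ - 1) * p) * (1 + h x) ^ p := by
    intro p x hx
    have := Real.rpow_nonneg hx.le (θ₁ - 1)
    rw [hk' x hx, Real.mul_rpow (by positivity) (hhpos x hx).le,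
      Real.mul_rpow (by positivity) this, ← Real.rpow_mul hx.le]
  have hkpowS : ∀ p : ℝ, EulerSymb 3 (θ₁ * p) (fun x => k x ^ p) := by
    intro p
    have h1 := (EulerSymb.rpow_mul (n := 3) (c ^ p) (θ₁ * p)).mul
      (((EulerSymb.one_add_rpow hν hHpos hHS p).mono hν.le).add (EulerSymb.const 1))
    rw [add_zero] at h1
    exact h1.congr (fun x hx => by rw [hkpow p x hx]; ring)
  have hk'powS : ∀ p : ℝ, EulerSymb 3 ((θ₁ - 1) * p) (fun x => deriv k x ^ p) := by
    intro p
    have h1 := (EulerSymb.rpow_mul (n := 3) ((c * θ₁) ^ p) ((θ₁ - 1) * p)).mul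
      (((EulerSymb.one_add_rpow hν hhpos hhS p).mono hν.le).add (EulerSymb.const 1))
    rw [add_zero] at h1
    exact h1.congr (fun x hx => by rw [hk'pow p x hx]; ring)
  have hlamθ : θ₁ * lam₁ = (1 - θ₁) / 2 := by
    rw [hlam₁, hθ₁]; field_simp; ring
  have ha₁S : EulerSymb 3 0 a₁ := by
    have h1 := ((hkpowS (-lam₁)).mul (hk'powS (-(1:ℝ)/2))).const_mul Mlam
    rw [show θ₁ * -lam₁ + (θ₁ - 1) * (-(1:ℝ)/2) = 0 by rw [mul_neg, hlamθ]; ring] at h1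
    exact h1.congr (fun x _ => by rw [ha₁]; ring)
  obtain ⟨A, hA⟩ : ∃ A : ℝ, A = Mlam * c ^ (-lam₁) * (c * θ₁) ^ (-(1:ℝ)/2) := ⟨_, rfl⟩
  have hgS : EulerSymb 3 (γ₁ - 1) (fun x => a₁ x - A) := by
    have u := EulerSymb.one_add_rpow hν hHpos hHS (-lam₁)
    have v := EulerSymb.one_add_rpow hν hhpos hhS (-(1:ℝ)/2)
    have h1 := (u.mul ((v.mono hν.le).add (EulerSymb.const 1)))
    rw [add_zero] at h1
    refine ((h1.add v).const_mul A).congr (fun x hx => ?_)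
    have e : x ^ (θ₁ * -lam₁) * x ^ ((θ₁ - 1) * (-(1:ℝ)/2)) = 1 := by
      rw [← Real.rpow_add hx,
        show θ₁ * -lam₁ + (θ₁ - 1) * (-(1:ℝ)/2) = 0 by rw [mul_neg, hlamθ]; ring, Real.rpow_zero]
    rw [ha₁, hkpow _ x hx, hk'pow _ x hx, hA]
    linear_combination (Mlam * c ^ (-lam₁) * (c * θ₁) ^ (-(1:ℝ)/2) * (1 + H x) ^ (-lam₁) *
      (1 + h x) ^ (-(1:ℝ)/2)) * e
  have ha₁' : EulerSymb 2 (γ₁ - 1 - 1) (deriv a₁) :=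
    hgS.deriv.congr (fun x _ => by simp)
  have ha₁'' : EulerSymb 1 (γ₁ - 1 - 1 - 1) (deriv (deriv a₁)) := ha₁'.deriv
  have hwS2 : EulerSymb 1 (θ₁ - 1)
      (fun s => k s ^ lam₁ * deriv k s ^ (-(1:ℝ)/2) * deriv (deriv a₁) s) := by
    have h1 := (((hkpowS lam₁).mul (hk'powS (-(1:ℝ)/2))).of_le (n := 1) 2).mul ha₁''
    rwa [show θ₁ * lam₁ + (θ₁ - 1) * (-(1:ℝ)/2) + (γ₁ - 1 - 1 - 1) = θ₁ - 1 by
      rw [hlamθ, hν2]; ring] at h1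
  have ha₂S : EulerSymb 2 0 a₂ := by
    have h1 := ((((hkpowS (-lam₁ - 1)).mul (hk'powS (-(1:ℝ)/2))).of_succ).mul
      (hwS2.integral hθpos)).const_mul (-(4 * (lam₁ + 1))⁻¹)
    rw [show θ₁ * (-lam₁ - 1) + (θ₁ - 1) * (-(1:ℝ)/2) + θ₁ = 0 by
      linear_combination -hlamθ] at h1
    exact h1.congr (fun x _ => by rw [ha₂]; ring)
  have ha₂' : EulerSymb 1 (0 - 1) (deriv a₂) := ha₂S.deriv
  have ha₂'' : EulerSymb 0 (0 - 1 - 1) (deriv (deriv a₂)) := ha₂'.deriv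
  refine ⟨fun ρ hρ => hwS2.intervalIntegrable hθpos hρ, fun R hR => ?_⟩
  obtain ⟨C1, h1, b1⟩ := ha₁S.bound R
  obtain ⟨C2, h2, b2⟩ := ha₁'.bound R
  obtain ⟨C3, h3, b3⟩ := ha₁''.bound R
  obtain ⟨C4, h4, b4⟩ := ha₂S.bound R
  obtain ⟨C5, h5, b5⟩ := ha₂'.bound R
  obtain ⟨C6, h6, b6⟩ := ha₂''.bound R
  refine ⟨C1 + C2 + C3 + C4 + C5 + C6, by positivity, fun ρ hρ => ?_⟩
  have key : ∀ (e m C y : ℝ), e + m = 0 → y ≤ C * ρ ^ m → ρ ^ e * y ≤ C := by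
    intro e m C y hem hy
    calc ρ ^ e * y ≤ ρ ^ e * (C * ρ ^ m) :=
          mul_le_mul_of_nonneg_left hy (Real.rpow_nonneg hρ.1.le _)
      _ = C * (ρ ^ e * ρ ^ m) := by ring
      _ = C := by rw [← Real.rpow_add hρ.1, hem, Real.rpow_zero, mul_one]
  have t1 := key 0 _ _ _ (by ring) (b1 ρ hρ)
  have t2 := key (1 - 2 * θ₁) _ _ _ (by rw [hν2]; ring) (b2 ρ hρ)
  have t3 := key (2 - 2 * θ₁) _ _ _ (by rw [hν2]; ring) (b3 ρ hρ)
  have t4 := key 0 _ _ _ (by ring) (b4 ρ hρ)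
  have t5 := key 1 _ _ _ (by ring) (b5 ρ hρ)
  have t6 := key 2 _ _ _ (by ring) (b6 ρ hρ)
  rw [Real.rpow_zero, one_mul] at t1 t4
  rw [Real.rpow_one] at t5
  rw [Real.rpow_two] at t6
  linarith
end
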